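/- Let (T, d, μ) be a compact Ahlfors q-regular metric measure space that supports a weak 1-Poincaré inequality, and suppose T is homeomorphic to the solid torus S¹ × 𝔻. Let 1 < p < ∞ and let p* = p/(p−1). If cap_p T is nonzero, then 1/C ≤ (cap_p T)^{1/p} · (mod_{p*} T)^{1/p*} ≤ C, where C is a constant depending only on the data of T (the Ahlfors regularity and Poincaré inequality constants). Moreover, cap_p T = 0 if and only if mod_{p*} T = ∞. -/

import Mathlib

open MeasureTheory Metric Set Filter Topology
open scoped ENNReal NNReal unitInterval

noncomputable section

namespace Duality

/-! ### Rectifiable curves, line integrals and upper gradients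

A rectifiable path is encoded by its arclength-type parametrization: a `1`-Lipschitz
map defined on a compact interval `[a, b]`.  The line integral `∫_γ ρ ds` of a
nonnegative Borel function is then the Lebesgue integral of `ρ ∘ γ` over `[a, b]`. -/

structure UPath (X : Type*) [PseudoMetricSpace X] where
  a : ℝ
  b : ℝ
  hab : a ≤ b
  toFun : ℝ → X
  lip : LipschitzOnWith 1 toFun (Set.Icc a b)

namespace UPath

variable {X : Type*} [PseudoMetricSpace X]

/-- starting point of the path -/
def start (γ : UPath X) : X := γ.toFun γ.a

/-- end point of the path -/
def finish (γ : UPath X) : X := γ.toFun γ.b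

/-- The line integral `∫_γ ρ ds`. -/
def integral (γ : UPath X) (ρ : X → ℝ≥0∞) : ℝ≥0∞ :=
  ∫⁻ t in Set.Icc γ.a γ.b, ρ (γ.toFun t)

/-- The image (trace) `|γ|` of the path. -/
def trace (γ : UPath X) : Set X := γ.toFun '' Set.Icc γ.a γ.b

/-- The length of the path. -/
def length (γ : UPath X) : ℝ≥0∞ := eVariationOn γ.toFun (Set.Icc γ.a γ.b)

/-- The path stays inside the set `W`. -/
def InSet (γ : UPath X) (W : Set X) : Prop := ∀ t ∈ Set.Icc γ.a γ.b, γ.toFun t ∈ W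

/-- The reparametrization of a rectifiable path as a `Path` (continuous map from `[0,1]`). -/
def toPath (γ : UPath X) : Path γ.start γ.finish where
  toFun := fun t => γ.toFun (γ.a + (t : ℝ) * (γ.b - γ.a))
  continuous_toFun := by
    have hmem : ∀ t : unitInterval, γ.a + (t : ℝ) * (γ.b - γ.a) ∈ Set.Icc γ.a γ.b := by
      intro t
      obtain ⟨ht0, ht1⟩ := t.2
      constructor
      · nlinarith [γ.hab]
      · nlinarith [γ.hab]
    exact γ.lip.continuousOn.comp_continuous (by continuity) hmem
  source' := by simp [start]
  target' := by simp [finish]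

end UPath

/-- `ρ` is an upper gradient of `u`. -/
def IsUpperGradient {X : Type*} [PseudoMetricSpace X] {Y : Type*} [PseudoEMetricSpace Y]
    (u : X → Y) (ρ : X → ℝ≥0∞) : Prop :=
  ∀ γ : UPath X, edist (u γ.start) (u γ.finish) ≤ γ.integral ρ

/-- The `p`-modulus of a family of (rectifiable) paths. -/
def pathMod {X : Type*} [PseudoMetricSpace X] [MeasurableSpace X]
    (μ : Measure X) (p : ℝ) (Γ : Set (UPath X)) : ℝ≥0∞ :=
  ⨅ (ρ : X → ℝ≥0∞) (_ : Measurable ρ ∧ ∀ γ ∈ Γ, 1 ≤ γ.integral ρ),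
    ∫⁻ x, ρ x ^ p ∂μ

/-- `ρ` is a `p`-weak upper gradient of `u`: the upper gradient inequality may fail
only on a path family of zero `p`-modulus. -/
def IsWeakUpperGradient {X : Type*} [PseudoMetricSpace X] [MeasurableSpace X]
    {Y : Type*} [PseudoEMetricSpace Y] (μ : Measure X) (p : ℝ)
    (u : X → Y) (ρ : X → ℝ≥0∞) : Prop :=
  pathMod μ p {γ : UPath X | ¬ edist (u γ.start) (u γ.finish) ≤ γ.integral ρ} = 0

/-- `ρ` is a `p`-weak upper gradient of `u` in the subset `U`. -/
def IsWeakUpperGradientOn {X : Type*} [PseudoMetricSpace X] [MeasurableSpace X]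
    {Y : Type*} [PseudoEMetricSpace Y] (μ : Measure X) (p : ℝ) (U : Set X)
    (u : X → Y) (ρ : X → ℝ≥0∞) : Prop :=
  pathMod (μ.restrict U) p
    {γ : UPath X | γ.InSet U ∧ ¬ edist (u γ.start) (u γ.finish) ≤ γ.integral ρ} = 0

/-- `ρ` is the minimal `p`-weak upper gradient of `u`: it is a `p`-integrable `p`-weak
upper gradient which is `μ`-a.e. dominated by every other one. -/
def IsMinimalWeakUpperGradient {X : Type*} [PseudoMetricSpace X] [MeasurableSpace X]
    {Y : Type*} [PseudoEMetricSpace Y] (μ : Measure X) (p : ℝ)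
    (u : X → Y) (ρ : X → ℝ≥0∞) : Prop :=
  Measurable ρ ∧ IsWeakUpperGradient μ p u ρ ∧ (∫⁻ x, ρ x ^ p ∂μ) < ⊤ ∧
    ∀ ρ' : X → ℝ≥0∞, Measurable ρ' → IsWeakUpperGradient μ p u ρ' →
      (∫⁻ x, ρ' x ^ p ∂μ) < ⊤ → ∀ᵐ x ∂μ, ρ x ≤ ρ' x

/-! ### Doubling measures, Poincaré inequalities, Ahlfors regularity -/

/-- `μ` is a doubling (Borel) measure with doubling constant `Cμ`:
`0 < μ(2B) ≤ Cμ · μ(B) < ∞` for every ball `B` of radius `r < diam T`. -/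
def IsDoubling {X : Type*} [MetricSpace X] [MeasurableSpace X]
    (μ : Measure X) (Cμ : ℝ≥0∞) : Prop :=
  ∀ (x : X) (r : ℝ), 0 < r → r < Metric.diam (Set.univ : Set X) →
    0 < μ (ball x (2 * r)) ∧ μ (ball x (2 * r)) ≤ Cμ * μ (ball x r) ∧
      Cμ * μ (ball x r) < ⊤

/-- `(X, d, μ)` supports a weak `1`-Poincaré inequality with constants `CP`, `lP`:
`⨍_B |u - u_B| dμ ≤ CP · diam B · ⨍_{lP·B} ρ dμ` for every locally integrable `u`
and every upper gradient `ρ` of `u`, and balls have positive finite measure. -/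
def SupportsPoincare {X : Type*} [MetricSpace X] [MeasurableSpace X]
    (μ : Measure X) (CP lP : ℝ) : Prop :=
  (∀ (x : X) (r : ℝ), 0 < r → 0 < μ (ball x r) ∧ μ (ball x r) < ⊤) ∧
  ∀ (u : X → ℝ) (ρ : X → ℝ≥0∞), LocallyIntegrable u μ → Measurable ρ →
    IsUpperGradient u ρ → ∀ (x : X) (r : ℝ), 0 < r →
      (∫⁻ y in ball x r, ENNReal.ofReal |u y - ⨍ z in ball x r, u z ∂μ| ∂μ) /
          μ (ball x r) ≤
        ENNReal.ofReal (CP * Metric.diam (ball x r)) *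
          ((∫⁻ y in ball x (lP * r), ρ y ∂μ) / μ (ball x (lP * r)))

/-- `μ` is Ahlfors `q`-regular with constants `0 < aA ≤ AA`. -/
def IsAhlforsRegular {X : Type*} [MetricSpace X] [MeasurableSpace X]
    (μ : Measure X) (q aA AA : ℝ) : Prop :=
  0 < aA ∧ aA ≤ AA ∧
    ∀ (x : X) (r : ℝ), 0 < r → r < Metric.diam (Set.univ : Set X) →
      ENNReal.ofReal (aA * r ^ q) ≤ μ (ball x r) ∧
        μ (ball x r) ≤ ENNReal.ofReal (AA * r ^ q)

/-! ### The circle `ℝ/ℤ`, loops and degree -/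

lemma intCast_coe_eq_zero (k : ℤ) : ((k : ℝ) : UnitAddCircle) = 0 :=
  (AddCircle.coe_eq_zero_iff _).mpr ⟨k, by simp⟩

/-- The standard loop of degree `k` in `ℝ/ℤ` based at `y`: `t ↦ y + [k t]`. -/
def stdLoop (k : ℤ) (y : UnitAddCircle) : Path y y where
  toFun := fun t => y + (((k : ℝ) * (t : ℝ) : ℝ) : UnitAddCircle)
  continuous_toFun := by
    refine continuous_const.add ?_
    exact (AddCircle.continuous_mk' 1).comp (by continuity)
  source' := by simp
  target' := by
    have h1 : ((1 : unitInterval) : ℝ) = 1 := rfl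
    have h : (((k : ℝ) * ((1 : unitInterval) : ℝ) : ℝ) : UnitAddCircle) = 0 := by
      rw [h1, mul_one]; exact intCast_coe_eq_zero k
    simp [h]

/-- Concatenation of `n` copies of a loop. -/
def loopPow {X : Type*} [TopologicalSpace X] {x : X} (γ : Path x x) : ℕ → Path x x
  | 0 => Path.refl x
  | n + 1 => (loopPow γ n).trans γ

/-- A loop `γ` based at `x` has degree 1 (relative to the chosen generator `α₀` based
at `x₀`) if it is loop-homotopic to a conjugate `η * α₀ * η⁻¹` of `α₀`. -/
def IsDegreeOneLoop {T : Type*} [TopologicalSpace T] (x₀ : T) (α₀ : Path x₀ x₀)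
    {x : T} (γ : Path x x) : Prop :=
  ∃ η : Path x x₀, Path.Homotopic γ (η.trans (α₀.trans η.symm))

/-- A map `f : T → ℝ/ℤ` has degree `k`: it pushes every degree-1 loop based at `x`
to a loop which is loop-homotopic to `[f x] + k·β`, `β (t) = [t]`. -/
def HasDegree {T : Type*} [TopologicalSpace T] (x₀ : T) (α₀ : Path x₀ x₀)
    (f : T → UnitAddCircle) (k : ℤ) : Prop :=
  ∃ hf : Continuous f, ∀ (x : T) (γ : Path x x), IsDegreeOneLoop x₀ α₀ γ →
    Path.Homotopic (γ.map hf) (stdLoop k (f x))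

/-- The class of `α₀` generates `π₁(T, x₀) ≅ ℤ`. -/
def IsGenerator {T : Type*} [TopologicalSpace T] (x₀ : T) (α₀ : Path x₀ x₀) : Prop :=
  Function.Bijective fun k : ℤ =>
    (FundamentalGroup.fromPath (X := TopCat.of T) ⟦α₀⟧ : FundamentalGroup (TopCat.of T) x₀) ^ k

/-- `T` is semilocally simply connected. -/
def SemilocallySimplyConnected (T : Type*) [TopologicalSpace T] : Prop :=
  ∀ x : T, ∃ U ∈ 𝓝 x, ∀ γ : Path x x, (∀ t, γ t ∈ U) → Path.Homotopic γ (Path.refl x)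

/-- `f` is a Lipschitz map of degree 1. -/
def DegOneLip {T : Type*} [MetricSpace T] (x₀ : T) (α₀ : Path x₀ x₀)
    (f : T → UnitAddCircle) : Prop :=
  (∃ L : ℝ≥0, LipschitzWith L f) ∧ HasDegree x₀ α₀ f 1

/-! ### Capacity and surface modulus -/

/-- The degree 1 `p`-capacity of `T`, defined through minimal `p`-weak upper gradients:
the infimum of `∫ ρ^p dμ` over `p`-weak upper gradients `ρ` of Lipschitz degree-1 maps. -/
def cap {T : Type*} [MetricSpace T] [MeasurableSpace T] (μ : Measure T) (p : ℝ)
    (x₀ : T) (α₀ : Path x₀ x₀) : ℝ≥0∞ :=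
  ⨅ (f : T → UnitAddCircle) (_ : DegOneLip x₀ α₀ f) (ρ : T → ℝ≥0∞)
    (_ : Measurable ρ ∧ IsWeakUpperGradient μ p f ρ),
      ∫⁻ x, ρ x ^ p ∂μ

/-- The pointwise Lipschitz constant `Lip f (x)`. -/
def pLip {T : Type*} [MetricSpace T] (f : T → UnitAddCircle) (x : T) : ℝ≥0∞ :=
  Filter.limsup
    (fun r : ℝ => ⨆ y ∈ ball x r, edist (f x) (f y) / ENNReal.ofReal r) (𝓝[>] (0 : ℝ))

/-- The degree 1 `p`-capacity of `T`, defined through pointwise Lipschitz constants. -/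
def capLip {T : Type*} [MetricSpace T] [MeasurableSpace T] (μ : Measure T) (p : ℝ)
    (x₀ : T) (α₀ : Path x₀ x₀) : ℝ≥0∞ :=
  ⨅ (f : T → UnitAddCircle) (_ : DegOneLip x₀ α₀ f), ∫⁻ x, pLip f x ^ p ∂μ

/-- The codimension 1 spherical Hausdorff measure, as a set function:
`H(A) = sup_{δ>0} inf { ∑ μ(B_i)/r_i }`, the infimum being over countable covers of `A`
by balls `B_i` of radii `r_i ≤ δ`. -/
def codimH {T : Type*} [MetricSpace T] [MeasurableSpace T] (μ : Measure T)
    (A : Set T) : ℝ≥0∞ :=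
  ⨆ (δ : ℝ) (_ : 0 < δ),
    ⨅ (c : ℕ → T) (r : ℕ → ℝ) (_ : ∀ i, r i ≤ δ)
      (_ : A ⊆ ⋃ i, ball (c i) (r i)),
        ∑' i, μ (ball (c i) (r i)) / ENNReal.ofReal (r i)

/-- The integral `∫_S g dH` of `g ≥ 0` over `S` against the codimension 1 Hausdorff
measure, via the layer-cake (Choquet) formula. -/
def choquetIntegral {T : Type*} [MetricSpace T] [MeasurableSpace T] (μ : Measure T)
    (S : Set T) (g : T → ℝ≥0∞) : ℝ≥0∞ :=
  ∫⁻ t in Set.Ioi (0 : ℝ), codimH μ {x | x ∈ S ∧ ENNReal.ofReal t < g x}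

/-- The family `Γ*` of all level sets `φ⁻¹[0]` of finite codimension 1 Hausdorff measure
of continuous degree-1 maps `φ : T → ℝ/ℤ`. -/
def Surfaces {T : Type*} [MetricSpace T] [MeasurableSpace T] (μ : Measure T)
    (x₀ : T) (α₀ : Path x₀ x₀) : Set (Set T) :=
  {S | ∃ φ : T → UnitAddCircle, HasDegree x₀ α₀ φ 1 ∧ S = φ ⁻¹' {0} ∧ codimH μ S < ⊤}

/-- The surface `q`-modulus of a family of surfaces, the surfaces being equipped with the
codimension 1 Hausdorff measure. -/
def surfModOf {T : Type*} [MetricSpace T] [MeasurableSpace T] (μ : Measure T) (q : ℝ)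
    (𝒮 : Set (Set T)) : ℝ≥0∞ :=
  ⨅ (ρ : T → ℝ≥0∞) (_ : Measurable ρ ∧ ∀ S ∈ 𝒮, 1 ≤ choquetIntegral μ S ρ),
    ∫⁻ x, ρ x ^ q ∂μ

/-- The surface modulus `mod_q T`. -/
def surfMod {T : Type*} [MetricSpace T] [MeasurableSpace T] (μ : Measure T) (q : ℝ)
    (x₀ : T) (α₀ : Path x₀ x₀) : ℝ≥0∞ :=
  surfModOf μ q (Surfaces μ x₀ α₀)

/-- The family `Γ*` with the `(q-1)`-dimensional Hausdorff measure instead. -/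
def SurfacesH {T : Type*} [MetricSpace T] [MeasurableSpace T] [BorelSpace T] (q : ℝ)
    (x₀ : T) (α₀ : Path x₀ x₀) : Set (Set T) :=
  {S | ∃ φ : T → UnitAddCircle, HasDegree x₀ α₀ φ 1 ∧ S = φ ⁻¹' {0} ∧ μH[q - 1] S < ⊤}

/-- The surface modulus `mod_q T` defined through the `(q-1)`-dimensional Hausdorff
measures `H^{q-1} ⌞ S`, `S ∈ Γ*`. -/
def surfModH {T : Type*} [MetricSpace T] [MeasurableSpace T] [BorelSpace T]
    (μ : Measure T) (q pstar : ℝ) (x₀ : T) (α₀ : Path x₀ x₀) : ℝ≥0∞ :=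
  ⨅ (ρ : T → ℝ≥0∞)
    (_ : Measurable ρ ∧ ∀ S ∈ SurfacesH (T := T) q x₀ α₀, 1 ≤ ∫⁻ x in S, ρ x ∂μH[q - 1]),
      ∫⁻ x, ρ x ^ pstar ∂μ

/-- The standing assumptions 2.1. -/
def Standing {T : Type*} [MetricSpace T] [MeasurableSpace T] (μ : Measure T)
    (Cμ : ℝ≥0∞) (CP lP : ℝ) (x₀ : T) (α₀ : Path x₀ x₀) : Prop :=
  IsDoubling μ Cμ ∧ SupportsPoincare μ CP lP ∧ SemilocallySimplyConnected T ∧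
    IsGenerator x₀ α₀ ∧ ∃ f : T → UnitAddCircle, DegOneLip x₀ α₀ f

/-! ### The universal cover -/

/-- `π` is a local isometry. -/
def IsLocalIsometry {X Y : Type*} [MetricSpace X] [MetricSpace Y] (π : X → Y) : Prop :=
  ∀ x : X, ∃ ε : ℝ, 0 < ε ∧
    ∀ y ∈ ball x ε, ∀ z ∈ ball x ε, dist (π y) (π z) = dist y z

/-- `(T̃, π)` is the universal cover of `T`, with `T̃` carrying the length metric pulled
back by `π` (so that `π` is a local isometry). -/
def CoverSetup {T Tt : Type*} [MetricSpace T] [MetricSpace Tt] (π : Tt → T) : Prop :=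
  IsCoveringMap π ∧ Function.Surjective π ∧ IsLocalIsometry π ∧ SimplyConnectedSpace Tt

/-- `τ` is the deck transformation of the cover `π` determined by
`τ (γ̃ 0) = γ̃ 1` for every lift `γ̃` of every degree-1 loop `γ`. -/
def IsDeck {T Tt : Type*} [MetricSpace T] [MetricSpace Tt] (π : Tt → T)
    (x₀ : T) (α₀ : Path x₀ x₀) (τ : Tt → Tt) : Prop :=
  Continuous τ ∧ (∀ x, π (τ x) = π x) ∧
    ∀ (x : T) (γ : Path x x), IsDegreeOneLoop x₀ α₀ γ →
      ∀ γt : C(unitInterval, Tt), (∀ t, π (γt t) = γ t) → τ (γt 0) = γt 1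

/-- `μ̃` is the natural lift of `μ` to the cover:
`μ̃ (A) = ∫ #(π⁻¹(x) ∩ A) dμ (x)`. -/
def IsLiftedMeasure {T Tt : Type*} [MetricSpace T] [MeasurableSpace T]
    [MetricSpace Tt] [MeasurableSpace Tt] (π : Tt → T) (μ : Measure T)
    (μt : Measure Tt) : Prop :=
  ∀ A : Set Tt, MeasurableSet A → μt A = ∫⁻ x, ((π ⁻¹' {x} ∩ A).encard : ℝ≥0∞) ∂μ

/-! ### Newtonian spaces -/

/-- The seminorm of `N^{1,p}(U)`. -/
def NSeminorm {X : Type*} [PseudoMetricSpace X] [MeasurableSpace X] (μ : Measure X)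
    (p : ℝ) (U : Set X) (f : X → ℝ) : ℝ≥0∞ :=
  (∫⁻ x in U, ENNReal.ofReal |f x| ^ p ∂μ) ^ (1 / p) +
    ⨅ (ρ : X → ℝ≥0∞) (_ : Measurable ρ ∧ IsWeakUpperGradientOn μ p U f ρ),
      (∫⁻ x in U, ρ x ^ p ∂μ) ^ (1 / p)

/-- `f ∈ N^{1,p}_loc`. -/
def MemNloc {X : Type*} [PseudoMetricSpace X] [MeasurableSpace X] (μ : Measure X)
    (p : ℝ) (f : X → ℝ) : Prop :=
  ∀ U : Set X, IsOpen U → IsCompact (closure U) →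
    (∫⁻ x in U, ENNReal.ofReal |f x| ^ p ∂μ) < ⊤ ∧
      ∃ ρ : X → ℝ≥0∞, Measurable ρ ∧ IsWeakUpperGradientOn μ p U f ρ ∧
        (∫⁻ x in U, ρ x ^ p ∂μ) < ⊤

/-- The collection `F`: nonnegative Borel functions `ρ` on `T` such that `ρ ∘ π` is a
`p`-weak upper gradient of some `f ∈ N^{1,p}_loc (T̃)` with `f ∘ τ - f = 1` a.e. -/
def MemF {T Tt : Type*} [MetricSpace T] [MeasurableSpace T] [MetricSpace Tt]
    [MeasurableSpace Tt] (π : Tt → T) (τ : Tt → Tt) (μt : Measure Tt) (p : ℝ)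
    (ρ : T → ℝ≥0∞) : Prop :=
  Measurable ρ ∧ ∃ f : Tt → ℝ, MemNloc μt p f ∧ (∀ᵐ x ∂μt, f (τ x) - f x = 1) ∧
    IsWeakUpperGradient μt p f (ρ ∘ π)

/-- The capacity `cap_p^F T`. -/
def capF {T Tt : Type*} [MetricSpace T] [MeasurableSpace T] [MetricSpace Tt]
    [MeasurableSpace Tt] (μ : Measure T) (π : Tt → T) (τ : Tt → Tt) (μt : Measure Tt)
    (p : ℝ) : ℝ≥0∞ :=
  ⨅ (ρ : T → ℝ≥0∞) (_ : MemF π τ μt p ρ), ∫⁻ x, ρ x ^ p ∂μ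

/-! ### Miscellaneous operators -/

/-- The restricted Hardy–Littlewood maximal operator `M_R`. -/
def restrMax {T : Type*} [MetricSpace T] [MeasurableSpace T] (μ : Measure T)
    (R : ℝ≥0∞) (g : T → ℝ≥0∞) (x : T) : ℝ≥0∞ :=
  ⨆ (s : ℝ) (_ : 0 < s ∧ ENNReal.ofReal s ≤ R),
    (∫⁻ y in ball x s, g y ∂μ) / μ (ball x s)

/-- The upper Lebesgue integral. -/
def upperLintegral {Y : Type*} [MeasurableSpace Y] (ν : Measure Y)
    (F : Y → ℝ≥0∞) : ℝ≥0∞ :=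
  ⨅ (G : Y → ℝ≥0∞) (_ : Measurable G ∧ ∀ y, F y ≤ G y), ∫⁻ y, G y ∂ν

/-! ### The sets `Ω` and the functions `ψ̃`, `ζ`, `ψ` of Section 4.3 -/

/-- The set of points reachable from `A` by a rectifiable path inside `W`. -/
def reach {T : Type*} [MetricSpace T] (A W : Set T) : Set T :=
  {x | ∃ γ : UPath T, γ.start ∈ A ∧ γ.finish = x ∧ γ.InSet W}

/-- `inf_γ ∫_γ ρ ds` over rectifiable paths connecting `A` to `x` inside `W`. -/
def pathDist {T : Type*} [MetricSpace T] (ρ : T → ℝ≥0∞) (A W : Set T) (x : T) : ℝ≥0∞ :=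
  ⨅ (γ : UPath T) (_ : γ.start ∈ A ∧ γ.finish = x ∧ γ.InSet W), γ.integral ρ

open scoped Classical in
/-- The function `ψ̃`. -/
def psiTilde {T : Type*} [MetricSpace T] (ρ : T → ℝ≥0∞) (A W : Set T) (x : T) : ℝ :=
  if x ∈ reach A W then (pathDist ρ A W x).toReal else 0

/-- The function `min {1, ψ̃}`. -/
def zeta {T : Type*} [MetricSpace T] (ρ : T → ℝ≥0∞) (A W : Set T) (x : T) : ℝ :=
  min 1 (psiTilde ρ A W x)

/-- The competing admissible map `ψ = [min {1, ψ̃}] : T → ℝ/ℤ`. -/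
def psiMap {T : Type*} [MetricSpace T] (ρ : T → ℝ≥0∞) (A W : Set T) (x : T) :
    UnitAddCircle :=
  ((zeta ρ A W x : ℝ) : UnitAddCircle)

/-! ### Displacement of paths in the circle -/

lemma coe_isCovering : IsCoveringMap ((↑) : ℝ → UnitAddCircle) :=
  AddCircle.isCoveringMap_coe (1 : ℝ)

/-- A continuous function on a preconnected space all of whose values are integers is constant. -/
lemma eq_of_coe_eq_zero {A : Type*} [TopologicalSpace A] [PreconnectedSpace A] {f : A → ℝ}
    (hf : Continuous f) (h : ∀ x, (f x : UnitAddCircle) = 0) (x y : A) : f x = f y := by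
  have := coe_isCovering.eq_of_comp_eq (g₁ := f) (g₂ := fun _ => f y) hf continuous_const
    (by funext a; simp [h]) y rfl
  exact congrFun this x

lemma exists_lift (γ : C(I, UnitAddCircle)) :
    ∃ Γ : C(I, ℝ), ∀ t, (Γ t : UnitAddCircle) = γ t := by
  obtain ⟨e, he⟩ := QuotientAddGroup.mk_surjective (γ 0)
  obtain ⟨Γ, h, -⟩ := coe_isCovering.exists_path_lifts γ e he.symm
  exact ⟨Γ, fun t => congrFun h t⟩

/-- The total displacement of a path in the circle. -/
def disp (γ : C(I, UnitAddCircle)) : ℝ := (exists_lift γ).choose 1 - (exists_lift γ).choose 0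

lemma disp_eq {γ : C(I, UnitAddCircle)} {Γ : I → ℝ} (hΓ : Continuous Γ)
    (h : ∀ t, (Γ t : UnitAddCircle) = γ t) : disp γ = Γ 1 - Γ 0 := by
  have hs := (exists_lift γ).choose_spec
  have := eq_of_coe_eq_zero (f := fun t => (exists_lift γ).choose t - Γ t)
    ((map_continuous _).sub hΓ) (fun t => by rw [AddCircle.coe_sub, h, sub_eq_zero]; exact hs t) 1 0
  simp only [disp]
  linarith

lemma disp_trans {x y z : UnitAddCircle} (γ : Path x y) (γ' : Path y z) :
    disp (γ.trans γ' : Path x z).toContinuousMap = disp γ.toContinuousMap + disp γ'.toContinuousMap := by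
  obtain ⟨Γ, h⟩ := exists_lift γ.toContinuousMap
  obtain ⟨Γ', h'⟩ := exists_lift γ'.toContinuousMap
  let P : Path (Γ 0) (Γ 1) := ⟨Γ, rfl, rfl⟩
  let P' : Path (Γ 1) (Γ' 1 + (Γ 1 - Γ' 0)) :=
    ⟨⟨fun t => Γ' t + (Γ 1 - Γ' 0), by fun_prop⟩, by simp, rfl⟩
  have e1 : (Γ 1 : UnitAddCircle) = Γ' 0 := by rw [h, h']; simp
  rw [disp_eq (map_continuous Γ) h, disp_eq (map_continuous Γ') h',
    disp_eq (Γ := P.trans P') (map_continuous _)]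
  · simp; ring
  · intro t
    have hP : ∀ s, (P s : UnitAddCircle) = γ s := h
    have hP' : ∀ s, (P' s : UnitAddCircle) = γ' s := by
      intro s
      change ((Γ' s + (Γ 1 - Γ' 0) : ℝ) : UnitAddCircle) = _
      rw [AddCircle.coe_add, AddCircle.coe_sub, e1, h']
      simp
    change _ = (γ.trans γ') t
    rw [Path.trans_apply, Path.trans_apply]
    split_ifs
    · exact hP _
    · exact hP' _

lemma disp_symm {x y : UnitAddCircle} (γ : Path x y) :
    disp γ.symm.toContinuousMap = - disp γ.toContinuousMap := by
  obtain ⟨Γ, h⟩ := exists_lift γ.toContinuousMap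
  rw [disp_eq (map_continuous Γ) h, disp_eq (Γ := fun t => Γ (unitInterval.symm t)) (by fun_prop)]
  · simp
  · intro t; exact h _

lemma disp_homotopic {x y : UnitAddCircle} {γ γ' : Path x y} (H : γ.Homotopic γ') :
    disp γ.toContinuousMap = disp γ'.toContinuousMap := by
  obtain ⟨e, he⟩ := QuotientAddGroup.mk_surjective x
  have h1 : γ.toContinuousMap 0 = (e : UnitAddCircle) := by simpa using he.symm
  have h2 : γ'.toContinuousMap 0 = (e : UnitAddCircle) := by simpa using he.symm
  have := coe_isCovering.liftPath_apply_one_eq_of_homotopicRel (e := e) H h1 h2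
  rw [disp_eq (map_continuous (coe_isCovering.liftPath _ e h1))
      (fun t => congrFun (coe_isCovering.liftPath_lifts _ e h1) t),
    disp_eq (map_continuous (coe_isCovering.liftPath _ e h2))
      (fun t => congrFun (coe_isCovering.liftPath_lifts _ e h2) t), this,
    coe_isCovering.liftPath_zero, coe_isCovering.liftPath_zero]

lemma disp_stdLoop (y : UnitAddCircle) : disp (stdLoop 1 y).toContinuousMap = 1 := by
  obtain ⟨e, rfl⟩ := QuotientAddGroup.mk_surjective y
  rw [disp_eq (Γ := fun t : I => e + (((1 : ℤ) : ℝ) * (t : ℝ))) (by fun_prop)]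
  · simp
  · intro t
    rw [AddCircle.coe_add]
    rfl

lemma homotopic_stdLoop {y : UnitAddCircle} {γ : Path y y} (h : disp γ.toContinuousMap = 1) :
    γ.Homotopic (stdLoop 1 y) := by
  obtain ⟨Γ, hΓ⟩ := exists_lift γ.toContinuousMap
  rw [disp_eq (map_continuous Γ) hΓ] at h
  have h0 : (Γ 0 : UnitAddCircle) = y := by simpa using hΓ 0
  refine ⟨{ toFun := fun st => (((1 - (st.1 : ℝ)) * Γ st.2 +
              (st.1 : ℝ) * (Γ 0 + (st.2 : ℝ)) : ℝ) : UnitAddCircle)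
            continuous_toFun := (AddCircle.continuous_mk' 1).comp (by fun_prop)
            map_zero_left := ?_
            map_one_left := ?_
            prop' := ?_ }⟩
  · intro t
    simpa using hΓ t
  · intro t
    simp [stdLoop, h0]
  · rintro s t (rfl | rfl)
    · have : ((1 - (s : ℝ)) * Γ 0 + s * (Γ 0 + ((0 : I) : ℝ))) = Γ 0 := by simp; ring
      simp only [ContinuousMap.coe_mk, this, h0]
      simp
    · have : ((1 - (s : ℝ)) * Γ 1 + s * (Γ 0 + ((1 : I) : ℝ))) = Γ 1 := by
        simp only [Set.Icc.coe_one]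
        rw [show Γ 1 = Γ 0 + 1 by linarith]; ring
      simp only [ContinuousMap.coe_mk, this]
      exact hΓ 1

lemma disp_null {γ : C(I, UnitAddCircle)} (h : disp γ = 0) :
    ∃ Γ : C(I, ℝ), (∀ t, (Γ t : UnitAddCircle) = γ t) ∧ Γ 0 = Γ 1 := by
  obtain ⟨Γ, hΓ⟩ := exists_lift γ
  refine ⟨Γ, hΓ, ?_⟩
  rw [disp_eq (map_continuous Γ) hΓ] at h
  linarith

/-! ### Winding of maps along paths -/

/-- The displacement of `f` along a path. -/
def wind {T : Type*} [TopologicalSpace T] (f : C(T, UnitAddCircle)) {x y : T} (γ : Path x y) : ℝ :=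
  disp (f.comp γ.toContinuousMap)

section wind
variable {T : Type*} [TopologicalSpace T] (f g : C(T, UnitAddCircle)) {x y z : T}

lemma wind_eq_map (γ : Path x y) : wind f γ = disp (γ.map f.continuous).toContinuousMap := rfl

lemma wind_trans (γ : Path x y) (γ' : Path y z) : wind f (γ.trans γ') = wind f γ + wind f γ' := by
  rw [wind_eq_map, Path.map_trans, disp_trans]; rfl

lemma wind_symm (γ : Path x y) : wind f γ.symm = - wind f γ := by
  exact disp_symm (γ.map f.continuous)

lemma wind_homotopic {γ γ' : Path x y} (h : γ.Homotopic γ') : wind f γ = wind f γ' := by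
  rw [wind_eq_map, wind_eq_map]
  exact disp_homotopic (h.map f)

lemma wind_add_coe (h : C(T, ℝ)) (γ : Path x y) {f' : C(T, UnitAddCircle)}
    (hf' : ∀ x, f' x = f x + (h x : UnitAddCircle)) :
    wind f' γ = wind f γ + (h y - h x) := by
  obtain ⟨Γ, hΓ⟩ := exists_lift (f.comp γ.toContinuousMap)
  rw [wind, wind, disp_eq (map_continuous Γ) hΓ, disp_eq (Γ := fun t => Γ t + h (γ t)) (by fun_prop)]
  · simp; ring
  · intro t
    rw [AddCircle.coe_add, hΓ]
    simp [hf']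

lemma wind_sub (γ : Path x y) : wind (f - g) γ = wind f γ - wind g γ := by
  obtain ⟨Γ, hΓ⟩ := exists_lift (f.comp γ.toContinuousMap)
  obtain ⟨Γ', hΓ'⟩ := exists_lift (g.comp γ.toContinuousMap)
  rw [wind, wind, wind, disp_eq (map_continuous Γ) hΓ, disp_eq (map_continuous Γ') hΓ',
    disp_eq (Γ := fun t => Γ t - Γ' t) (by fun_prop)]
  · ring
  · intro t
    rw [AddCircle.coe_sub, hΓ, hΓ']
    simp

/-- Winding numbers as a homomorphism on the fundamental group. -/
def windHom (x : T) : FundamentalGroup (TopCat.of T) x →* Multiplicative ℝ :=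
  MonoidHom.mk' (fun a => Multiplicative.ofAdd
      (Quotient.lift (fun γ : Path (X := T) x x => wind f γ) (fun _ _ h => wind_homotopic f h)
        (FundamentalGroup.toPath a)))
    (by
      intro a b
      induction a using Quotient.inductionOn with | _ a =>
      induction b using Quotient.inductionOn with | _ b =>
      change Multiplicative.ofAdd (wind f (Path.trans b a)) =
        Multiplicative.ofAdd (wind f a) * Multiplicative.ofAdd (wind f b)
      rw [wind_trans, ofAdd_add, mul_comm])

lemma windHom_mk (x : T) (γ : Path (X := T) x x) :
    windHom f x (FundamentalGroup.fromPath (X := TopCat.of T) ⟦γ⟧) = Multiplicative.ofAdd (wind f γ) :=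
  rfl

lemma exists_wind_eq_zsmul {x₀ : T} {α₀ : Path x₀ x₀} (hα : IsGenerator x₀ α₀)
    (γ : Path x₀ x₀) : ∃ n : ℤ, ∀ f : C(T, UnitAddCircle), wind f γ = n * wind f α₀ := by
  obtain ⟨n, hn⟩ := hα.2 (FundamentalGroup.fromPath (X := TopCat.of T) ⟦γ⟧)
  refine ⟨n, fun f => ?_⟩
  have := congrArg (windHom f x₀) hn
  simp only [map_zpow] at this
  rw [windHom_mk, windHom_mk, ← ofAdd_zsmul] at this
  have := Multiplicative.ofAdd.injective this
  rw [← this]; simp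

lemma hasDegree_one_iff {x₀ : T} {α₀ : Path x₀ x₀} :
    HasDegree x₀ α₀ f 1 ↔ wind f α₀ = 1 := by
  constructor
  · rintro ⟨hf, h⟩
    have := h x₀ α₀ ⟨Path.refl x₀, ?_⟩
    · rw [wind_eq_map, disp_homotopic this, disp_stdLoop]
    · have h1 : (α₀.trans (Path.refl x₀).symm).Homotopic α₀ := by
        rw [Path.refl_symm]
        exact ⟨Path.Homotopy.transRefl α₀⟩
      exact (Path.Homotopic.trans ⟨Path.Homotopy.reflTrans _⟩ h1).symm
  · intro h
    refine ⟨f.continuous, fun x γ hγ => homotopic_stdLoop ?_⟩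
    obtain ⟨η, hη⟩ := hγ
    rw [← wind_eq_map, wind_homotopic f hη, wind_trans, wind_trans, wind_symm, h]
    ring

end wind

lemma HasDegree.add_coe {T : Type*} [TopologicalSpace T] {x₀ : T} {α₀ : Path x₀ x₀}
    {f g : T → UnitAddCircle} (hf : HasDegree x₀ α₀ f 1) {h : T → ℝ} (hh : Continuous h)
    (hg : ∀ x, g x = f x + (h x : UnitAddCircle)) : HasDegree x₀ α₀ g 1 := by
  have hgc : Continuous g := by
    rw [show g = fun x => f x + (h x : UnitAddCircle) from funext hg]
    exact hf.1.add ((AddCircle.continuous_mk' 1).comp hh)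
  have hf' := (hasDegree_one_iff ⟨f, hf.1⟩).1 hf
  refine (hasDegree_one_iff ⟨g, hgc⟩).2 ?_
  rw [wind_add_coe ⟨f, hf.1⟩ ⟨h, hh⟩ α₀ hg, hf']
  simp

/-! ### Topology of the solid torus -/

instance : PathConnectedSpace (Metric.closedBall (0 : ℂ) 1 : Set ℂ) :=
  isPathConnected_iff_pathConnectedSpace.1
    ((convex_closedBall (0 : ℂ) 1).isPathConnected ⟨0, by simp⟩)

/-- Radial contraction of the closed disc. -/
def discScale (s : I) (z : (Metric.closedBall (0 : ℂ) 1 : Set ℂ)) :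
    (Metric.closedBall (0 : ℂ) 1 : Set ℂ) :=
  ⟨(s : ℝ) • (z : ℂ), by
    have := z.2
    rw [mem_closedBall_zero_iff] at this ⊢
    rw [norm_smul, Real.norm_of_nonneg s.2.1]
    exact mul_le_one₀ s.2.2 (norm_nonneg _) this⟩

lemma continuous_discScale : Continuous fun p : I × (Metric.closedBall (0 : ℂ) 1 : Set ℂ) =>
    discScale p.1 p.2 := by
  unfold discScale
  fun_prop

/-- The loop once around the circle factor of the solid torus. -/
def coreLoop {T : Type*} [TopologicalSpace T]
    (Φ : T ≃ₜ UnitAddCircle × (Metric.closedBall (0 : ℂ) 1 : Set ℂ)) :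
    Path (Φ.symm (0, ⟨0, by simp⟩)) (Φ.symm (0, ⟨0, by simp⟩)) where
  toFun t := Φ.symm (((t : ℝ) : UnitAddCircle), ⟨0, by simp⟩)
  continuous_toFun := by
    have : Continuous fun t : I => ((t : ℝ) : UnitAddCircle) :=
      (AddCircle.continuous_mk' 1).comp continuous_subtype_val
    fun_prop
  source' := by simp
  target' := by simp

lemma exists_wind_eq_of_loop {T : Type*} [TopologicalSpace T] [PathConnectedSpace T] {x₀ : T}
    {α₀ : Path x₀ x₀} (hα : IsGenerator x₀ α₀) {x : T} (γ : Path x x) :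
    ∃ n : ℤ, ∀ f : C(T, UnitAddCircle), wind f γ = n * wind f α₀ := by
  let η : Path x₀ x := (PathConnectedSpace.joined x₀ x).somePath
  obtain ⟨n, hn⟩ := exists_wind_eq_zsmul hα (η.trans (γ.trans η.symm))
  refine ⟨n, fun f => ?_⟩
  rw [← hn, wind_trans, wind_trans, wind_symm]
  ring

section torus
variable {T : Type*} [TopologicalSpace T]

lemma pathConnectedSpace_of_torus
    (Φ : T ≃ₜ UnitAddCircle × (Metric.closedBall (0 : ℂ) 1 : Set ℂ)) : PathConnectedSpace T :=
  Φ.symm.surjective.pathConnectedSpace Φ.symm.continuous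

lemma exists_real_lift_of_wind_eq_zero
    (Φ : T ≃ₜ UnitAddCircle × (Metric.closedBall (0 : ℂ) 1 : Set ℂ)) {x₀ : T} {α₀ : Path x₀ x₀} (hα : IsGenerator x₀ α₀)
    (f : C(T, UnitAddCircle)) (hf : wind f α₀ = 0) :
    ∃ h : C(T, ℝ), ∀ x, f x = (h x : UnitAddCircle) := by
  have := pathConnectedSpace_of_torus Φ
  obtain ⟨n, hn⟩ := exists_wind_eq_of_loop hα (coreLoop Φ)
  have h0 : wind f (coreLoop Φ) = 0 := by rw [hn, hf, mul_zero]
  obtain ⟨Γ, hΓ, hΓ01⟩ := disp_null h0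
  let G : UnitAddCircle → ℝ := AddCircle.liftIco 1 0 (fun t => Γ (projIcc 0 1 zero_le_one t))
  have hG : Continuous G := by
    apply AddCircle.liftIco_zero_continuous
    · simpa using hΓ01
    · exact ((map_continuous Γ).comp continuous_projIcc).continuousOn
  have hGf : ∀ θ, (G θ : UnitAddCircle) = f (Φ.symm (θ, ⟨0, by simp⟩)) := by
    intro θ
    obtain ⟨t, ht, rfl⟩ := AddCircle.eq_coe_Ico θ
    simp only [G]
    rw [AddCircle.liftIco_zero_coe_apply ht, hΓ]
    rw [projIcc_of_mem zero_le_one ⟨ht.1, ht.2.le⟩]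
    rfl
  let H : C(I × T, UnitAddCircle) :=
    ⟨fun p => f (Φ.symm ((Φ p.2).1, discScale p.1 (Φ p.2).2)), by
      have := continuous_discScale.comp (f := fun p : I × T => (p.1, (Φ p.2).2)) (by fun_prop)
      have h2 : Continuous fun p : I × T => discScale p.1 (Φ p.2).2 := this
      fun_prop⟩
  let h₀ : C(T, ℝ) := ⟨fun x => G (Φ x).1, by fun_prop⟩
  have hH0 : ∀ a, H (0, a) = (h₀ a : UnitAddCircle) := by
    intro a
    simp only [H, h₀, ContinuousMap.coe_mk, hGf]
    congr 3
    ext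
    simp [discScale]
  let L := coe_isCovering.liftHomotopy H h₀ hH0
  refine ⟨⟨fun x => L (1, x), by fun_prop⟩, fun x => ?_⟩
  have := congrFun (coe_isCovering.liftHomotopy_lifts H h₀ hH0) (1, x)
  simp only [Function.comp] at this
  simp only [ContinuousMap.coe_mk, L, this, H]
  congr 1
  rw [Homeomorph.eq_symm_apply]
  ext <;> simp [discScale]

lemma exists_hasDegree_one
    (Φ : T ≃ₜ UnitAddCircle × (Metric.closedBall (0 : ℂ) 1 : Set ℂ)) {x₀ : T} {α₀ : Path x₀ x₀} (hα : IsGenerator x₀ α₀) :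
    ∃ f : T → UnitAddCircle, HasDegree x₀ α₀ f 1 := by
  have := pathConnectedSpace_of_torus Φ
  obtain ⟨n, hn⟩ := exists_wind_eq_of_loop hα (coreLoop Φ)
  let f : C(T, UnitAddCircle) := ⟨fun x => (Φ x).1, by fun_prop⟩
  have h1 : wind f (coreLoop Φ) = 1 := by
    rw [wind, disp_eq (Γ := fun t : I => (t : ℝ)) continuous_subtype_val]
    · simp
    · intro t
      simp [f, coreLoop]
  rw [hn] at h1
  obtain ⟨k, hk⟩ : ∃ k : ℤ, wind f α₀ = k := by
    obtain ⟨Γ, hΓ⟩ := exists_lift (f.comp α₀.toContinuousMap)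
    have : ((Γ 1 - Γ 0 : ℝ) : UnitAddCircle) = 0 := by
      rw [AddCircle.coe_sub, hΓ, hΓ]; simp
    obtain ⟨k, hk⟩ := (AddCircle.coe_eq_zero_iff _).1 this
    refine ⟨k, ?_⟩
    rw [wind, disp_eq (map_continuous Γ) hΓ, ← hk]
    simp
  rw [hk] at h1
  have h1' : n * k = 1 := by exact_mod_cast h1
  rcases Int.eq_one_or_neg_one_of_mul_eq_one' h1' with h | h
  · exact ⟨f, (hasDegree_one_iff f).2 (by rw [hk, h.2]; simp)⟩
  · refine ⟨((0 : C(T, UnitAddCircle)) - f : C(T, UnitAddCircle)), (hasDegree_one_iff _).2 ?_⟩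
    rw [wind_sub, hk, h.2]
    have : wind (0 : C(T, UnitAddCircle)) α₀ = 0 := by
      rw [wind, disp_eq (Γ := fun _ => 0) continuous_const]
      · simp
      · intro t; simp
    rw [this]; simp

lemma exists_real_diff
    (Φ : T ≃ₜ UnitAddCircle × (Metric.closedBall (0 : ℂ) 1 : Set ℂ)) {x₀ : T} {α₀ : Path x₀ x₀} (hα : IsGenerator x₀ α₀)
    {f g : T → UnitAddCircle} (hf : HasDegree x₀ α₀ f 1) (hg : HasDegree x₀ α₀ g 1) :
    ∃ h : T → ℝ, Continuous h ∧ ∀ x, g x = f x + (h x : UnitAddCircle) := by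
  have hf' := (hasDegree_one_iff ⟨f, hf.1⟩).1 hf
  have hg' := (hasDegree_one_iff ⟨g, hg.1⟩).1 hg
  obtain ⟨h, hh⟩ := exists_real_lift_of_wind_eq_zero Φ hα
    ((⟨g, hg.1⟩ : C(T, UnitAddCircle)) - ⟨f, hf.1⟩) (by rw [wind_sub, hf', hg', sub_self])
  refine ⟨h, h.continuous, fun x => ?_⟩
  rw [← hh]
  simp

end torus

/-! ### The pointwise Lipschitz constant -/

lemma exists_abs_eq_norm (d : UnitAddCircle) : ∃ a : ℝ, (a : UnitAddCircle) = d ∧ |a| = ‖d‖ := by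
  obtain ⟨e, rfl⟩ := QuotientAddGroup.mk_surjective d
  refine ⟨e - round e, ?_, ?_⟩
  · rw [AddCircle.coe_sub, intCast_coe_eq_zero, sub_zero]
  · exact (UnitAddCircle.norm_eq (x := e)).symm

lemma norm_coe_le_abs (a : ℝ) : ‖(a : UnitAddCircle)‖ ≤ |a| := by
  rw [UnitAddCircle.norm_eq]
  simpa using round_le a 0

lemma eq_zero_of_coe_eq_zero {a : ℝ} (h : (a : UnitAddCircle) = 0) (ha : |a| < 1) : a = 0 := by
  obtain ⟨k, hk⟩ := (AddCircle.coe_eq_zero_iff _).1 h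
  rw [zsmul_one] at hk
  rw [← hk] at ha ⊢
  have : |k| < 1 := by exact_mod_cast ha
  rw [Int.abs_lt_one_iff.1 this]
  simp

lemma circle_dist_le_half (x y : UnitAddCircle) : dist x y ≤ 1 / 2 := by
  rw [dist_eq_norm]
  simpa using AddCircle.norm_le_half_period (1 : ℝ) one_ne_zero (x := x - y)

lemma lipschitz_of_local {T : Type*} [PseudoMetricSpace T] {f : T → UnitAddCircle} (K : ℝ≥0)
    {δ : ℝ} (hδ : 0 < δ) (h : ∀ x y, dist x y < δ → dist (f x) (f y) ≤ K * dist x y) :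
    ∃ L : ℝ≥0, LipschitzWith L f := by
  refine ⟨max K (Real.toNNReal (1 / δ)), LipschitzWith.of_dist_le_mul fun x y => ?_⟩
  rw [NNReal.coe_max, Real.coe_toNNReal _ (by positivity)]
  rcases lt_or_ge (dist x y) δ with hd | hd
  · exact (h x y hd).trans (mul_le_mul_of_nonneg_right (le_max_left _ _) dist_nonneg)
  · calc dist (f x) (f y) ≤ 1 := (circle_dist_le_half _ _).trans (by norm_num)
      _ = 1 / δ * δ := by field_simp
      _ ≤ 1 / δ * dist x y := by gcongr
      _ ≤ _ := mul_le_mul_of_nonneg_right (le_max_right _ _) dist_nonneg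

section pLip
variable {T : Type*} [MetricSpace T] {f : T → UnitAddCircle}

lemma pLip_le_of_local {x : T} {K : ℝ≥0∞} {δ : ℝ} (hδ : 0 < δ)
    (h : ∀ y, dist y x < δ → edist (f x) (f y) ≤ K * edist x y) : pLip f x ≤ K := by
  refine limsup_le_of_le (by isBoundedDefault) ?_
  have : Ioo (0 : ℝ) δ ∈ 𝓝[>] (0 : ℝ) := Ioo_mem_nhdsGT hδ
  filter_upwards [this] with r hr
  refine iSup₂_le fun y hy => ?_
  rw [mem_ball] at hy
  refine ENNReal.div_le_of_le_mul ((h y (hy.trans hr.2)).trans ?_)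
  gcongr
  rw [edist_dist, dist_comm]
  exact ENNReal.ofReal_le_ofReal hy.le

lemma exists_local_of_pLip_lt {x : T} {K : ℝ≥0} (h : pLip f x < K) :
    ∃ δ > 0, ∀ y, dist y x < δ → edist (f x) (f y) ≤ K * edist x y := by
  have h1 := eventually_lt_of_limsup_lt h
  obtain ⟨δ, hδ, hs⟩ := mem_nhdsGT_iff_exists_Ioo_subset.1 h1
  have hδ : 0 < δ := hδ
  refine ⟨δ, hδ, fun y hy => ?_⟩
  have key : ∀ r ∈ Ioo (dist y x) δ, edist (f x) (f y) ≤ K * ENNReal.ofReal r := by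
    intro r hr
    have hr0 : 0 < r := dist_nonneg.trans_lt hr.1
    have h2 : (⨆ y ∈ ball x r, edist (f x) (f y) / ENNReal.ofReal r) < K := hs ⟨hr0, hr.2⟩
    have h3 : edist (f x) (f y) / ENNReal.ofReal r ≤ K :=
      (le_iSup₂ (f := fun y (_ : y ∈ ball x r) => edist (f x) (f y) / ENNReal.ofReal r) y
        (mem_ball.2 hr.1)).trans h2.le
    exact (ENNReal.div_le_iff_le_mul (Or.inl (by simpa using hr0)) (Or.inl (by simp))).1 h3
  have hlim : Tendsto (fun r : ℝ => (K : ℝ≥0∞) * ENNReal.ofReal r) (𝓝[>] (dist y x))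
      (𝓝 (K * ENNReal.ofReal (dist y x))) := by
    refine ENNReal.Tendsto.const_mul ?_ (Or.inr (by simp))
    exact (ENNReal.continuous_ofReal.tendsto _).mono_left nhdsWithin_le_nhds
  rw [edist_dist x y, dist_comm x y]
  refine ge_of_tendsto hlim ?_
  filter_upwards [Ioo_mem_nhdsGT hy] with r hr using key r hr

/-- The set where `f` is Lipschitz with constant `K` at scale `δ`. -/
def lipSet (f : T → UnitAddCircle) (K : ℝ≥0) (δ : ℝ) : Set T :=
  {x | ∀ y, dist y x < δ → edist (f x) (f y) ≤ K * edist x y}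

lemma isClosed_lipSet (hf : Continuous f) (K : ℝ≥0) (δ : ℝ) : IsClosed (lipSet f K δ) := by
  have : lipSet f K δ =
      ⋂ y, ({x | δ ≤ dist y x} ∪ {x | edist (f x) (f y) ≤ K * edist x y}) := by
    ext x
    simp only [lipSet, mem_ofPred_eq, mem_iInter, mem_union]
    refine forall_congr' fun y => ?_
    rw [imp_iff_not_or, not_lt]
  rw [this]
  refine isClosed_iInter fun y => (isClosed_le (by fun_prop) (by fun_prop)).union
    (isClosed_le (by fun_prop) ?_)
  exact ENNReal.continuous_const_mul (by simp) |>.comp (by fun_prop)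

lemma lipSet_anti {K : ℝ≥0} {δ δ' : ℝ} (h : δ' ≤ δ) : lipSet f K δ ⊆ lipSet f K δ' :=
  fun _ hx y hy => hx y (hy.trans_le h)

lemma setOf_pLip_lt (c : ℝ≥0∞) : {x | pLip f x < c} =
    ⋃ (q : ℚ) (_ : ((Real.toNNReal q : ℝ≥0) : ℝ≥0∞) < c) (n : ℕ),
      lipSet f (Real.toNNReal q) (1 / ((n : ℝ) + 1)) := by
  ext x
  simp only [mem_ofPred_eq, mem_iUnion, exists_prop]
  constructor
  · intro h
    obtain ⟨q, -, hq, hqc⟩ := ENNReal.lt_iff_exists_rat_btwn.1 h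
    obtain ⟨δ, hδ, hy⟩ := exists_local_of_pLip_lt hq
    obtain ⟨n, hn⟩ := exists_nat_one_div_lt hδ
    exact ⟨q, hqc, n, fun y hy' => hy y (hy'.trans hn)⟩
  · rintro ⟨q, hqc, n, h⟩
    exact (pLip_le_of_local (by positivity) h).trans_lt hqc

lemma measurable_pLip [MeasurableSpace T] [BorelSpace T] (hf : Continuous f) :
    Measurable (pLip f) := by
  refine measurable_of_Iio fun c => ?_
  change MeasurableSet {x | pLip f x < c}
  rw [setOf_pLip_lt]
  exact MeasurableSet.iUnion fun q => MeasurableSet.iUnion fun _ => MeasurableSet.iUnion fun n =>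
    (isClosed_lipSet hf _ _).measurableSet

lemma pLip_le_of_lipschitz {L : ℝ≥0} (hf : LipschitzWith L f) (x : T) : pLip f x ≤ L :=
  pLip_le_of_local one_pos fun y _ => hf x y

lemma pLip_convex_le {f g k : T → UnitAddCircle} {x : T} {a b : ℝ≥0∞} (ha : a ≠ ⊤) (hb : b ≠ ⊤)
    (hfx : pLip f x ≠ ⊤) (hgx : pLip g x ≠ ⊤) {δ : ℝ} (hδ : 0 < δ)
    (h : ∀ y, dist y x < δ → edist (k x) (k y) ≤ a * edist (f x) (f y) + b * edist (g x) (g y)) :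
    pLip k x ≤ a * pLip f x + b * pLip g x := by
  have key : ∀ ε : ℝ≥0, 0 < ε →
      pLip k x ≤ a * (pLip f x + ε) + b * (pLip g x + ε) := by
    intro ε hε
    lift pLip f x to ℝ≥0 using hfx with F hF
    lift pLip g x to ℝ≥0 using hgx with G hG
    obtain ⟨δ₁, hδ₁, h₁⟩ := exists_local_of_pLip_lt (f := f) (x := x) (K := F + ε)
      (by rw [← hF]; exact_mod_cast lt_add_of_pos_right F hε)
    obtain ⟨δ₂, hδ₂, h₂⟩ := exists_local_of_pLip_lt (f := g) (x := x) (K := G + ε)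
      (by rw [← hG]; exact_mod_cast lt_add_of_pos_right G hε)
    refine pLip_le_of_local (δ := min δ (min δ₁ δ₂)) (by positivity) fun y hy => ?_
    obtain ⟨hy0, hy1, hy2⟩ : dist y x < δ ∧ dist y x < δ₁ ∧ dist y x < δ₂ := by
      simpa [lt_min_iff] using hy
    calc _ ≤ a * edist (f x) (f y) + b * edist (g x) (g y) := h y hy0
      _ ≤ a * ((F + ε : ℝ≥0) * edist x y) + b * ((G + ε : ℝ≥0) * edist x y) := by
        gcongr
        · exact h₁ y hy1
        · exact h₂ y hy2
      _ = _ := by push_cast; ring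
  have hlim : Tendsto (fun ε : ℝ≥0 => a * (pLip f x + ε) + b * (pLip g x + ε)) (𝓝[>] 0)
      (𝓝 (a * (pLip f x + (0 : ℝ≥0)) + b * (pLip g x + (0 : ℝ≥0)))) := by
    have h0 : Tendsto (fun ε : ℝ≥0 => (ε : ℝ≥0∞)) (𝓝[>] 0) (𝓝 ((0 : ℝ≥0) : ℝ≥0∞)) :=
      (ENNReal.continuous_coe.tendsto _).mono_left nhdsWithin_le_nhds
    exact (ENNReal.Tendsto.const_mul (tendsto_const_nhds.add h0) (Or.inr ha)).add
      (ENNReal.Tendsto.const_mul (tendsto_const_nhds.add h0) (Or.inr hb))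
  simp only [ENNReal.coe_zero, add_zero] at hlim
  refine ge_of_tendsto hlim ?_
  filter_upwards [self_mem_nhdsWithin] with ε hε using key ε hε

lemma exists_degOneLip_convex [CompactSpace T]
    (Φ : T ≃ₜ UnitAddCircle × (Metric.closedBall (0 : ℂ) 1 : Set ℂ)) {x₀ : T}
    {α₀ : Path x₀ x₀} (hα : IsGenerator x₀ α₀) {f g : T → UnitAddCircle}
    (hf : DegOneLip x₀ α₀ f) (hg : DegOneLip x₀ α₀ g) {t : ℝ} (ht0 : 0 ≤ t) (ht1 : t ≤ 1) :
    ∃ k, DegOneLip x₀ α₀ k ∧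
      ∀ x, pLip k x ≤ ENNReal.ofReal (1 - t) * pLip f x + ENNReal.ofReal t * pLip g x := by
  obtain ⟨h, hh, hfg⟩ := exists_real_diff Φ hα hf.2 hg.2
  obtain ⟨⟨Lf, hLf⟩, hfd⟩ := hf
  obtain ⟨⟨Lg, hLg⟩, hgd⟩ := hg
  let k : T → UnitAddCircle := fun x => f x + ((t * h x : ℝ) : UnitAddCircle)
  have hkd : HasDegree x₀ α₀ k 1 := hfd.add_coe (h := fun x => t * h x) (by fun_prop) fun x => rfl
  have unif : ∀ {Y : Type} [PseudoMetricSpace Y] (u : T → Y), Continuous u →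
      ∃ δ > 0, ∀ x y, dist x y < δ → dist (u x) (u y) < 1 / 4 := by
    intro Y _ u hu
    obtain ⟨δ, h1, h2⟩ := Metric.uniformContinuous_iff.1
      (CompactSpace.uniformContinuous_of_continuous hu) (1 / 4) (by norm_num)
    exact ⟨δ, h1, fun x y hxy => h2 hxy⟩
  obtain ⟨δ₁, hδ₁, h₁⟩ := unif f hfd.1
  obtain ⟨δ₂, hδ₂, h₂⟩ := unif g hgd.1
  obtain ⟨δ₃, hδ₃, h₃⟩ := unif h hh
  have key : ∀ x y, dist x y < min δ₁ (min δ₂ δ₃) →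
      dist (k x) (k y) ≤ (1 - t) * dist (f x) (f y) + t * dist (g x) (g y) := by
    intro x y hxy
    obtain ⟨hx1, hx2, hx3⟩ : dist x y < δ₁ ∧ dist x y < δ₂ ∧ dist x y < δ₃ := by
      simpa [lt_min_iff] using hxy
    have i1 := h₁ x y hx1
    have i2 := h₂ x y hx2
    have i3 := h₃ x y hx3
    obtain ⟨a, ha, ha'⟩ := exists_abs_eq_norm (f x - f y)
    obtain ⟨b, hb, hb'⟩ := exists_abs_eq_norm (g x - g y)
    rw [← dist_eq_norm] at ha' hb'
    rw [Real.dist_eq] at i3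
    have e : h x - h y = b - a := by
      have := eq_zero_of_coe_eq_zero (a := (h x - h y) - (b - a)) ?_ ?_
      · linarith
      · rw [AddCircle.coe_sub, AddCircle.coe_sub, AddCircle.coe_sub, ha, hb, hfg, hfg]
        abel
      · calc |h x - h y - (b - a)| ≤ |h x - h y| + |b - a| := abs_sub _ _
          _ ≤ |h x - h y| + (|b| + |a|) := by gcongr; exact abs_sub _ _
          _ < 1 := by linarith
    have e2 : k x - k y = (((1 - t) * a + t * b : ℝ) : UnitAddCircle) := by
      have : (1 - t) * a + t * b = a + (t * h x - t * h y) := by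
        rw [← mul_sub, e]; ring
      rw [this, AddCircle.coe_add, AddCircle.coe_sub, ha]
      simp only [k]
      abel
    rw [dist_eq_norm, e2, ← ha', ← hb']
    refine (norm_coe_le_abs _).trans ((abs_add_le _ _).trans ?_)
    rw [abs_mul, abs_mul, abs_of_nonneg ht0, abs_of_nonneg (sub_nonneg.2 ht1)]
  have hmin : 0 < min δ₁ (min δ₂ δ₃) := by positivity
  refine ⟨k, ⟨lipschitz_of_local (Lf + Lg) hmin fun x y hxy => (key x y hxy).trans ?_, hkd⟩,
    fun x => pLip_convex_le (by simp) (by simp)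
      (ne_top_of_le_ne_top ENNReal.coe_ne_top (pLip_le_of_lipschitz hLf x))
      (ne_top_of_le_ne_top ENNReal.coe_ne_top (pLip_le_of_lipschitz hLg x)) hmin fun y hy => ?_⟩
  · have i1 := hLf.dist_le_mul x y
    have i2 := hLg.dist_le_mul x y
    have n1 : 0 ≤ dist (f x) (f y) := dist_nonneg
    have n2 : 0 ≤ dist (g x) (g y) := dist_nonneg
    push_cast
    nlinarith
  · rw [dist_comm] at hy
    have := key x y hy
    rw [edist_dist, edist_dist, edist_dist, ← ENNReal.ofReal_mul (by linarith),
      ← ENNReal.ofReal_mul ht0, ← ENNReal.ofReal_add (by have := dist_nonneg (x := f x) (y := f y); nlinarith)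
        (by positivity)]
    exact ENNReal.ofReal_le_ofReal this

end pLip

/-! ### Elementary consequences of Ahlfors regularity -/

section Ahlfors
variable {T : Type*} [MetricSpace T] [MeasurableSpace T] {μ : Measure T} {q aA AA CP lP : ℝ}

lemma SupportsPoincare.isFiniteMeasure [CompactSpace T] (hP : SupportsPoincare μ CP lP) :
    IsFiniteMeasure μ := by
  rcases isEmpty_or_nonempty T with h | ⟨⟨x⟩⟩
  · exact ⟨by simp [Set.eq_empty_of_isEmpty (univ : Set T)]⟩
  · refine ⟨lt_of_le_of_lt (measure_mono ?_)
      (hP.1 x (Metric.diam (univ : Set T) + 1) (by positivity)).2⟩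
    intro y _
    have := Metric.dist_le_diam_of_mem isCompact_univ.isBounded (mem_univ y) (mem_univ x)
    exact mem_ball.2 (by linarith)

lemma diam_univ_pos [CompactSpace T] [Nontrivial T] : 0 < Metric.diam (univ : Set T) := by
  obtain ⟨x, y, h⟩ := exists_pair_ne T
  exact (dist_pos.2 h).trans_le
    (Metric.dist_le_diam_of_mem isCompact_univ.isBounded (mem_univ x) (mem_univ y))

lemma IsAhlforsRegular.measure_closedBall_le (hA : IsAhlforsRegular μ q aA AA) (x : T) {r : ℝ}
    (hr : 0 < r) (hr2 : 2 * r < Metric.diam (univ : Set T)) :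
    μ (closedBall x r) ≤ ENNReal.ofReal (AA * (2 * r) ^ q) :=
  (measure_mono (closedBall_subset_ball (by linarith))).trans
    (hA.2.2 x (2 * r) (by positivity) hr2).2

lemma IsAhlforsRegular.le_measure_closedBall (hA : IsAhlforsRegular μ q aA AA) (x : T) {r : ℝ}
    (hr : 0 < r) (hr2 : r < Metric.diam (univ : Set T)) :
    ENNReal.ofReal (aA * r ^ q) ≤ μ (closedBall x r) :=
  (hA.2.2 x r hr hr2).1.trans (measure_mono ball_subset_closedBall)

lemma IsAhlforsRegular.measure_closedBall_ne_zero (hA : IsAhlforsRegular μ q aA AA) (x : T) {R : ℝ} (hR : 0 < R)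
    (hRd : R < diam (univ : Set T)) : μ (closedBall x R) ≠ 0 := by
  have h := hA.le_measure_closedBall x hR hRd
  have : 0 < ENNReal.ofReal (aA * R ^ q) :=
    ENNReal.ofReal_pos.2 (mul_pos hA.1 (Real.rpow_pos_of_pos hR q))
  exact (this.trans_le h).ne'

lemma IsAhlforsRegular.one_le [BorelSpace T] [CompactSpace T] [PreconnectedSpace T] [Nontrivial T]
    [IsFiniteMeasure μ] (hA : IsAhlforsRegular μ q aA AA) : 1 ≤ q := by
  by_contra! hq
  obtain ⟨x, y, hxy⟩ := exists_pair_ne T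
  set d := dist x y with hd
  have hd0 : 0 < d := dist_pos.2 hxy
  have hdD : d ≤ Metric.diam (univ : Set T) :=
    Metric.dist_le_diam_of_mem isCompact_univ.isBounded (mem_univ x) (mem_univ y)
  have hval : ∀ s ∈ Icc 0 d, ∃ z, dist x z = s := by
    intro s hs
    have := isPreconnected_univ.intermediate_value (mem_univ x) (mem_univ y)
      (f := fun z => dist x z) (by fun_prop)
    rw [dist_self] at this
    obtain ⟨z, -, hz⟩ := this hs
    exact ⟨z, hz⟩
  have key : ∀ n : ℕ, 0 < n → aA * (d / 4) ^ q * (n : ℝ) ^ (1 - q) ≤ (μ univ).toReal := by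
    intro n hn
    have hn' : (0 : ℝ) < n := by exact_mod_cast hn
    have hz : ∀ j : Fin n, ∃ z, dist x z = d * (j : ℕ) / n := by
      intro j
      refine hval _ ⟨by positivity, ?_⟩
      rw [div_le_iff₀ hn']
      gcongr
      exact_mod_cast j.2.le
    choose z hz using hz
    set r := d / (4 * n) with hr
    have hr0 : 0 < r := by positivity
    have hdr : d / n = 4 * r := by rw [hr]; field_simp
    have hdisj : Pairwise (Function.onFun Disjoint fun j => ball (z j) r) := by
      intro i j hij
      refine ball_disjoint_ball ?_
      have h1 : |dist x (z i) - dist x (z j)| ≤ dist (z i) (z j) := by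
        rw [dist_comm x, dist_comm x]
        exact abs_dist_sub_le _ _ _
      rw [hz, hz, ← sub_div, ← mul_sub, mul_div_right_comm, hdr, abs_mul, abs_of_pos (by positivity)]
        at h1
      have h2 : (1 : ℝ) ≤ |((i : ℕ) : ℝ) - (j : ℕ)| := by
        have : (1 : ℤ) ≤ |((i : ℕ) : ℤ) - (j : ℕ)| :=
          Int.one_le_abs (sub_ne_zero.2 (by exact_mod_cast Fin.val_injective.ne hij))
        exact_mod_cast this
      nlinarith
    have hlt : r < Metric.diam (univ : Set T) := by
      have h1 : (1 : ℝ) ≤ n := by exact_mod_cast hn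
      have : 4 * r ≤ d := by rw [← hdr]; exact div_le_self hd0.le h1
      linarith
    have hsum : ∑ j : Fin n, μ (ball (z j) r) ≤ μ univ := by
      rw [← tsum_fintype (L := .unconditional _), ← measure_iUnion hdisj fun j => measurableSet_ball]
      exact measure_mono (subset_univ _)
    have h3 : (n : ℝ≥0∞) * ENNReal.ofReal (aA * r ^ q) ≤ μ univ := by
      refine le_trans ?_ hsum
      calc _ = ∑ j : Fin n, ENNReal.ofReal (aA * r ^ q) := by simp
        _ ≤ _ := Finset.sum_le_sum fun j _ => (hA.2.2 (z j) r hr0 hlt).1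
    have h4 := ENNReal.toReal_mono (measure_ne_top μ univ) h3
    rw [ENNReal.toReal_mul, ENNReal.toReal_natCast, ENNReal.toReal_ofReal
      (mul_nonneg hA.1.le (by positivity))] at h4
    refine le_trans (le_of_eq ?_) h4
    have : r = d / 4 / n := by rw [hr]; field_simp
    rw [this, Real.div_rpow (by positivity) hn'.le, Real.rpow_sub hn', Real.rpow_one]
    field_simp
  have hlim : Tendsto (fun n : ℕ => aA * (d / 4) ^ q * (n : ℝ) ^ (1 - q)) atTop atTop :=
    Tendsto.const_mul_atTop (mul_pos hA.1 (by positivity))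
      ((tendsto_rpow_atTop (by linarith)).comp tendsto_natCast_atTop_atTop)
  obtain ⟨n, hn, hn0⟩ := ((hlim.eventually_gt_atTop (μ univ).toReal).and
    (eventually_gt_atTop 0)).exists
  exact (key n hn0).not_gt hn

end Ahlfors

/-! ### An Eilenberg type inequality for maps to the circle -/

section Coarea
variable {T : Type*} [MetricSpace T] [MeasurableSpace T] [BorelSpace T]

/-- The integrals of `ρ` over the fibres of `φ` have a measurable majorant of integral at
most `B`. -/
def FiberBound (φ : T → UnitAddCircle) (s : ℝ) (ρ : T → ℝ≥0∞) (B : ℝ≥0∞) : Prop :=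
  ∃ G : UnitAddCircle → ℝ≥0∞, Measurable G ∧
    (∀ t, ∫⁻ x in φ ⁻¹' {t}, ρ x ∂μH[s] ≤ G t) ∧ ∫⁻ t, G t ≤ B

variable {φ : T → UnitAddCircle} {s : ℝ}

lemma FiberBound.mono {ρ : T → ℝ≥0∞} {B B' : ℝ≥0∞} (h : FiberBound φ s ρ B) (hB : B ≤ B') :
    FiberBound φ s ρ B' := by
  obtain ⟨G, h1, h2, h3⟩ := h
  exact ⟨G, h1, h2, h3.trans hB⟩

lemma FiberBound.tsum {ρ : ℕ → T → ℝ≥0∞} {B : ℕ → ℝ≥0∞} (hρ : ∀ n, Measurable (ρ n))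
    (h : ∀ n, FiberBound φ s (ρ n) (B n)) : FiberBound φ s (fun x => ∑' n, ρ n x) (∑' n, B n) := by
  choose G h1 h2 h3 using h
  refine ⟨fun t => ∑' n, G n t, Measurable.tsum h1, fun t => ?_, ?_⟩
  · rw [lintegral_tsum fun n => (hρ n).aemeasurable]
    exact ENNReal.tsum_le_tsum fun n => h2 n t
  · rw [lintegral_tsum fun n => (h1 n).aemeasurable]
    exact ENNReal.tsum_le_tsum h3

lemma FiberBound.add {ρ₁ ρ₂ : T → ℝ≥0∞} {B₁ B₂ : ℝ≥0∞} (hρ : Measurable ρ₁)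
    (h₁ : FiberBound φ s ρ₁ B₁) (h₂ : FiberBound φ s ρ₂ B₂) :
    FiberBound φ s (ρ₁ + ρ₂) (B₁ + B₂) := by
  obtain ⟨G, h1, h2, h3⟩ := h₁
  obtain ⟨G', h1', h2', h3'⟩ := h₂
  refine ⟨fun t => G t + G' t, h1.add h1', fun t => ?_, ?_⟩
  · simp only [Pi.add_apply]
    rw [lintegral_add_left hρ]
    exact add_le_add (h2 t) (h2' t)
  · rw [lintegral_add_left h1]
    exact add_le_add h3 h3'

lemma FiberBound.iSup {ρ : ℕ → T → ℝ≥0∞} {B : ℝ≥0∞} (hρ : ∀ n, Measurable (ρ n))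
    (hmono : Monotone ρ) (h : ∀ n, FiberBound φ s (ρ n) B) :
    FiberBound φ s (fun x => ⨆ n, ρ n x) B := by
  choose G h1 h2 h3 using h
  refine ⟨fun t => liminf (fun n => G n t) atTop, Measurable.liminf h1, fun t => ?_, ?_⟩
  · rw [lintegral_iSup hρ hmono]
    refine iSup_le fun n => le_liminf_of_le (by isBoundedDefault) ?_
    filter_upwards [eventually_ge_atTop n] with m hm
    exact (lintegral_mono (hmono hm)).trans (h2 m t)
  · refine (lintegral_liminf_le h1).trans ?_
    refine liminf_le_of_le (by isBoundedDefault) fun b hb => ?_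
    obtain ⟨n, hn⟩ := hb.exists
    exact hn.trans (h3 n)

lemma FiberBound.const_mul {ρ : T → ℝ≥0∞} {B : ℝ≥0∞} (c : ℝ≥0∞) (hρ : Measurable ρ)
    (h : FiberBound φ s ρ B) : FiberBound φ s (fun x => c * ρ x) (c * B) := by
  obtain ⟨G, h1, h2, h3⟩ := h
  refine ⟨fun t => c * G t, h1.const_mul c, fun t => ?_, ?_⟩
  · rw [lintegral_const_mul c hρ]
    exact mul_le_mul' le_rfl (h2 t)
  · rw [lintegral_const_mul c h1]
    exact mul_le_mul' le_rfl h3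

lemma lintegral_fiber_indicator {E : Set T} (hE : MeasurableSet E)
    (t : UnitAddCircle) :
    ∫⁻ x in φ ⁻¹' {t}, E.indicator (fun _ => (1 : ℝ≥0∞)) x ∂μH[s] = μH[s] (E ∩ φ ⁻¹' {t}) := by
  rw [lintegral_indicator hE, lintegral_one, Measure.restrict_apply_univ,
    Measure.restrict_apply hE]

lemma ediam_closedBall_le (x : T) (r : ℝ) :
    ediam (closedBall x r) ≤ ENNReal.ofReal (2 * r) := by
  refine ediam_le fun y hy z hz => ?_
  rw [edist_dist]
  refine ENNReal.ofReal_le_ofReal ?_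
  have := dist_triangle_right y z x
  rw [mem_closedBall] at hy hz
  linarith

variable {μ : Measure T} {q aA AA : ℝ}

lemma fiberBound_indicator_of_subset_lipSet [CompactSpace T] [Nontrivial T] [IsFiniteMeasure μ]
    (hA : IsAhlforsRegular μ q aA AA) (hq : 1 ≤ q) {K : ℝ≥0} (hK : 0 < K)
    {δ : ℝ} (hδ : 0 < δ) {E : Set T} (hE : MeasurableSet E) (hEs : E ⊆ lipSet φ K δ) :
    FiberBound φ (q - 1) (E.indicator fun _ => 1) (ENNReal.ofReal (10 ^ q / aA) * (K * μ E)) := by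
  set D := Metric.diam (univ : Set T)
  have hD : 0 < D := diam_univ_pos
  have ha := hA.1
  have step : ∀ m : ℕ, ∃ u : Set T, ∃ r : T → ℝ, u.Countable ∧ u ⊆ E ∧
      (∀ b ∈ u, 0 < r b ∧ r b ≤ 1 / ((m : ℝ) + 1) ∧ 10 * r b ≤ δ ∧ r b < D) ∧
      (∀ a ∈ E, ∃ b ∈ u, a ∈ closedBall b (5 * r b)) ∧
      ∑' b : u, μ (closedBall (b : T) (r b)) ≤ μ E + ENNReal.ofReal (1 / ((m : ℝ) + 1)) := by
    intro m
    have hm : (0 : ℝ) < 1 / ((m : ℝ) + 1) := by positivity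
    obtain ⟨U, hEU, hU, hμU⟩ := E.exists_isOpen_le_add μ
      (ε := ENNReal.ofReal (1 / ((m : ℝ) + 1))) (by simpa using hm)
    have hr : ∀ x : T, ∃ r : ℝ, x ∈ E → 0 < r ∧ r ≤ 1 / ((m : ℝ) + 1) ∧ 10 * r ≤ δ ∧ r < D ∧
        closedBall x r ⊆ U := by
      intro x
      by_cases hx : x ∈ E
      · obtain ⟨ε, hε, hεU⟩ := Metric.nhds_basis_closedBall.mem_iff.1 (hU.mem_nhds (hEU hx))
        refine ⟨min (1 / ((m : ℝ) + 1)) (min (δ / 10) (min (D / 2) ε)), fun _ => ⟨by positivity,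
          min_le_left _ _, ?_, ?_, ?_⟩⟩
        · have : min (1 / ((m : ℝ) + 1)) (min (δ / 10) (min (D / 2) ε)) ≤ δ / 10 :=
            (min_le_right _ _).trans (min_le_left _ _)
          linarith
        · have : min (1 / ((m : ℝ) + 1)) (min (δ / 10) (min (D / 2) ε)) ≤ D / 2 :=
            (min_le_right _ _).trans ((min_le_right _ _).trans (min_le_left _ _))
          linarith
        · exact (closedBall_subset_closedBall ((min_le_right _ _).trans
            ((min_le_right _ _).trans (min_le_right _ _)))).trans hεU
      · exact ⟨0, fun h => absurd h hx⟩
    choose r hr using hr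
    obtain ⟨u, huE, hdisj, hcov⟩ := Vitali.exists_disjoint_subfamily_covering_enlargement_closedBall
      E (fun x => x) r (1 / ((m : ℝ) + 1)) (fun a ha => (hr a ha).2.1) 5 (by norm_num)
    have hcount : u.Countable := hdisj.countable_of_nonempty_interior fun b hb =>
      ⟨b, ball_subset_interior_closedBall (mem_ball_self (hr b (huE hb)).1)⟩
    refine ⟨u, r, hcount, huE, fun b hb => ?_, fun a ha => ?_, ?_⟩
    · obtain ⟨h1, h2, h3, h4, -⟩ := hr b (huE hb)
      exact ⟨h1, h2, h3, h4⟩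
    · obtain ⟨b, hb, hab⟩ := hcov a ha
      exact ⟨b, hb, hab (mem_closedBall_self (hr a ha).1.le)⟩
    · rw [← measure_biUnion hcount hdisj fun b _ => measurableSet_closedBall]
      refine (measure_mono (iUnion₂_subset fun b hb => ?_)).trans hμU
      exact (hr b (huE hb)).2.2.2.2
  choose u r hcount huE hr hcov hsum using step
  have hc : ∀ m, Countable (u m) := fun m => (hcount m).to_subtype
  let F : ∀ m, u m → Set UnitAddCircle := fun m b => closedBall (φ b) (5 * K * r m b)
  let w : ∀ m, u m → ℝ≥0∞ := fun m b => ENNReal.ofReal ((10 * r m b) ^ (q - 1))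
  let G : ℕ → UnitAddCircle → ℝ≥0∞ := fun m t => ∑' b : u m, (F m b).indicator (fun _ => w m b) t
  have hG : ∀ m, Measurable (G m) := fun m => Measurable.tsum fun b =>
    measurable_const.indicator measurableSet_closedBall
  refine ⟨fun t => liminf (fun m => G m t) atTop, Measurable.liminf hG, fun t => ?_, ?_⟩
  · rw [lintegral_fiber_indicator hE]
    have h0 : Tendsto (fun m : ℕ => ENNReal.ofReal (10 * (1 / ((m : ℝ) + 1)))) atTop (𝓝 0) := by
      rw [← ENNReal.ofReal_zero]
      refine ENNReal.tendsto_ofReal ?_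
      simpa using tendsto_one_div_add_atTop_nhds_zero_nat.const_mul (10 : ℝ)
    have key := Measure.hausdorffMeasure_le_liminf_tsum (q - 1) (E ∩ φ ⁻¹' {t})
      (l := atTop) (ι := fun m : ℕ => {b : u m | t ∈ F m b}) _ h0
      (fun m b => closedBall ((b : u m) : T) (5 * r m b)) ?_ ?_
    · refine key.trans (liminf_le_liminf (Eventually.of_forall fun m => ?_)
        (by isBoundedDefault) (by isBoundedDefault))
      calc _ ≤ ∑' b : {b : u m | t ∈ F m b}, w m b := by
            refine ENNReal.tsum_le_tsum fun b => ?_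
            have hb := hr m _ b.1.2
            simp only [w]
            rw [← ENNReal.ofReal_rpow_of_nonneg (by linarith [hb.1]) (by linarith)]
            refine ENNReal.rpow_le_rpow ((ediam_closedBall_le _ _).trans
              (le_of_eq ?_)) (by linarith)
            congr 1
            ring
        _ = G m t := by
            rw [tsum_subtype {b : u m | t ∈ F m b} (w m)]
            refine tsum_congr fun b => ?_
            by_cases h : t ∈ F m b <;> simp [h]
    · refine Eventually.of_forall fun m b => ?_
      have hb := hr m _ b.1.2
      refine (ediam_closedBall_le _ _).trans (ENNReal.ofReal_le_ofReal ?_)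
      linarith [hb.2.1]
    · refine Eventually.of_forall fun m x hx => ?_
      obtain ⟨b, hb, hxb⟩ := hcov m x hx.1
      have hb' := hr m b hb
      refine mem_iUnion.2 ⟨⟨⟨b, hb⟩, ?_⟩, hxb⟩
      have hxb' : dist x b ≤ 5 * r m b := hxb
      have := hEs (huE m hb) x (by linarith [hb'.1])
      have ht : φ x = t := hx.2
      change dist t (φ b) ≤ 5 * K * r m b
      rw [ht, edist_nndist, edist_nndist] at this
      have h2 : nndist (φ b) t ≤ K * nndist b x := by exact_mod_cast this
      have h3 : dist (φ b) t ≤ K * dist b x := by exact_mod_cast h2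
      rw [dist_comm t, mul_right_comm]
      rw [dist_comm b] at h3
      calc _ ≤ _ := h3
        _ ≤ K * (5 * r m b) := by gcongr
        _ = _ := by ring
  · have hGm : ∀ m : ℕ, ∫⁻ t, G m t ≤
        ENNReal.ofReal (10 ^ q / aA) * (K * (μ E + ENNReal.ofReal (1 / ((m : ℝ) + 1)))) := by
      intro m
      simp only [G]
      rw [lintegral_tsum fun b => (measurable_const.indicator measurableSet_closedBall).aemeasurable]
      calc _ ≤ ∑' b : u m, ENNReal.ofReal (10 ^ q / aA) * (K * μ (closedBall (b : T) (r m b))) := by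
            refine ENNReal.tsum_le_tsum fun b => ?_
            have hb := hr m b b.2
            have hb0 := hb.1
            rw [lintegral_indicator measurableSet_closedBall, lintegral_const,
              Measure.restrict_apply_univ, AddCircle.volume_closedBall]
            have h1 := hA.le_measure_closedBall (b : T) hb0 hb.2.2.2
            calc _ ≤ w m b * ENNReal.ofReal (2 * (5 * K * r m b)) := by
                  gcongr
                  exact min_le_right _ _
              _ = ENNReal.ofReal (10 ^ q / aA) * (K * ENNReal.ofReal (aA * r m b ^ q)) := by
                  simp only [w]
                  rw [← ENNReal.ofReal_coe_nnreal, ← ENNReal.ofReal_mul (by positivity),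
                    ← ENNReal.ofReal_mul (by positivity), ← ENNReal.ofReal_mul (by positivity)]
                  congr 1
                  have : 2 * (5 * (K : ℝ) * r m b) = K * (10 * r m b) := by ring
                  rw [this, mul_left_comm, ← Real.rpow_add_one (by positivity), sub_add_cancel,
                    Real.mul_rpow (by norm_num) hb0.le]
                  field_simp
              _ ≤ _ := by gcongr
        _ = ENNReal.ofReal (10 ^ q / aA) * (K * ∑' b : u m, μ (closedBall (b : T) (r m b))) := by
            rw [ENNReal.tsum_mul_left, ENNReal.tsum_mul_left]
        _ ≤ _ := by
            gcongr
            exact hsum m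
    refine (lintegral_liminf_le hG).trans ((liminf_le_liminf (Eventually.of_forall hGm)
      (by isBoundedDefault) (by isBoundedDefault)).trans (le_of_eq ?_))
    refine Tendsto.liminf_eq ?_
    refine ENNReal.Tendsto.const_mul (ENNReal.Tendsto.const_mul ?_ (Or.inr (by simp)))
      (Or.inr (by simp))
    have h0 : Tendsto (fun m : ℕ => ENNReal.ofReal (1 / ((m : ℝ) + 1))) atTop (𝓝 0) := by
      rw [← ENNReal.ofReal_zero]
      exact ENNReal.tendsto_ofReal tendsto_one_div_add_atTop_nhds_zero_nat
    simpa using tendsto_const_nhds.add h0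

end Coarea

section LowerBound
variable {T : Type*} [MetricSpace T] [MeasurableSpace T] [BorelSpace T] [CompactSpace T]
  [Nontrivial T] {φ : T → UnitAddCircle} {μ : Measure T} [IsFiniteMeasure μ] {q aA AA : ℝ}

lemma fiberBound_indicator (hA : IsAhlforsRegular μ q aA AA) (hq : 1 ≤ q) {L : ℝ≥0}
    (hφ : LipschitzWith L φ) {η : ℝ≥0} (hη : 0 < η) {E : Set T} (hE : MeasurableSet E) :
    FiberBound φ (q - 1) (E.indicator fun _ => 1)
      (ENNReal.ofReal (10 ^ q / aA) * ∫⁻ x in E, (pLip φ x + η) ∂μ) := by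
  have hm := measurable_pLip hφ.continuous
  let F : ℕ → Set T := fun j => pLip φ ⁻¹' Ico (j * η : ℝ≥0) ((j + 1 : ℕ) * η : ℝ≥0)
  have hF : ∀ j, MeasurableSet (F j) := fun j => hm measurableSet_Ico
  have hdisj : Pairwise (Function.onFun Disjoint F) := by
    intro i j hij
    refine Disjoint.preimage _ (Set.disjoint_left.2 fun z hz hz' => ?_)
    have h1 := hz.1.trans_lt hz'.2
    have h2 := hz'.1.trans_lt hz.2
    rw [ENNReal.coe_lt_coe, mul_lt_mul_iff_of_pos_right hη, Nat.cast_lt] at h1 h2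
    omega
  have hcov : ⋃ j, F j = univ := by
    refine eq_univ_of_forall fun x => ?_
    have hx : pLip φ x ≠ ⊤ := ne_top_of_le_ne_top ENNReal.coe_ne_top (pLip_le_of_lipschitz hφ x)
    refine mem_iUnion.2 ⟨⌊(pLip φ x).toNNReal / η⌋₊, ?_, ?_⟩
    · rw [← ENNReal.coe_toNNReal hx, ENNReal.coe_le_coe]
      simp only [ENNReal.toNNReal_coe]
      rw [← le_div_iff₀ hη]
      exact Nat.floor_le zero_le
    · rw [← ENNReal.coe_toNNReal hx, ENNReal.coe_lt_coe]
      simp only [ENNReal.toNNReal_coe]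
      rw [← div_lt_iff₀ hη]
      push_cast
      exact Nat.lt_floor_add_one _
  have hEF : ∀ j, MeasurableSet (E ∩ F j) := fun j => hE.inter (hF j)
  have hpiece : ∀ j, FiberBound φ (q - 1) ((E ∩ F j).indicator fun _ => 1)
      (ENNReal.ofReal (10 ^ q / aA) * ∫⁻ x in E ∩ F j, (pLip φ x + η) ∂μ) := by
    intro j
    set K : ℝ≥0 := (j + 1 : ℕ) * η
    have hK : 0 < K := by positivity
    let A : ℕ → Set T := fun n => (E ∩ F j) ∩ lipSet φ K (1 / ((n : ℝ) + 1))
    have hAm : ∀ n, MeasurableSet (A n) := fun n =>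
      (hEF j).inter (isClosed_lipSet hφ.continuous _ _).measurableSet
    have hAmono : Monotone A := by
      refine fun n m h => inter_subset_inter_right _ (lipSet_anti ?_)
      exact Nat.one_div_le_one_div h
    have hsup : ((E ∩ F j).indicator fun _ => (1 : ℝ≥0∞)) =
        fun x => ⨆ n, (A n).indicator (fun _ => (1 : ℝ≥0∞)) x := by
      funext x
      by_cases hx : x ∈ E ∩ F j
      · obtain ⟨δ, hδ, hy⟩ := exists_local_of_pLip_lt hx.2.2
        obtain ⟨n, hn⟩ := exists_nat_one_div_lt hδ
        have hxn : x ∈ A n := ⟨hx, fun y hy' => hy y (hy'.trans hn)⟩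
        rw [indicator_of_mem hx]
        refine le_antisymm (le_iSup_of_le n (by rw [indicator_of_mem hxn])) (iSup_le fun m => ?_)
        exact indicator_le_self' (fun _ _ => zero_le) x
      · rw [indicator_of_notMem hx]
        refine (bot_unique (iSup_le fun n => ?_)).symm
        rw [indicator_of_notMem fun h => hx h.1]
        exact le_rfl
    rw [hsup]
    refine FiberBound.iSup (fun n => measurable_const.indicator (hAm n))
      (fun n m h x => indicator_le_indicator_of_subset (hAmono h) (fun _ => zero_le) x) fun n => ?_
    refine (fiberBound_indicator_of_subset_lipSet hA hq hK (by positivity) (hAm n)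
      inter_subset_right).mono ?_
    gcongr
    calc (K : ℝ≥0∞) * μ (A n) ≤ K * μ (E ∩ F j) := by gcongr; exact inter_subset_left
      _ = ∫⁻ _ in E ∩ F j, (K : ℝ≥0∞) ∂μ := by simp
      _ ≤ _ := by
        refine setLIntegral_mono' (hEF j) fun x hx => ?_
        have : K = j * η + η := by simp only [K]; push_cast; ring
        rw [this, ENNReal.coe_add]
        gcongr
        exact hx.2.1
  have htot := FiberBound.tsum (fun j => measurable_const.indicator (hEF j)) hpiece
  have hsum1 : (fun x => ∑' j, (E ∩ F j).indicator (fun _ => (1 : ℝ≥0∞)) x) =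
      E.indicator fun _ => 1 := by
    funext x
    obtain ⟨i, hi⟩ := mem_iUnion.1 (hcov.symm ▸ mem_univ x : x ∈ ⋃ j, F j)
    rw [tsum_eq_single i]
    · by_cases hx : x ∈ E
      · rw [indicator_of_mem hx, indicator_of_mem (show x ∈ E ∩ F i from ⟨hx, hi⟩)]
      · rw [indicator_of_notMem hx, indicator_of_notMem fun h => hx h.1]
    · intro j hj
      exact indicator_of_notMem (fun h => (disjoint_left.1 (hdisj hj)) h.2 hi) _
  have hsum2 : ∑' j, ENNReal.ofReal (10 ^ q / aA) * ∫⁻ x in E ∩ F j, (pLip φ x + η) ∂μ =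
      ENNReal.ofReal (10 ^ q / aA) * ∫⁻ x in E, (pLip φ x + η) ∂μ := by
    rw [ENNReal.tsum_mul_left, ← lintegral_iUnion hEF, ← inter_iUnion, hcov, inter_univ]
    exact fun i j hij => (hdisj hij).mono inter_subset_right inter_subset_right
  rw [hsum1, hsum2] at htot
  exact htot

lemma fiberBound_of_lipschitz (hA : IsAhlforsRegular μ q aA AA) (hq : 1 ≤ q) {L : ℝ≥0}
    (hφ : LipschitzWith L φ) {η : ℝ≥0} (hη : 0 < η) {ρ : T → ℝ≥0∞} (hρ : Measurable ρ) :
    FiberBound φ (q - 1) ρ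
      (ENNReal.ofReal (10 ^ q / aA) * ∫⁻ x, ρ x * (pLip φ x + η) ∂μ) := by
  have hm : Measurable fun x => pLip φ x + (η : ℝ≥0∞) :=
    (measurable_pLip hφ.continuous).add_const _
  refine Measurable.ennreal_induction (motive := fun ρ => FiberBound φ (q - 1) ρ
    (ENNReal.ofReal (10 ^ q / aA) * ∫⁻ x, ρ x * (pLip φ x + η) ∂μ)) ?_ ?_ ?_ hρ
  · intro c s hs
    have h := (fiberBound_indicator hA hq hφ hη hs).const_mul c (measurable_const.indicator hs)
    have e1 : (fun x => c * s.indicator (fun _ => (1 : ℝ≥0∞)) x) = s.indicator fun _ => c := by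
      funext x
      by_cases hx : x ∈ s <;> simp [hx]
    rw [e1] at h
    refine h.mono (le_of_eq ?_)
    rw [mul_left_comm, ← lintegral_const_mul c hm, ← lintegral_indicator hs]
    congr 1
    refine lintegral_congr fun x => ?_
    by_cases hx : x ∈ s <;> simp [hx]
  · intro f g _ hf _ h1 h2
    refine (FiberBound.add hf h1 h2).mono (le_of_eq ?_)
    rw [← mul_add, ← lintegral_add_left (f := fun x => f x * (pLip φ x + η)) (hf.mul hm)]
    simp only [Pi.add_apply, add_mul]
  · intro f hf hmono h
    refine FiberBound.iSup hf hmono fun n => (h n).mono ?_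
    gcongr with x
    exact le_iSup (fun n => f n x) n

lemma one_le_of_admissible (hA : IsAhlforsRegular μ q aA AA) (hq : 1 ≤ q) {x₀ : T}
    {α₀ : Path x₀ x₀} (hφ : DegOneLip x₀ α₀ φ) {ρ : T → ℝ≥0∞} (hρ : Measurable ρ)
    (hadm : ∀ S ∈ SurfacesH (T := T) q x₀ α₀, 1 ≤ ∫⁻ x in S, ρ x ∂μH[q - 1])
    (hfin : ∫⁻ x, ρ x ∂μ ≠ ⊤) :
    1 ≤ ENNReal.ofReal (10 ^ q / aA) * ∫⁻ x, ρ x * pLip φ x ∂μ := by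
  obtain ⟨⟨L, hL⟩, hd⟩ := hφ
  have hm := measurable_pLip hL.continuous
  have key : ∀ η : ℝ≥0, 0 < η → 1 ≤ ENNReal.ofReal (10 ^ q / aA) *
      (∫⁻ x, ρ x * pLip φ x ∂μ + η * ∫⁻ x, ρ x ∂μ) := by
    intro η hη
    obtain ⟨G₁, hG₁, hG₁', hG₁i⟩ := fiberBound_of_lipschitz hA hq hL hη (ρ := fun _ => 1)
      measurable_const
    have hlt : ∀ᵐ t, G₁ t < ⊤ := by
      refine ae_lt_top hG₁ (ne_top_of_le_ne_top ?_ hG₁i)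
      refine ENNReal.mul_ne_top (by simp) (ne_of_lt ?_)
      calc _ ≤ ∫⁻ _, ((L + η : ℝ≥0) : ℝ≥0∞) ∂μ := by
            refine lintegral_mono fun x => ?_
            rw [one_mul, ENNReal.coe_add]
            gcongr
            exact pLip_le_of_lipschitz hL x
        _ < ⊤ := by
            rw [lintegral_const]
            exact ENNReal.mul_lt_top ENNReal.coe_lt_top (measure_lt_top _ _)
    obtain ⟨G, hG, hG', hGi⟩ := fiberBound_of_lipschitz hA hq hL hη hρ
    have h1 : ∀ᵐ t, 1 ≤ G t := by
      filter_upwards [hlt] with t ht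
      refine le_trans (hadm (φ ⁻¹' {t}) ?_) (hG' t)
      refine ⟨fun x => φ x + ((Classical.choose (QuotientAddGroup.mk_surjective (-t)) : ℝ) :
        UnitAddCircle), ?_, ?_, ?_⟩
      · exact hd.add_coe continuous_const fun x => rfl
      · have : ((Classical.choose (QuotientAddGroup.mk_surjective (-t)) : ℝ) :
          UnitAddCircle) = -t := Classical.choose_spec (QuotientAddGroup.mk_surjective (-t))
        ext x
        simp [this, ← sub_eq_add_neg, sub_eq_zero]
      · have := (hG₁' t).trans_lt ht
        simpa using this
    have h2 : (1 : ℝ≥0∞) ≤ ∫⁻ t, G t := by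
      calc (1 : ℝ≥0∞) = ∫⁻ _ : UnitAddCircle, 1 := by simp
        _ ≤ _ := lintegral_mono_ae h1
    refine (h2.trans hGi).trans (le_of_eq ?_)
    congr 1
    simp only [mul_add]
    rw [lintegral_add_left (f := fun x => ρ x * pLip φ x) (hρ.mul hm), lintegral_mul_const _ hρ, mul_comm (η : ℝ≥0∞)]
  have hlim : Tendsto (fun η : ℝ≥0 => ENNReal.ofReal (10 ^ q / aA) *
      (∫⁻ x, ρ x * pLip φ x ∂μ + η * ∫⁻ x, ρ x ∂μ)) (𝓝[>] 0)
      (𝓝 (ENNReal.ofReal (10 ^ q / aA) *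
        (∫⁻ x, ρ x * pLip φ x ∂μ + (0 : ℝ≥0) * ∫⁻ x, ρ x ∂μ))) := by
    have h0 : Tendsto (fun ε : ℝ≥0 => (ε : ℝ≥0∞)) (𝓝[>] 0) (𝓝 ((0 : ℝ≥0) : ℝ≥0∞)) :=
      (ENNReal.continuous_coe.tendsto _).mono_left nhdsWithin_le_nhds
    exact ENNReal.Tendsto.const_mul (tendsto_const_nhds.add
      (ENNReal.Tendsto.mul_const h0 (Or.inr hfin))) (Or.inr (by simp))
  simp only [ENNReal.coe_zero, zero_mul, add_zero] at hlim
  refine ge_of_tendsto hlim ?_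
  filter_upwards [self_mem_nhdsWithin] with η hη using key η hη

lemma one_le_capLip_mul_surfModH (hA : IsAhlforsRegular μ q aA AA) (hq : 1 ≤ q) {x₀ : T}
    {α₀ : Path x₀ x₀} {p p' : ℝ} (hp : p.HolderConjugate p') (hφ : DegOneLip x₀ α₀ φ)
    {ρ : T → ℝ≥0∞} (hρ : Measurable ρ)
    (hadm : ∀ S ∈ SurfacesH (T := T) q x₀ α₀, 1 ≤ ∫⁻ x in S, ρ x ∂μH[q - 1])
    (hfin : ∫⁻ x, ρ x ^ p' ∂μ ≠ ⊤) :
    1 ≤ ENNReal.ofReal (10 ^ q / aA) *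
      ((∫⁻ x, pLip φ x ^ p ∂μ) ^ (1 / p) * (∫⁻ x, ρ x ^ p' ∂μ) ^ (1 / p')) := by
  have hfin' : ∫⁻ x, ρ x ∂μ ≠ ⊤ := by
    refine ne_of_lt ?_
    calc ∫⁻ x, ρ x ∂μ ≤ ∫⁻ x, (1 + ρ x ^ p') ∂μ := by
          refine lintegral_mono fun x => ?_
          rcases le_total (ρ x) 1 with h | h
          · exact h.trans le_self_add
          · refine le_trans ?_ le_add_self
            simpa using ENNReal.rpow_le_rpow_of_exponent_le h hp.symm.lt.le
      _ < ⊤ := by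
          rw [lintegral_add_left measurable_const, lintegral_one]
          exact ENNReal.add_lt_top.2 ⟨measure_lt_top _ _, hfin.lt_top⟩
  refine (one_le_of_admissible hA hq hφ hρ hadm hfin').trans ?_
  gcongr
  have hL := hφ.1
  obtain ⟨L, hL⟩ := hL
  have := ENNReal.lintegral_mul_le_Lp_mul_Lq μ hp (measurable_pLip hL.continuous).aemeasurable
    hρ.aemeasurable
  simpa [mul_comm] using this

end LowerBound

/-! ### Minimizers of the `p`-energy over convex families -/

lemma half_add_rpow_le {p : ℝ} (hp : 1 < p) {a b : ℝ} (ha : 0 ≤ a) (hb : 0 ≤ b) :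
    ((a + b) / 2) ^ p ≤ (a ^ p + b ^ p) / 2 := by
  have := (convexOn_rpow hp.le).2 (show a ∈ Ici 0 from ha) (show b ∈ Ici 0 from hb)
    (by norm_num : (0 : ℝ) ≤ 1 / 2) (by norm_num : (0 : ℝ) ≤ 1 / 2) (by norm_num)
  simp only [smul_eq_mul] at this
  calc _ = (1 / 2 * a + 1 / 2 * b) ^ p := by ring_nf
    _ ≤ _ := this
    _ = _ := by ring

lemma exists_abs_sub_rpow_le {p : ℝ} (hp : 1 < p) {ε : ℝ} (hε : 0 < ε) :
    ∃ C : ℝ, 0 ≤ C ∧ ∀ a b : ℝ, 0 ≤ a → 0 ≤ b →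
      |a - b| ^ p ≤ ε * (a ^ p + b ^ p) + C * ((a ^ p + b ^ p) / 2 - ((a + b) / 2) ^ p) := by
  have hp0 : 0 < p := by linarith
  let h : ℝ → ℝ := fun s => (1 + s ^ p) / 2 - ((1 + s) / 2) ^ p
  have hcont : Continuous h := by
    have h1 : Continuous fun s : ℝ => s ^ p := Real.continuous_rpow_const hp0.le
    have h2 : Continuous fun s : ℝ => ((1 + s) / 2) ^ p := h1.comp (by fun_prop)
    fun_prop
  let K : Set ℝ := Icc 0 1 ∩ {s | ε ≤ (1 - s) ^ p}
  have hK : IsCompact K := isCompact_Icc.inter_right (isClosed_le continuous_const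
    ((Real.continuous_rpow_const hp0.le).comp (by fun_prop)))
  have hpos : ∀ s ∈ K, 0 < h s := by
    rintro s ⟨⟨hs0, hs1⟩, hs⟩
    have hne : (1 : ℝ) ≠ s := by
      rintro rfl
      have hs : ε ≤ ((1 : ℝ) - 1) ^ p := hs
      rw [sub_self, Real.zero_rpow hp0.ne'] at hs
      linarith
    have := (strictConvexOn_rpow hp).2 (mem_Ici.2 (zero_le_one (α := ℝ)))
      (show s ∈ Ici 0 from hs0) hne (by norm_num : (0 : ℝ) < 1 / 2)
      (by norm_num : (0 : ℝ) < 1 / 2) (by norm_num)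
    simp only [smul_eq_mul, Real.one_rpow] at this
    have e : (1 + s) / 2 = 1 / 2 * 1 + 1 / 2 * s := by ring
    simp only [h, e]
    linarith
  obtain ⟨C, hC, hCK⟩ : ∃ C : ℝ, 0 ≤ C ∧ ∀ s ∈ K, 1 ≤ C * h s := by
    rcases K.eq_empty_or_nonempty with hK0 | hK0
    · exact ⟨0, le_rfl, by simp [hK0]⟩
    · obtain ⟨s₀, hs₀, hmin⟩ := hK.exists_isMinOn hK0 hcont.continuousOn
      refine ⟨1 / h s₀, by have := hpos s₀ hs₀; positivity, fun s hs => ?_⟩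
      rw [div_mul_eq_mul_div, one_mul, one_le_div (hpos s₀ hs₀)]
      exact hmin hs
  have main : ∀ a b : ℝ, 0 ≤ b → b ≤ a →
      |a - b| ^ p ≤ ε * (a ^ p + b ^ p) + C * ((a ^ p + b ^ p) / 2 - ((a + b) / 2) ^ p) := by
    intro a b hb hba
    rcases (hb.trans hba).eq_or_lt with ha | ha
    · obtain rfl : b = 0 := by linarith
      subst ha
      simp [Real.zero_rpow hp0.ne']
    · set s := b / a
      have hs0 : 0 ≤ s := by positivity
      have hs1 : s ≤ 1 := div_le_one_of_le₀ hba ha.le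
      have hb' : b = a * s := by simp only [s]; field_simp
      have hkey : (1 - s) ^ p ≤ ε * (1 + s ^ p) + C * h s := by
        have hsp : 0 ≤ s ^ p := by positivity
        by_cases hs : ε ≤ (1 - s) ^ p
        · have h1 := hCK s ⟨⟨hs0, hs1⟩, hs⟩
          have h2 : (1 - s) ^ p ≤ 1 := Real.rpow_le_one (by linarith) (by linarith) hp0.le
          have : 0 ≤ ε * (1 + s ^ p) := by positivity
          linarith
        · have h1 : 0 ≤ h s := by
            have := half_add_rpow_le hp zero_le_one hs0
            simp only [Real.one_rpow] at this
            simp only [h]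
            linarith
          have h2 : 0 ≤ C * h s := by positivity
          have h3 : 0 ≤ ε * s ^ p := by positivity
          rw [mul_add]
          linarith
      have hap : 0 ≤ a ^ p := by positivity
      have e1 : |a - b| ^ p = a ^ p * (1 - s) ^ p := by
        rw [abs_of_nonneg (by linarith), ← Real.mul_rpow ha.le (by linarith), mul_sub, mul_one,
          ← hb']
      have e2 : b ^ p = a ^ p * s ^ p := by rw [← Real.mul_rpow ha.le hs0, ← hb']
      have e3 : ((a + b) / 2) ^ p = a ^ p * ((1 + s) / 2) ^ p := by
        rw [← Real.mul_rpow ha.le (by positivity)]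
        congr 1
        rw [hb']
        ring
      rw [e1, e2, e3]
      have := mul_le_mul_of_nonneg_left hkey hap
      simp only [h] at this
      linarith
  refine ⟨C, hC, fun a b ha hb => ?_⟩
  rcases le_total b a with hab | hab
  · exact main a b hb hab
  · have := main b a ha hab
    rwa [abs_sub_comm, add_comm (b ^ p), add_comm b] at this

section Extremal
variable {α : Type*} [MeasurableSpace α] {μ : Measure α} {p p' : ℝ}

lemma le_integral_of_minimizer (hp : p.HolderConjugate p') {u f : α → ℝ} (hu : Measurable u)
    (hu0 : ∀ x, 0 ≤ u x) (hup : Integrable (fun x => u x ^ p) μ) (hf : Measurable f)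
    (hf0 : ∀ x, 0 ≤ f x) (hfp : Integrable (fun x => f x ^ p) μ)
    (h : ∀ t ∈ Ioo (0 : ℝ) 1, ∫ x, u x ^ p ∂μ ≤ ∫ x, ((1 - t) * u x + t * f x) ^ p ∂μ) :
    Integrable (fun x => u x ^ (p - 1) * f x) μ ∧
      ∫ x, u x ^ p ∂μ ≤ ∫ x, u x ^ (p - 1) * f x ∂μ := by
  have hp0 := hp.pos
  have hp1 : 0 < p - 1 := by linarith [hp.lt]
  have hpow : ∀ {v : α → ℝ}, Measurable v → ∀ r : ℝ, Measurable fun x => v x ^ r :=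
    fun hv r => hv.pow_const r
  have hsplit : ∀ {a : ℝ}, 0 ≤ a → a ^ (p - 1) * a = a ^ p := fun {a} ha => by
    rw [← Real.rpow_add_one' ha (by linarith), sub_add_cancel]
  -- a common integrable majorant
  have hdom : Integrable (fun x => 2 ^ p * (u x ^ p + f x ^ p)) μ := (hup.add hfp).const_mul _
  have hle : ∀ x, (u x + f x) ^ p ≤ 2 ^ p * (u x ^ p + f x ^ p) := by
    intro x
    have := half_add_rpow_le hp.lt (hu0 x) (hf0 x)
    have e : (u x + f x) ^ p = 2 ^ p * ((u x + f x) / 2) ^ p := by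
      rw [← Real.mul_rpow (by norm_num) (by linarith [hu0 x, hf0 x])]
      congr 1
      ring
    rw [e]
    gcongr
    have h1 := Real.rpow_nonneg (hu0 x) p
    have h2 := Real.rpow_nonneg (hf0 x) p
    linarith
  have hle2 : ∀ x v w, 0 ≤ v → 0 ≤ w → v ≤ u x + f x → w ≤ u x + f x →
      v ^ (p - 1) * w ≤ 2 ^ p * (u x ^ p + f x ^ p) := by
    intro x v w hv hw hvu hwu
    refine le_trans ?_ (hle x)
    rw [← hsplit (by linarith [hu0 x, hf0 x])]
    gcongr
    exact Real.rpow_nonneg (by linarith [hu0 x, hf0 x]) _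
  let v : ℝ → α → ℝ := fun t x => (1 - t) * u x + t * f x
  have hvm : ∀ t, Measurable (v t) := fun t => (hu.const_mul _).add (hf.const_mul _)
  have hv0 : ∀ t ∈ Icc (0 : ℝ) 1, ∀ x, 0 ≤ v t x := fun t ht x =>
    add_nonneg (mul_nonneg (by linarith [ht.2]) (hu0 x)) (mul_nonneg ht.1 (hf0 x))
  have hvle : ∀ t ∈ Icc (0 : ℝ) 1, ∀ x, v t x ≤ u x + f x := fun t ht x => by
    have h1 := hu0 x
    have h2 := hf0 x
    have := ht.1
    have := ht.2
    simp only [v]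
    nlinarith
  have hInt : ∀ t ∈ Icc (0 : ℝ) 1, ∀ w : α → ℝ, Measurable w → (∀ x, 0 ≤ w x) →
      (∀ x, w x ≤ u x + f x) → Integrable (fun x => v t x ^ (p - 1) * w x) μ := by
    intro t ht w hw hw0 hwle
    refine hdom.mono' ((hpow (hvm t) _).mul hw).aestronglyMeasurable (ae_of_all _ fun x => ?_)
    rw [Real.norm_of_nonneg (mul_nonneg (Real.rpow_nonneg (hv0 t ht x) _) (hw0 x))]
    exact hle2 x _ _ (hv0 t ht x) (hw0 x) (hvle t ht x) (hwle x)
  have hule : ∀ x, u x ≤ u x + f x := fun x => by linarith [hf0 x]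
  have hfle : ∀ x, f x ≤ u x + f x := fun x => by linarith [hu0 x]
  have hvz : v 0 = u := by funext x; simp [v]
  have key : ∀ t ∈ Ioo (0 : ℝ) 1, 0 ≤ ∫ x, (v t x ^ (p - 1) * f x - v t x ^ (p - 1) * u x) ∂μ := by
    intro t ht
    have ht' : t ∈ Icc (0 : ℝ) 1 := ⟨ht.1.le, ht.2.le⟩
    have hvp : Integrable (fun x => v t x ^ p) μ := by
      have := hInt t ht' (v t) (hvm t) (hv0 t ht') (hvle t ht')
      refine this.congr (ae_of_all _ fun x => ?_)
      exact hsplit (hv0 t ht' x)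
    have h1 : 0 ≤ ∫ x, (v t x ^ p - u x ^ p) / p ∂μ := by
      rw [integral_div, integral_sub hvp hup]
      have := h t ht
      exact div_nonneg (by simpa [v] using this) hp0.le
    have h2 : ∫ x, (v t x ^ p - u x ^ p) / p ∂μ ≤
        ∫ x, t * (v t x ^ (p - 1) * f x - v t x ^ (p - 1) * u x) ∂μ := by
      refine integral_mono ((hvp.sub hup).div_const p)
        (((hInt t ht' f hf hf0 hfle).sub (hInt t ht' u hu hu0 hule)).const_mul t) fun x => ?_
      have hy := Real.young_inequality_of_nonneg (hu0 x)
        (Real.rpow_nonneg (hv0 t ht' x) (p - 1)) hp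
      rw [← Real.rpow_mul (hv0 t ht' x), hp.sub_one_mul_conj] at hy
      have e1 := hsplit (hv0 t ht' x)
      have e2 : v t x ^ (p - 1) * v t x =
          v t x ^ (p - 1) * u x + t * (v t x ^ (p - 1) * f x - v t x ^ (p - 1) * u x) := by
        simp only [v]
        ring
      have e3 : v t x ^ p / p' = v t x ^ p - v t x ^ p / p := by
        have := hp.inv_add_inv_eq_one
        rw [div_eq_mul_inv, div_eq_mul_inv, ← mul_one_sub]
        congr 1
        linarith
      change (v t x ^ p - u x ^ p) / p ≤ t * (v t x ^ (p - 1) * f x - v t x ^ (p - 1) * u x)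
      rw [sub_div]
      linarith
    rw [integral_const_mul] at h2
    exact nonneg_of_mul_nonneg_right (h1.trans h2) ht.1
  have hI0 : (0 : ℝ) ∈ Icc (0 : ℝ) 1 := by simp
  have i1 := hInt 0 hI0 f hf hf0 hfle
  have i2 := hInt 0 hI0 u hu hu0 hule
  rw [hvz] at i1 i2
  refine ⟨i1, ?_⟩
  have hlim : Tendsto (fun t => ∫ x, (v t x ^ (p - 1) * f x - v t x ^ (p - 1) * u x) ∂μ)
      (𝓝[>] (0 : ℝ)) (𝓝 (∫ x, (v 0 x ^ (p - 1) * f x - v 0 x ^ (p - 1) * u x) ∂μ)) := by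
    refine tendsto_integral_filter_of_dominated_convergence
      (fun x => 2 * (2 ^ p * (u x ^ p + f x ^ p))) ?_ ?_ (hdom.const_mul 2) ?_
    · exact Eventually.of_forall fun t => (((hpow (hvm t) _).mul hf).sub
        ((hpow (hvm t) _).mul hu)).aestronglyMeasurable
    · filter_upwards [Ioo_mem_nhdsGT one_pos] with t ht
      have ht' : t ∈ Icc (0 : ℝ) 1 := ⟨ht.1.le, ht.2.le⟩
      refine ae_of_all _ fun x => ?_
      have n1 := hle2 x _ _ (hv0 t ht' x) (hf0 x) (hvle t ht' x) (hfle x)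
      have n2 := hle2 x _ _ (hv0 t ht' x) (hu0 x) (hvle t ht' x) (hule x)
      have n3 := mul_nonneg (Real.rpow_nonneg (hv0 t ht' x) (p - 1)) (hf0 x)
      have n4 := mul_nonneg (Real.rpow_nonneg (hv0 t ht' x) (p - 1)) (hu0 x)
      rw [Real.norm_eq_abs, abs_le]
      constructor <;> linarith
    · refine ae_of_all _ fun x => ?_
      have hc : Continuous fun t => v t x ^ (p - 1) * f x - v t x ^ (p - 1) * u x := by
        have : Continuous fun t => v t x ^ (p - 1) :=
          (Real.continuous_rpow_const hp1.le).comp (by simp only [v]; fun_prop)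
        fun_prop
      exact (hc.tendsto 0).mono_left nhdsWithin_le_nhds
  have h0 : 0 ≤ ∫ x, (v 0 x ^ (p - 1) * f x - v 0 x ^ (p - 1) * u x) ∂μ := by
    refine ge_of_tendsto hlim ?_
    filter_upwards [Ioo_mem_nhdsGT one_pos] with t ht using key t ht
  rw [hvz, integral_sub i1 i2] at h0
  have : ∫ x, u x ^ (p - 1) * u x ∂μ = ∫ x, u x ^ p ∂μ :=
    integral_congr_ae (ae_of_all _ fun x => hsplit (hu0 x))
  linarith

end Extremal

section Minimizer
variable {α : Type*} [MeasurableSpace α] {μ : Measure α} {p : ℝ}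

lemma integrable_abs_rpow (hp : 0 < p) {f : α → ℝ} (hf : MemLp f (ENNReal.ofReal p) μ) :
    Integrable (fun x => |f x| ^ p) μ := by
  have := (integrable_norm_rpow_iff hf.1 (by simpa using hp) ENNReal.ofReal_ne_top).2 hf
  simpa [ENNReal.toReal_ofReal hp.le] using this

lemma norm_toLp_rpow (hp : 0 < p) {f : α → ℝ} (hf : MemLp f (ENNReal.ofReal p) μ) :
    ‖hf.toLp f‖ ^ p = ∫ x, |f x| ^ p ∂μ := by
  rw [Lp.norm_toLp, toReal_eLpNorm hf.1,
    lpNorm_eq_integral_norm_rpow_toReal (by simpa using hp) ENNReal.ofReal_ne_top hf.1,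
    ENNReal.toReal_ofReal hp.le, ← Real.rpow_mul (integral_nonneg fun x => by positivity),
    inv_mul_cancel₀ hp.ne', Real.rpow_one]
  rfl

lemma exists_minimizer (hp : 1 < p) {F : Set (α → ℝ)} (hne : F.Nonempty)
    (h0 : ∀ f ∈ F, ∀ x, 0 ≤ f x) (hLp : ∀ f ∈ F, MemLp f (ENNReal.ofReal p) μ)
    (hconv : ∀ f ∈ F, ∀ g ∈ F, ∀ t ∈ Icc (0 : ℝ) 1, ∃ k ∈ F, ∀ x, k x ≤ (1 - t) * f x + t * g x) :
    ∃ u : α → ℝ, Measurable u ∧ (∀ x, 0 ≤ u x) ∧ Integrable (fun x => u x ^ p) μ ∧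
      (∀ ε > 0, ∃ f ∈ F, ∫ x, f x ^ p ∂μ < ∫ x, u x ^ p ∂μ + ε) ∧
      (∀ f ∈ F, ∫ x, u x ^ p ∂μ ≤ ∫ x, f x ^ p ∂μ) ∧
      ∀ f ∈ F, ∀ t ∈ Ioo (0 : ℝ) 1,
        ∫ x, u x ^ p ∂μ ≤ ∫ x, ((1 - t) * u x + t * f x) ^ p ∂μ := by
  have hp0 : 0 < p := by linarith
  have hfact : Fact (1 ≤ ENNReal.ofReal p) := ⟨by simpa using hp.le⟩
  have hI : ∀ f ∈ F, ∫ x, |f x| ^ p ∂μ = ∫ x, f x ^ p ∂μ := fun f hf =>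
    integral_congr_ae (ae_of_all _ fun x => by simp only [abs_of_nonneg (h0 f hf x)])
  let J : (α → ℝ) → ℝ := fun f => ∫ x, f x ^ p ∂μ
  have hJ0 : ∀ f ∈ F, 0 ≤ J f := fun f hf => integral_nonneg fun x => Real.rpow_nonneg (h0 f hf x) p
  have hbdd : BddBelow (J '' F) := ⟨0, by rintro _ ⟨f, hf, rfl⟩; exact hJ0 f hf⟩
  set m := sInf (J '' F) with hm
  have hmle : ∀ f ∈ F, m ≤ J f := fun f hf => csInf_le hbdd (mem_image_of_mem J hf)
  have hm0 : 0 ≤ m := le_csInf (hne.image J) (by rintro _ ⟨f, hf, rfl⟩; exact hJ0 f hf)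
  have hmlt : ∀ ε > 0, ∃ f ∈ F, J f < m + ε := by
    intro ε hε
    obtain ⟨_, ⟨f, hf, rfl⟩, h⟩ := exists_lt_of_csInf_lt (hne.image J) (lt_add_of_pos_right m hε)
    exact ⟨f, hf, h⟩
  have hcomb : ∀ f, MemLp f (ENNReal.ofReal p) μ → ∀ g, MemLp g (ENNReal.ofReal p) μ → ∀ a b : ℝ,
      MemLp (fun x => a * f x + b * g x) (ENNReal.ofReal p) μ := fun f hf g hg a b =>
    (hf.const_mul a).add (hg.const_mul b)
  have hmid : ∀ f ∈ F, ∀ g ∈ F, ∀ t ∈ Icc (0 : ℝ) 1,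
      m ≤ ∫ x, |(1 - t) * f x + t * g x| ^ p ∂μ := by
    intro f hf g hg t ht
    obtain ⟨k, hk, hle⟩ := hconv f hf g hg t ht
    refine (hmle k hk).trans ?_
    have hki := integrable_abs_rpow hp0 (hLp k hk)
    simp only [J]
    rw [← hI k hk]
    refine integral_mono hki (integrable_abs_rpow hp0 (hcomb f (hLp f hf) g (hLp g hg) _ _))
      fun x => ?_
    have := h0 k hk x
    refine Real.rpow_le_rpow (abs_nonneg _) ?_ hp0.le
    rw [abs_of_nonneg this]
    exact (hle x).trans (le_abs_self _)
  have hclose : ∀ ε > 0, ∃ C : ℝ, 0 ≤ C ∧ ∀ f ∈ F, ∀ g ∈ F,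
      ∫ x, |1 * f x + (-1) * g x| ^ p ∂μ ≤ ε * (J f + J g) + C * ((J f + J g) / 2 - m) := by
    intro ε hε
    obtain ⟨C, hC, hCle⟩ := exists_abs_sub_rpow_le hp hε
    refine ⟨C, hC, fun f hf g hg => ?_⟩
    have i1 := integrable_abs_rpow hp0 (hLp f hf)
    have i2 := integrable_abs_rpow hp0 (hLp g hg)
    have i3 := integrable_abs_rpow hp0
      (hcomb f (hLp f hf) g (hLp g hg) (1 - 1 / 2) (1 / 2))
    have i4 := integrable_abs_rpow hp0 (hcomb f (hLp f hf) g (hLp g hg) 1 (-1))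
    have hmid' := hmid f hf g hg (1 / 2) (by norm_num)
    have hle : ∫ x, |1 * f x + (-1) * g x| ^ p ∂μ ≤ ∫ x, (ε * (|f x| ^ p + |g x| ^ p) +
        C * ((|f x| ^ p + |g x| ^ p) / 2 - |(1 - 1 / 2) * f x + 1 / 2 * g x| ^ p)) ∂μ := by
      refine integral_mono i4 (((i1.add i2).const_mul ε).add
        ((((i1.add i2).div_const 2).sub i3).const_mul C)) fun x => ?_
      have hfx := h0 f hf x
      have hgx := h0 g hg x
      have h1 := hCle (f x) (g x) hfx hgx
      have e1 : 1 * f x + (-1) * g x = f x - g x := by ring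
      have e2 : (1 - 1 / 2) * f x + 1 / 2 * g x = (f x + g x) / 2 := by ring
      simp only [e1, e2, abs_of_nonneg hfx, abs_of_nonneg hgx]
      rwa [abs_of_nonneg (a := (f x + g x) / 2) (by linarith)]
    refine hle.trans ?_
    have i12 : Integrable (fun x => |f x| ^ p + |g x| ^ p) μ := i1.add i2
    have i12h : Integrable (fun x => (|f x| ^ p + |g x| ^ p) / 2) μ := i12.div_const 2
    have id : Integrable (fun x => (|f x| ^ p + |g x| ^ p) / 2 -
        |(1 - 1 / 2) * f x + 1 / 2 * g x| ^ p) μ := i12h.sub i3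
    rw [integral_add (f := fun x => ε * (|f x| ^ p + |g x| ^ p))
        (g := fun x => C * ((|f x| ^ p + |g x| ^ p) / 2 -
          |(1 - 1 / 2) * f x + 1 / 2 * g x| ^ p)) (i12.const_mul ε) (id.const_mul C),
      integral_const_mul, integral_const_mul, integral_sub i12h i3,
      integral_div, integral_add i1 i2, hI f hf, hI g hg]
    gcongr
  have hseq : ∀ n : ℕ, ∃ f ∈ F, J f < m + 1 / ((n : ℝ) + 1) := fun n => hmlt _ (by positivity)
  choose f hf hfm using hseq
  let v : ℕ → Lp ℝ (ENNReal.ofReal p) μ := fun n => (hLp (f n) (hf n)).toLp (f n)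
  have hcauchy : CauchySeq v := by
    refine Metric.cauchySeq_iff.2 fun r hr => ?_
    have hrp : 0 < r ^ p := by positivity
    obtain ⟨C, hC, hCle⟩ := hclose (r ^ p / (4 * (m + 1))) (by positivity)
    obtain ⟨N, hN⟩ := exists_nat_one_div_lt (show 0 < r ^ p / (2 * (C + 1)) by positivity)
    refine ⟨N, fun i hi j hj => ?_⟩
    have hone : ∀ i : ℕ, J (f i) ≤ m + 1 := fun i => (hfm i).le.trans (by
      have : 1 / ((i : ℝ) + 1) ≤ 1 := by
        rw [div_le_one (by positivity)]
        have : (0 : ℝ) ≤ i := by positivity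
        linarith
      linarith)
    have hsm : ∀ i : ℕ, N ≤ i → J (f i) < m + r ^ p / (2 * (C + 1)) := fun i hi =>
      (hfm i).trans (by
        have := Nat.one_div_le_one_div (α := ℝ) hi
        linarith)
    have h1 := hCle (f i) (hf i) (f j) (hf j)
    have h2 : r ^ p / (4 * (m + 1)) * (J (f i) + J (f j)) ≤ r ^ p / 2 := by
      calc _ ≤ r ^ p / (4 * (m + 1)) * ((m + 1) + (m + 1)) := by
            gcongr <;> exact hone _
        _ = r ^ p / 2 := by field_simp; ring
    have h3 : C * ((J (f i) + J (f j)) / 2 - m) < r ^ p / 2 := by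
      have h4 : (J (f i) + J (f j)) / 2 - m ≤ r ^ p / (2 * (C + 1)) := by
        have := hsm i hi
        have := hsm j hj
        linarith
      calc _ ≤ C * (r ^ p / (2 * (C + 1))) := by gcongr
        _ < (C + 1) * (r ^ p / (2 * (C + 1))) := by gcongr; linarith
        _ = r ^ p / 2 := by field_simp
    rw [dist_eq_norm]
    have h5 : v i - v j = (hcomb (f i) (hLp _ (hf i)) (f j) (hLp _ (hf j)) 1 (-1)).toLp _ := by
      simp only [v]
      rw [← MemLp.toLp_sub]
      refine MemLp.toLp_congr _ _ (ae_of_all _ fun x => ?_)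
      simp only [Pi.sub_apply]
      ring
    have h6 : ‖v i - v j‖ ^ p < r ^ p := by
      rw [h5, norm_toLp_rpow hp0]
      linarith
    exact (Real.rpow_lt_rpow_iff (norm_nonneg _) hr.le hp0).1 h6
  obtain ⟨w, hw⟩ := cauchySeq_tendsto_of_complete hcauchy
  have hrpow : Continuous fun s : ℝ => s ^ p := Real.continuous_rpow_const hp0.le
  have hwm : MemLp w (ENNReal.ofReal p) μ := Lp.memLp w
  have hwn : ‖w‖ ^ p = ∫ x, |w x| ^ p ∂μ := by
    conv_lhs => rw [← Lp.toLp_coeFn w hwm]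
    exact norm_toLp_rpow hp0 hwm
  have hwI : ∫ x, |w x| ^ p ∂μ = m := by
    rw [← hwn]
    have h1 : Tendsto (fun n => ‖v n‖ ^ p) atTop (𝓝 (‖w‖ ^ p)) :=
      (hrpow.tendsto _).comp hw.norm
    have h2 : Tendsto (fun n => ‖v n‖ ^ p) atTop (𝓝 m) := by
      have e : ∀ n, ‖v n‖ ^ p = J (f n) := fun n => by
        simp only [v]
        rw [norm_toLp_rpow hp0, hI _ (hf n)]
      simp only [e]
      have h3 : Tendsto (fun n : ℕ => m + 1 / ((n : ℝ) + 1)) atTop (𝓝 m) := by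
        simpa using tendsto_one_div_add_atTop_nhds_zero_nat.const_add m
      exact tendsto_of_tendsto_of_tendsto_of_le_of_le tendsto_const_nhds h3
        (fun n => hmle _ (hf n)) fun n => (hfm n).le
    exact tendsto_nhds_unique h1 h2
  refine ⟨fun x => |w x|, (continuous_abs.measurable.comp (Lp.stronglyMeasurable w).measurable),
    fun x => abs_nonneg _, integrable_abs_rpow hp0 hwm, ?_, ?_, ?_⟩
  · rw [hwI]
    exact hmlt
  · rw [hwI]
    exact hmle
  · rw [hwI]
    intro g hg t ht
    have hg' := hLp g hg
    have h1 : Tendsto (fun n => ‖(1 - t) • v n + t • hg'.toLp g‖ ^ p) atTop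
        (𝓝 (‖(1 - t) • w + t • hg'.toLp g‖ ^ p)) :=
      (hrpow.tendsto _).comp ((hw.const_smul (1 - t)).add_const _).norm
    have h2 : ∀ n, m ≤ ‖(1 - t) • v n + t • hg'.toLp g‖ ^ p := by
      intro n
      have e : (1 - t) • v n + t • hg'.toLp g =
          (hcomb (f n) (hLp _ (hf n)) g hg' (1 - t) t).toLp _ := rfl
      rw [e, norm_toLp_rpow hp0]
      exact hmid _ (hf n) g hg t ⟨ht.1.le, ht.2.le⟩
    refine (ge_of_tendsto' h1 h2).trans ?_
    have e : (1 - t) • w + t • hg'.toLp g = (hcomb w hwm g hg' (1 - t) t).toLp _ := by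
      conv_lhs => rw [← Lp.toLp_coeFn w hwm]
      rfl
    rw [e, norm_toLp_rpow hp0]
    have hwa : MemLp (fun x => |w x|) (ENNReal.ofReal p) μ := hwm.abs
    have hi := integrable_abs_rpow hp0 (hcomb _ hwa g hg' (1 - t) t)
    have hn : ∀ x, 0 ≤ (1 - t) * |w x| + t * g x := fun x =>
      add_nonneg (mul_nonneg (by linarith [ht.2]) (abs_nonneg _))
        (mul_nonneg ht.1.le (h0 g hg x))
    refine (integral_mono (integrable_abs_rpow hp0 (hcomb w hwm g hg' (1 - t) t)) hi fun x => ?_).trans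
      (le_of_eq (integral_congr_ae (ae_of_all _ fun x => by simp only [abs_of_nonneg (hn x)])))
    refine Real.rpow_le_rpow (abs_nonneg _) ?_ hp0.le
    rw [abs_of_nonneg (hn x)]
    refine (abs_add_le _ _).trans ?_
    rw [abs_mul, abs_mul, abs_of_nonneg (sub_nonneg.2 ht.2.le), abs_of_pos ht.1,
      abs_of_nonneg (h0 g hg x)]

end Minimizer

section Cover

variable {T : Type*} [MetricSpace T] [MeasurableSpace T] [BorelSpace T]

/-- A compact set of finite Hausdorff measure has arbitrarily fine finite covers by balls
centred on it, whose radii almost realize the Hausdorff measure. -/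
lemma exists_finite_cover [Nonempty T] {d : ℝ} (hd : 0 ≤ d) {Q : Set T} (hQ : IsCompact Q)
    (hfin : μH[d] Q ≠ ⊤) {δ : ℝ} (hδ : 0 < δ) {η : ℝ≥0∞} (hη : η ≠ 0) :
    ∃ (s : Finset ℕ) (z : ℕ → T) (r : ℕ → ℝ), (∀ i ∈ s, 0 < r i ∧ r i < δ) ∧
      Q ⊆ ⋃ i ∈ s, ball (z i) (r i) ∧
      ∑ i ∈ s, ENNReal.ofReal (r i ^ d) ≤ μH[d] Q + η := by
  classical
  obtain ⟨y₀⟩ := ‹Nonempty T›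
  obtain ⟨e, he, hesum⟩ := ENNReal.exists_pos_sum_of_countable' (ENNReal.half_pos hη).ne' ℕ
  have hlt : (⨅ (t : ℕ → Set T) (_ : Q ⊆ ⋃ n, t n) (_ : ∀ n, ediam (t n) ≤ ENNReal.ofReal (δ / 2)),
      ∑' n, ⨆ _ : (t n).Nonempty, ediam (t n) ^ d) < μH[d] Q + η / 2 := by
    refine lt_of_le_of_lt ?_ (ENNReal.lt_add_right hfin (ENNReal.half_pos hη).ne')
    rw [Measure.hausdorffMeasure_apply]
    exact le_iSup₂ (f := fun (r : ℝ≥0∞) (_ : 0 < r) => ⨅ (t : ℕ → Set T) (_ : Q ⊆ ⋃ n, t n)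
      (_ : ∀ n, ediam (t n) ≤ r), ∑' n, ⨆ _ : (t n).Nonempty, ediam (t n) ^ d)
      (ENNReal.ofReal (δ / 2)) (by simpa using hδ)
  simp only [iInf_lt_iff] at hlt
  obtain ⟨t, htQ, htd, hsum⟩ := hlt
  have hdiam : ∀ n, ediam (t n) ≠ ⊤ := fun n => ((htd n).trans_lt ENNReal.ofReal_lt_top).ne
  have key : ∀ n, ∃ r : ℝ, (ediam (t n)).toReal < r ∧ r < δ ∧
      ENNReal.ofReal (r ^ d) ≤ ediam (t n) ^ d + e n := by
    intro n
    set D := (ediam (t n)).toReal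
    have hD0 : 0 ≤ D := ENNReal.toReal_nonneg
    have hDδ : D < δ := by
      have := ENNReal.toReal_mono ENNReal.ofReal_ne_top (htd n)
      rw [ENNReal.toReal_ofReal (by positivity)] at this
      linarith
    have hc : Tendsto (fun r : ℝ => ENNReal.ofReal (r ^ d)) (𝓝[>] D)
        (𝓝 (ENNReal.ofReal (D ^ d))) :=
      ((ENNReal.continuous_ofReal.comp (Real.continuous_rpow_const hd)).tendsto D).mono_left
        nhdsWithin_le_nhds
    have h1 : ENNReal.ofReal (D ^ d) < ediam (t n) ^ d + e n := by
      rw [← ENNReal.ofReal_rpow_of_nonneg hD0 hd, ENNReal.ofReal_toReal (hdiam n)]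
      exact ENNReal.lt_add_right (ENNReal.rpow_ne_top_of_nonneg hd (hdiam n)) (he n).ne'
    obtain ⟨r, ⟨hr1, hr2⟩, hr3⟩ :=
      ((eventually_mem_set.2 (Ioo_mem_nhdsGT hDδ)).and (hc.eventually (gt_mem_nhds h1))).exists
    exact ⟨r, hr1, hr2, hr3.le⟩
  choose r hr1 hr2 hr3 using key
  have hz : ∀ n, ∃ z : T, (t n).Nonempty → z ∈ t n := fun n => by
    by_cases h : (t n).Nonempty
    · exact ⟨h.some, fun _ => h.some_mem⟩
    · exact ⟨y₀, fun h' => absurd h' h⟩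
  choose z hz using hz
  have hcov : Q ⊆ ⋃ n ∈ {n : ℕ | (t n).Nonempty}, ball (z n) (r n) := by
    intro x hx
    obtain ⟨n, hn⟩ := mem_iUnion.1 (htQ hx)
    refine mem_iUnion₂.2 ⟨n, ⟨x, hn⟩, ?_⟩
    rw [mem_ball, dist_edist]
    exact (ENNReal.toReal_mono (hdiam n) (edist_le_ediam_of_mem hn (hz n ⟨x, hn⟩))).trans_lt (hr1 n)
  obtain ⟨b, hb, hbfin, hbQ⟩ := hQ.elim_finite_subcover_image (fun n _ => isOpen_ball) hcov
  refine ⟨hbfin.toFinset, z, r, fun i _ => ⟨ENNReal.toReal_nonneg.trans_lt (hr1 i), hr2 i⟩,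
    by simpa using hbQ, ?_⟩
  calc ∑ i ∈ hbfin.toFinset, ENNReal.ofReal (r i ^ d)
      ≤ ∑ i ∈ hbfin.toFinset, ((⨆ _ : (t i).Nonempty, ediam (t i) ^ d) + e i) := by
        refine Finset.sum_le_sum fun i hi => (hr3 i).trans ?_
        have : (t i).Nonempty := hb (hbfin.mem_toFinset.1 hi)
        simp [this]
    _ ≤ ∑' i, ((⨆ _ : (t i).Nonempty, ediam (t i) ^ d) + e i) := ENNReal.sum_le_tsum _
    _ = (∑' i, ⨆ _ : (t i).Nonempty, ediam (t i) ^ d) + ∑' i, e i := ENNReal.tsum_add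
    _ ≤ (μH[d] Q + η / 2) + η / 2 := add_le_add hsum.le hesum.le
    _ = μH[d] Q + η := by rw [add_assoc, ENNReal.add_halves]

end Cover

section Bump

variable {T : Type*} [MetricSpace T]

/-- The tent function equal to `1` on `B(z, r)` and to `0` off `B(z, 2r)`. -/
def bump (z : T) (r : ℝ) (x : T) : ℝ := max 0 (min 1 (2 - dist x z / r))

lemma bump_nonneg (z : T) (r : ℝ) (x : T) : 0 ≤ bump z r x := le_max_left _ _

lemma bump_eq_one {z : T} {r : ℝ} {x : T} (hr : 0 < r) (hx : x ∈ ball z r) : bump z r x = 1 := by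
  have : dist x z / r < 1 := (div_lt_one hr).2 hx
  rw [bump, min_eq_left (by linarith), max_eq_right zero_le_one]

lemma bump_eq_zero {z : T} {r : ℝ} {x : T} (hr : 0 < r) (hx : x ∉ closedBall z (2 * r)) :
    bump z r x = 0 := by
  have : 2 < dist x z / r := by
    rw [lt_div_iff₀ hr]
    simpa using hx
  rw [bump, min_eq_right (by linarith), max_eq_left (by linarith)]

lemma lipschitzWith_bump (z : T) {r : ℝ} (hr : 0 < r) :
    LipschitzWith (Real.toNNReal r⁻¹) (bump z r) := by
  have h : LipschitzWith (Real.toNNReal r⁻¹) fun x => 2 - dist x z / r := by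
    refine LipschitzWith.of_dist_le_mul fun x y => ?_
    rw [Real.dist_eq, Real.coe_toNNReal _ (by positivity)]
    have : (2 - dist x z / r) - (2 - dist y z / r) = r⁻¹ * (dist y z - dist x z) := by
      field_simp; ring
    rw [this, abs_mul, abs_of_pos (by positivity : 0 < r⁻¹), dist_comm x y]
    gcongr
    exact abs_dist_sub_le _ _ _
  exact (h.const_min 1).const_max 0

/-- A path along which the tent function varies spends a definite time in its support. -/
lemma edist_bump_le (γ : UPath T) (z : T) {r : ℝ} (hr : 0 < r) {v τ : ℝ}
    (hv : v ∈ Icc γ.a γ.b) (hτ : τ ∈ Icc γ.a γ.b) :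
    edist (bump z r (γ.toFun v)) (bump z r (γ.toFun τ)) ≤
      γ.integral ((closedBall z (2 * r)).indicator fun _ => ENNReal.ofReal r⁻¹) := by
  set f : ℝ → ℝ := fun t => bump z r (γ.toFun t) with hf
  set O : Set ℝ := Icc γ.a γ.b ∩ γ.toFun ⁻¹' closedBall z (2 * r) with hO
  have hLip : LipschitzOnWith (Real.toNNReal r⁻¹) f (Icc γ.a γ.b) := by
    have := ((lipschitzWith_bump z hr).lipschitzOnWith (s := univ)).comp γ.lip (mapsTo_univ _ _)
    rwa [mul_one] at this
  have hOm : MeasurableSet O :=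
    (γ.lip.continuousOn.preimage_isClosed_of_isClosed isClosed_Icc isClosed_closedBall).measurableSet
  have hvol : volume (f '' O) ≤ ENNReal.ofReal r⁻¹ * volume O := by
    have := (hLip.mono inter_subset_left : LipschitzOnWith _ f O).hausdorffMeasure_image_le
      zero_le_one
    simpa [hausdorffMeasure_real, ENNReal.ofReal] using this
  have hsub : uIcc (f v) (f τ) ⊆ f '' O ∪ {0} := by
    have hpre : IsPreconnected (f '' Icc γ.a γ.b) := isPreconnected_Icc.image _ hLip.continuousOn
    have h1 : uIcc (f v) (f τ) ⊆ f '' Icc γ.a γ.b :=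
      hpre.ordConnected.uIcc_subset (mem_image_of_mem _ hv) (mem_image_of_mem _ hτ)
    intro y hy
    obtain ⟨t, ht, rfl⟩ := h1 hy
    by_cases h : γ.toFun t ∈ closedBall z (2 * r)
    · exact Or.inl ⟨t, ⟨ht, h⟩, rfl⟩
    · exact Or.inr (bump_eq_zero hr h)
  calc edist (f v) (f τ) = volume (uIcc (f v) (f τ)) := by
        rw [Real.volume_interval, edist_dist, Real.dist_eq, abs_sub_comm]
    _ ≤ volume (f '' O) + volume {(0 : ℝ)} := (measure_mono hsub).trans (measure_union_le _ _)
    _ ≤ ENNReal.ofReal r⁻¹ * volume O := by simpa using hvol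
    _ = ∫⁻ _ in O, ENNReal.ofReal r⁻¹ := by simp
    _ = ∫⁻ t in O, (closedBall z (2 * r)).indicator (fun _ => ENNReal.ofReal r⁻¹) (γ.toFun t) := by
        refine setLIntegral_congr_fun hOm fun t ht => ?_
        exact (indicator_of_mem (show γ.toFun t ∈ closedBall z (2 * r) from ht.2)
          (fun _ => ENNReal.ofReal r⁻¹)).symm
    _ ≤ _ := lintegral_mono_set inter_subset_left

/-- The sum of the tent functions of finitely many balls. -/
def bumpSum (s : Finset ℕ) (z : ℕ → T) (r : ℕ → ℝ) (x : T) : ℝ := ∑ i ∈ s, bump (z i) (r i) x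

/-- The upper gradient of `bumpSum`. -/
def bumpGrad (s : Finset ℕ) (z : ℕ → T) (r : ℕ → ℝ) (x : T) : ℝ≥0∞ :=
  ∑ i ∈ s, (closedBall (z i) (2 * r i)).indicator (fun _ => ENNReal.ofReal (r i)⁻¹) x

lemma edist_bumpSum_le (γ : UPath T) (s : Finset ℕ) (z : ℕ → T) (r : ℕ → ℝ)
    (hr : ∀ i ∈ s, 0 < r i) {v τ : ℝ} (hv : v ∈ Icc γ.a γ.b) (hτ : τ ∈ Icc γ.a γ.b) :
    edist (bumpSum s z r (γ.toFun v)) (bumpSum s z r (γ.toFun τ)) ≤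
      γ.integral (bumpGrad s z r) := by
  classical
  induction s using Finset.induction_on with
  | empty => simp [bumpSum]
  | insert i s hi ih =>
    have h1 := ih fun j hj => hr j (Finset.mem_insert_of_mem hj)
    have h2 := edist_bump_le γ (z i) (hr i (Finset.mem_insert_self _ _)) hv hτ
    have e1 : ∀ x, bumpSum (insert i s) z r x = bump (z i) (r i) x + bumpSum s z r x := fun x =>
      Finset.sum_insert hi
    have e2 : ∀ x, bumpGrad (insert i s) z r x =
        (closedBall (z i) (2 * r i)).indicator (fun _ => ENNReal.ofReal (r i)⁻¹) x +
          bumpGrad s z r x := fun x => Finset.sum_insert hi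
    simp only [e1]
    refine (edist_add_add_le _ _ _ _).trans ((add_le_add h2 h1).trans ?_)
    simp only [UPath.integral, e2]
    exact le_lintegral_add _ _

lemma continuous_bumpSum (s : Finset ℕ) (z : ℕ → T) (r : ℕ → ℝ) (hr : ∀ i ∈ s, 0 < r i) :
    Continuous (bumpSum s z r) :=
  continuous_finsetSum _ fun i hi => (lipschitzWith_bump (z i) (hr i hi)).continuous

open scoped Classical in
/-- The truncated test function of the isoperimetric inequality. -/
def isoFun (E : Set T) (s : Finset ℕ) (z : ℕ → T) (r : ℕ → ℝ) (x : T) : ℝ :=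
  if x ∈ E then 1 else min 1 (bumpSum s z r x)

open scoped Classical in
/-- The upper gradient of `isoFun`. -/
def isoGrad (K : Set T) (s : Finset ℕ) (z : ℕ → T) (r : ℕ → ℝ) (x : T) : ℝ≥0∞ :=
  if x ∈ K then bumpGrad s z r x else ⊤

lemma integral_eq_top_of_leaves {K : Set T} (hK : IsClosed K) (s : Finset ℕ) (z : ℕ → T)
    (r : ℕ → ℝ) (γ : UPath T) (hab : γ.a < γ.b) {t : ℝ} (ht : t ∈ Icc γ.a γ.b)
    (htK : γ.toFun t ∉ K) : γ.integral (isoGrad K s z r) = ⊤ := by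
  have hcl : IsClosed (Icc γ.a γ.b ∩ γ.toFun ⁻¹' K) :=
    γ.lip.continuousOn.preimage_isClosed_of_isClosed isClosed_Icc hK
  set V : Set ℝ := (Icc γ.a γ.b ∩ γ.toFun ⁻¹' K)ᶜ with hV
  have hVo : IsOpen V := hcl.isOpen_compl
  have htV : t ∈ V := fun h => htK h.2
  have htc : t ∈ closure (Ioo γ.a γ.b) := by rwa [closure_Ioo hab.ne]
  have hne : (V ∩ Ioo γ.a γ.b).Nonempty := mem_closure_iff.1 htc V hVo htV
  have hpos : 0 < volume (V ∩ Ioo γ.a γ.b) := (hVo.inter isOpen_Ioo).measure_pos _ hne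
  have hsub : V ∩ Ioo γ.a γ.b ⊆ Icc γ.a γ.b := inter_subset_right.trans Ioo_subset_Icc_self
  refine top_unique ?_
  calc ⊤ = ∫⁻ _ in V ∩ Ioo γ.a γ.b, (⊤ : ℝ≥0∞) := by
        rw [setLIntegral_const, ENNReal.top_mul hpos.ne']
    _ = ∫⁻ τ in V ∩ Ioo γ.a γ.b, isoGrad K s z r (γ.toFun τ) := by
        refine setLIntegral_congr_fun (hVo.inter isOpen_Ioo).measurableSet fun τ hτ => ?_
        have : γ.toFun τ ∉ K := fun h => hτ.1 ⟨hsub hτ, h⟩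
        simp [isoGrad, this]
    _ ≤ _ := lintegral_mono_set hsub

lemma abs_min_one_sub_le (a b : ℝ) : edist (min 1 a) (min 1 b) ≤ edist a b := by
  rw [edist_dist, edist_dist, Real.dist_eq, Real.dist_eq]
  refine ENNReal.ofReal_le_ofReal ((abs_min_sub_min_le_max 1 a 1 b).trans ?_)
  simp

lemma isUpperGradient_isoFun {g : T → ℝ} (hg : Continuous g) {K : Set T} (hK : IsClosed K)
    (s : Finset ℕ) (z : ℕ → T) (r : ℕ → ℝ) (hr : ∀ i ∈ s, 0 < r i)
    (hcov : K ∩ {x | g x = 0} ⊆ ⋃ i ∈ s, ball (z i) (r i)) :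
    IsUpperGradient (isoFun {x | 0 < g x} s z r) (isoGrad K s z r) := by
  intro γ
  have ha : γ.a ∈ Icc γ.a γ.b := left_mem_Icc.2 γ.hab
  have hb : γ.b ∈ Icc γ.a γ.b := right_mem_Icc.2 γ.hab
  rcases γ.hab.eq_or_lt with hab | hab
  · simp [UPath.start, UPath.finish, hab]
  by_cases hin : ∀ t ∈ Icc γ.a γ.b, γ.toFun t ∈ K
  swap
  · push Not at hin
    obtain ⟨t, ht, htK⟩ := hin
    rw [integral_eq_top_of_leaves hK s z r γ hab ht htK]
    exact le_top
  have hle : γ.integral (bumpGrad s z r) ≤ γ.integral (isoGrad K s z r) := by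
    refine lintegral_mono fun t => ?_
    by_cases h : γ.toFun t ∈ K <;> simp [isoGrad, h]
  have hM : ∀ v ∈ Icc γ.a γ.b, ∀ τ ∈ Icc γ.a γ.b,
      edist (min 1 (bumpSum s z r (γ.toFun v))) (min 1 (bumpSum s z r (γ.toFun τ))) ≤
        γ.integral (isoGrad K s z r) := fun v hv τ hτ =>
    (abs_min_one_sub_le _ _).trans ((edist_bumpSum_le γ s z r hr hv hτ).trans hle)
  have hone : ∀ v ∈ Icc γ.a γ.b, g (γ.toFun v) = 0 →
      min 1 (bumpSum s z r (γ.toFun v)) = 1 := by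
    intro v hv h0
    obtain ⟨i, hi, hx⟩ := mem_iUnion₂.1 (hcov ⟨hin v hv, h0⟩)
    refine min_eq_left ?_
    rw [← bump_eq_one (hr i hi) hx]
    exact Finset.single_le_sum (f := fun i => bump (z i) (r i) (γ.toFun v))
      (fun j _ => bump_nonneg _ _ _) hi
  have hcont : ContinuousOn (fun t => g (γ.toFun t)) (Icc γ.a γ.b) :=
    hg.comp_continuousOn γ.lip.continuousOn
  have epos : ∀ x, 0 < g x → isoFun {x | 0 < g x} s z r x = 1 := fun x hx => if_pos hx
  have eneg : ∀ x, ¬ 0 < g x → isoFun {x | 0 < g x} s z r x = min 1 (bumpSum s z r x) :=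
    fun x hx => if_neg hx
  by_cases h1 : 0 < g γ.start <;> by_cases h2 : 0 < g γ.finish
  · simp [epos _ h1, epos _ h2]
  · obtain ⟨v, hv, h0⟩ := intermediate_value_Icc' γ.hab hcont ⟨not_lt.1 h2, h1.le⟩
    have := hM v hv _ hb
    rw [hone v hv h0] at this
    rwa [epos _ h1, eneg _ h2]
  · obtain ⟨v, hv, h0⟩ := intermediate_value_Icc γ.hab hcont ⟨not_lt.1 h1, h2.le⟩
    have := hM _ ha v hv
    rw [hone v hv h0] at this
    rwa [epos _ h2, eneg _ h1]
  · rw [eneg _ h1, eneg _ h2]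
    exact hM _ ha _ hb

end Bump

section Iso

variable {T : Type*} [MetricSpace T] [MeasurableSpace T] [BorelSpace T] {μ : Measure T}
  {q aA AA CP lP : ℝ}

/-- The constant of the relative isoperimetric inequality. -/
def isoConst (q aA AA CP lP : ℝ) : ℝ :=
  2 * max CP 0 * (AA / (aA * |lP| ^ q)) * (AA * 4 ^ q)

lemma isoConst_nonneg (ha : 0 < aA) (hA : aA ≤ AA) : 0 ≤ isoConst q aA AA CP lP := by
  have : 0 ≤ AA := ha.le.trans hA
  unfold isoConst
  positivity

lemma measure_closedBall_two_mul_le (hA : IsAhlforsRegular μ q aA AA) (x : T) {r : ℝ} (hr : 0 < r)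
    (hrd : 4 * r < diam (univ : Set T)) :
    μ (closedBall x (2 * r)) ≤
      ENNReal.ofReal (AA * 4 ^ q) * (ENNReal.ofReal r * ENNReal.ofReal (r ^ (q - 1))) := by
  have hAA : 0 ≤ AA := hA.1.le.trans hA.2.1
  refine (hA.measure_closedBall_le x (by positivity) (by linarith)).trans (le_of_eq ?_)
  rw [← ENNReal.ofReal_mul hr.le, ← ENNReal.ofReal_mul (by positivity)]
  congr 1
  rw [show 2 * (2 * r) = 4 * r by ring, Real.mul_rpow (by norm_num) hr.le,
    Real.rpow_sub_one hr.ne']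
  field_simp

lemma lintegral_bumpGrad_le (hA : IsAhlforsRegular μ q aA AA) (s : Finset ℕ) (z : ℕ → T)
    (r : ℕ → ℝ) (hr : ∀ i ∈ s, 0 < r i) (hrd : ∀ i ∈ s, 4 * r i < diam (univ : Set T)) :
    ∫⁻ x, bumpGrad s z r x ∂μ ≤
      ENNReal.ofReal (AA * 4 ^ q) * ∑ i ∈ s, ENNReal.ofReal (r i ^ (q - 1)) := by
  simp only [bumpGrad]
  rw [lintegral_finsetSum s fun i _ => measurable_const.indicator measurableSet_closedBall,
    Finset.mul_sum]
  refine Finset.sum_le_sum fun i hi => ?_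
  rw [lintegral_indicator measurableSet_closedBall, setLIntegral_const]
  refine (mul_le_mul_right (measure_closedBall_two_mul_le hA (z i) (hr i hi) (hrd i hi)) _).trans
    (le_of_eq ?_)
  have : ENNReal.ofReal (r i)⁻¹ * ENNReal.ofReal (r i) = 1 := by
    rw [← ENNReal.ofReal_mul (by have := hr i hi; positivity),
      inv_mul_cancel₀ (hr i hi).ne', ENNReal.ofReal_one]
  rw [show ∀ a b c d : ℝ≥0∞, a * (b * (c * d)) = a * c * (b * d) by intros; ring, this, one_mul]

lemma measure_iUnion_closedBall_le (hA : IsAhlforsRegular μ q aA AA) (s : Finset ℕ) (z : ℕ → T)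
    (r : ℕ → ℝ) {δ : ℝ} (hr : ∀ i ∈ s, 0 < r i) (hrδ : ∀ i ∈ s, r i ≤ δ)
    (hrd : ∀ i ∈ s, 4 * r i < diam (univ : Set T)) :
    μ (⋃ i ∈ s, closedBall (z i) (2 * r i)) ≤
      ENNReal.ofReal δ *
        (ENNReal.ofReal (AA * 4 ^ q) * ∑ i ∈ s, ENNReal.ofReal (r i ^ (q - 1))) := by
  refine (measure_biUnion_finset_le _ _).trans ?_
  rw [Finset.mul_sum, Finset.mul_sum]
  refine Finset.sum_le_sum fun i hi => ?_
  refine (measure_closedBall_two_mul_le hA (z i) (hr i hi) (hrd i hi)).trans ?_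
  rw [mul_left_comm]
  gcongr
  exact hrδ i hi

/-- The estimate of the test function in the Poincaré inequality, with the ratio of the measures
of the balls cleared by Ahlfors regularity. -/
lemma SupportsPoincare.lintegral_sub_le (hP : SupportsPoincare μ CP lP)
    (hA : IsAhlforsRegular μ q aA AA) {u : T → ℝ} {ρ ρ₀ : T → ℝ≥0∞}
    (hu : LocallyIntegrable u μ) (hρ : Measurable ρ) (hug : IsUpperGradient u ρ) (x : T)
    {r : ℝ} (hr : 0 < r) (hrd : max lP 1 * r < diam (univ : Set T)) {M : ℝ≥0∞}
    (hρ₀ : ∀ y ∈ closedBall x (max lP 1 * r), ρ y = ρ₀ y)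
    (hM : ∫⁻ y, ρ₀ y ∂μ ≤ ENNReal.ofReal (AA * 4 ^ q) * M) :
    ∫⁻ y in ball x r, ENNReal.ofReal |u y - ⨍ z in ball x r, u z ∂μ| ∂μ ≤
      ENNReal.ofReal (isoConst q aA AA CP lP * r) * M := by
  have hAA : 0 < AA := hA.1.trans_le hA.2.1
  have h := hP.2 u ρ hu hρ hug x r hr
  obtain ⟨hB0, hBtop⟩ := hP.1 x r hr
  rw [ENNReal.div_le_iff hB0.ne' hBtop.ne] at h
  refine h.trans ?_
  rcases le_or_gt lP 0 with hl | hl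
  · rw [ball_eq_empty.2 (mul_nonpos_of_nonpos_of_nonneg hl hr.le)]
    simp
  have hlr : 0 < lP * r := by positivity
  have hsub : ball x (lP * r) ⊆ closedBall x (max lP 1 * r) :=
    ball_subset_closedBall.trans (closedBall_subset_closedBall (by gcongr; exact le_max_left _ _))
  have h1 : ∫⁻ y in ball x (lP * r), ρ y ∂μ ≤ ENNReal.ofReal (AA * 4 ^ q) * M := by
    refine le_trans ?_ hM
    rw [setLIntegral_congr_fun measurableSet_ball fun y hy => hρ₀ y (hsub hy)]
    exact setLIntegral_le_lintegral _ _
  have hd : lP * r < diam (univ : Set T) := lt_of_le_of_lt (by gcongr; exact le_max_left _ _) hrd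
  have hd' : r < diam (univ : Set T) :=
    lt_of_le_of_lt (by nlinarith [le_max_right lP 1]) hrd
  have h2 : (μ (ball x (lP * r)))⁻¹ ≤ ENNReal.ofReal (aA * (lP * r) ^ q)⁻¹ := by
    have := hA.1
    rw [ENNReal.ofReal_inv_of_pos (by positivity)]
    exact ENNReal.inv_le_inv.2 (hA.2.2 x _ hlr hd).1
  have h3 : μ (ball x r) ≤ ENNReal.ofReal (AA * r ^ q) := (hA.2.2 x r hr hd').2
  have h4 : ENNReal.ofReal (CP * diam (ball x r)) ≤ ENNReal.ofReal (max CP 0 * (2 * r)) := by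
    refine ENNReal.ofReal_le_ofReal ?_
    exact mul_le_mul (le_max_left _ _) (diam_ball hr.le) diam_nonneg (le_max_right _ _)
  rw [div_eq_mul_inv]
  calc _ ≤ ENNReal.ofReal (max CP 0 * (2 * r)) *
        ((ENNReal.ofReal (AA * 4 ^ q) * M) * ENNReal.ofReal (aA * (lP * r) ^ q)⁻¹) *
        ENNReal.ofReal (AA * r ^ q) := by gcongr
    _ = ENNReal.ofReal (max CP 0 * (2 * r)) * ENNReal.ofReal (AA * 4 ^ q) *
        ENNReal.ofReal (aA * (lP * r) ^ q)⁻¹ * ENNReal.ofReal (AA * r ^ q) * M := by ring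
    _ = ENNReal.ofReal (isoConst q aA AA CP lP * r) * M := by
        have := hA.1
        rw [← ENNReal.ofReal_mul (by positivity), ← ENNReal.ofReal_mul (by positivity),
          ← ENNReal.ofReal_mul (by positivity)]
        congr 2
        rw [isoConst, abs_of_pos hl, Real.mul_rpow hl.le hr.le]
        have : 0 < r ^ q := by positivity
        have : 0 < lP ^ q := by positivity
        field_simp

open scoped Classical in
/-- **Relative isoperimetric inequality**: up to an error, the oscillation of the indicator of
`{g > 0}` in a ball is controlled by the Hausdorff measure of `{g = 0}` in a larger ball. -/
lemma exists_isoperimetric [CompactSpace T] [Nontrivial T] (hA : IsAhlforsRegular μ q aA AA)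
    (hP : SupportsPoincare μ CP lP) (hq : 1 ≤ q) {g : T → ℝ} (hg : Continuous g) (x : T) {r : ℝ}
    (hr : 0 < r) (hrd : max lP 1 * r < diam (univ : Set T))
    (hfin : μH[q - 1] (closedBall x (max lP 1 * r) ∩ {y | g y = 0}) ≠ ⊤) {η : ℝ≥0∞} (hη : η ≠ 0) :
    ∃ c : ℝ, ∫⁻ y in ball x r, ENNReal.ofReal |(if 0 < g y then (1 : ℝ) else 0) - c| ∂μ ≤
      ENNReal.ofReal (isoConst q aA AA CP lP * r) *
        μH[q - 1] (closedBall x (max lP 1 * r) ∩ {y | g y = 0}) + η := by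
  have : IsFiniteMeasure μ := hP.isFiniteMeasure
  set Q := closedBall x (max lP 1 * r) ∩ {y | g y = 0} with hQ
  set h := μH[q - 1] Q with hh
  have hQc : IsCompact Q :=
    (isClosed_closedBall.inter (isClosed_eq hg continuous_const)).isCompact
  have hη2 : η / 2 ≠ 0 := (ENNReal.half_pos hη).ne'
  obtain ⟨n₁, hn₁, hn₁'⟩ := ENNReal.exists_nnreal_pos_mul_lt
    (a := ENNReal.ofReal (isoConst q aA AA CP lP * r)) ENNReal.ofReal_ne_top hη2
  obtain ⟨n₂, hn₂, hn₂'⟩ := ENNReal.exists_nnreal_pos_mul_lt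
    (a := ENNReal.ofReal (AA * 4 ^ q) * (h + n₁))
    (ENNReal.mul_ne_top ENNReal.ofReal_ne_top (by simp [hfin])) hη2
  have hD : 0 < diam (univ : Set T) := diam_univ_pos
  obtain ⟨s, z, ρ, hρ, hcov, hsum⟩ := exists_finite_cover (sub_nonneg.2 hq) hQc hfin
    (δ := min n₂ (diam (univ : Set T) / 4)) (by positivity) (η := n₁) (by positivity)
  have hρ0 : ∀ i ∈ s, 0 < ρ i := fun i hi => (hρ i hi).1
  have hρd : ∀ i ∈ s, 4 * ρ i < diam (univ : Set T) := fun i hi => by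
    have := (hρ i hi).2.trans_le (min_le_right _ _)
    linarith
  have hρn : ∀ i ∈ s, ρ i ≤ n₂ := fun i hi => ((hρ i hi).2.trans_le (min_le_left _ _)).le
  set E : Set T := {y | 0 < g y} with hE
  set K := closedBall x (max lP 1 * r) with hK
  have hEm : MeasurableSet E := (isOpen_lt continuous_const hg).measurableSet
  have hMm : Measurable (bumpSum s z ρ) := (continuous_bumpSum s z ρ hρ0).measurable
  have hum : Measurable (isoFun E s z ρ) :=
    Measurable.ite hEm measurable_const (measurable_const.min hMm)
  have hGm : Measurable (bumpGrad s z ρ) :=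
    Finset.measurable_fun_sum s fun i _ => measurable_const.indicator measurableSet_closedBall
  have hgm : Measurable (isoGrad K s z ρ) :=
    Measurable.ite measurableSet_closedBall hGm measurable_const
  have hM0 : ∀ y, 0 ≤ bumpSum s z ρ y := fun y => Finset.sum_nonneg fun i _ => bump_nonneg _ _ _
  have hu01 : ∀ y, 0 ≤ isoFun E s z ρ y ∧ isoFun E s z ρ y ≤ 1 := fun y => by
    by_cases hy : y ∈ E
    · simp [isoFun, hy]
    · simp [isoFun, hy, hM0]
  have hInt : Integrable (isoFun E s z ρ) μ := by
    refine Integrable.of_bound hum.aestronglyMeasurable 1 (ae_of_all _ fun y => ?_)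
    rw [Real.norm_eq_abs, abs_of_nonneg (hu01 y).1]
    exact (hu01 y).2
  have hP' := hP.lintegral_sub_le hA hInt.locallyIntegrable hgm
    (isUpperGradient_isoFun hg isClosed_closedBall s z ρ hρ0 hcov) x hr hrd
    (ρ₀ := bumpGrad s z ρ) (fun y hy => if_pos hy) (lintegral_bumpGrad_le hA s z ρ hρ0 hρd)
  refine ⟨⨍ w in ball x r, isoFun E s z ρ w ∂μ, ?_⟩
  set c := ⨍ w in ball x r, isoFun E s z ρ w ∂μ
  set U : Set T := ⋃ i ∈ s, closedBall (z i) (2 * ρ i) with hU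
  have hUm : MeasurableSet U := Finset.measurableSet_biUnion s fun i _ => measurableSet_closedBall
  have hpt : ∀ y, ENNReal.ofReal |(if 0 < g y then (1 : ℝ) else 0) - c| ≤
      ENNReal.ofReal |isoFun E s z ρ y - c| + U.indicator (fun _ => 1) y := by
    intro y
    by_cases hy : 0 < g y
    · have : isoFun E s z ρ y = 1 := if_pos hy
      rw [this, if_pos hy]
      exact le_self_add
    rw [if_neg hy]
    by_cases hyU : y ∈ U
    · rw [indicator_of_mem hyU, ← ENNReal.ofReal_one, ← ENNReal.ofReal_add (abs_nonneg _) zero_le_one]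
      refine ENNReal.ofReal_le_ofReal ?_
      have h1 := abs_sub_le 0 (isoFun E s z ρ y) c
      have h2 : |0 - isoFun E s z ρ y| ≤ 1 := by
        rw [zero_sub, abs_neg, abs_of_nonneg (hu01 y).1]
        exact (hu01 y).2
      linarith
    · have h0 : bumpSum s z ρ y = 0 := Finset.sum_eq_zero fun i hi =>
        bump_eq_zero (hρ0 i hi) fun hmem => hyU (mem_biUnion (Finset.mem_coe.2 hi) hmem)
      have : isoFun E s z ρ y = 0 := by
        rw [isoFun, if_neg (show y ∉ E from hy), h0]
        simp
      rw [this]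
      exact le_self_add
  calc ∫⁻ y in ball x r, ENNReal.ofReal |(if 0 < g y then (1 : ℝ) else 0) - c| ∂μ
      ≤ ∫⁻ y in ball x r, (ENNReal.ofReal |isoFun E s z ρ y - c| + U.indicator (fun _ => 1) y) ∂μ :=
        lintegral_mono hpt
    _ = ∫⁻ y in ball x r, ENNReal.ofReal |isoFun E s z ρ y - c| ∂μ +
          ∫⁻ y in ball x r, U.indicator (fun _ => 1) y ∂μ :=
        lintegral_add_right _ (measurable_const.indicator hUm)
    _ ≤ ENNReal.ofReal (isoConst q aA AA CP lP * r) * (h + n₁) + μ U := by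
        gcongr
        · exact hP'.trans (by gcongr)
        · refine (setLIntegral_le_lintegral _ _).trans (le_of_eq ?_)
          rw [lintegral_indicator hUm, setLIntegral_one]
    _ ≤ ENNReal.ofReal (isoConst q aA AA CP lP * r) * (h + n₁) +
          n₂ * (ENNReal.ofReal (AA * 4 ^ q) * (h + n₁)) := by
        gcongr
        refine (measure_iUnion_closedBall_le hA s z ρ hρ0 hρn hρd).trans ?_
        rw [ENNReal.ofReal_coe_nnreal]
        gcongr
    _ ≤ (ENNReal.ofReal (isoConst q aA AA CP lP * r) * h + η / 2) + η / 2 := by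
        rw [mul_add]
        gcongr
        · rw [mul_comm]; exact hn₁'.le
    _ = _ := by rw [add_assoc, ENNReal.add_halves]

end Iso

section Mollify

lemma abs_integral_le_of_abs_le {α : Type*} [MeasurableSpace α] {μ : Measure α} {G F : α → ℝ}
    {B : Set α} {b : ℝ} (hF : Integrable F μ) (h0 : ∀ y, y ∉ B → G y = 0) (hle : ∀ y, |G y| ≤ b * |F y|) :
    |∫ y, G y ∂μ| ≤ b * ∫ y in B, |F y| ∂μ := by
  rw [← setIntegral_eq_integral_of_forall_compl_eq_zero h0, ← integral_const_mul]
  exact norm_integral_le_of_norm_le (f := G) (hF.abs.integrableOn.const_mul b) (ae_of_all _ hle)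

variable {T : Type*} [MetricSpace T]

/-- The tent kernel at scale `2ε`. -/
def tent (ε : ℝ) (x y : T) : ℝ := max 0 (2 * ε - dist x y)

lemma tent_nonneg (ε : ℝ) (x y : T) : 0 ≤ tent ε x y := le_max_left _ _

lemma tent_le {ε : ℝ} (hε : 0 ≤ ε) (x y : T) : tent ε x y ≤ 2 * ε :=
  max_le (by positivity) (by linarith [dist_nonneg (x := x) (y := y)])

lemma tent_eq_zero {ε : ℝ} {x y : T} (h : 2 * ε ≤ dist x y) : tent ε x y = 0 :=
  max_eq_left (by linarith)

lemma le_tent {ε : ℝ} {x y : T} (h : dist x y ≤ ε) : ε ≤ tent ε x y :=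
  le_max_of_le_right (by linarith)

lemma abs_tent_sub_le (ε : ℝ) (x x' y : T) : |tent ε x y - tent ε x' y| ≤ dist x x' := by
  refine (abs_max_sub_max_le_max 0 (2 * ε - dist x y) 0 (2 * ε - dist x' y)).trans ?_
  rw [sub_self, abs_zero, max_eq_right (abs_nonneg _), sub_sub_sub_cancel_left, abs_sub_comm]
  exact abs_dist_sub_le _ _ _

lemma continuous_tent (ε : ℝ) (x : T) : Continuous (tent ε x) := by
  unfold tent
  fun_prop

variable [MeasurableSpace T]

/-- Averages of `f` against the tent kernel. -/
def mollify (μ : Measure T) (ε : ℝ) (f : T → ℝ) (x : T) : ℝ :=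
  (∫ y, tent ε x y * f y ∂μ) / ∫ y, tent ε x y ∂μ

variable [BorelSpace T] {μ : Measure T} {q aA AA : ℝ}

lemma integrable_tent_mul {ε : ℝ} (hε : 0 ≤ ε) (x : T) {f : T → ℝ} (hf : Integrable f μ) :
    Integrable (fun y => tent ε x y * f y) μ :=
  hf.bdd_mul (c := 2 * ε) (continuous_tent ε x).aestronglyMeasurable (ae_of_all _ fun y => by
    rw [Real.norm_eq_abs, abs_of_nonneg (tent_nonneg _ _ _)]
    exact tent_le hε _ _)

lemma integrable_tent [IsFiniteMeasure μ] {ε : ℝ} (hε : 0 ≤ ε) (x : T) :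
    Integrable (tent ε x) μ := by
  simpa using integrable_tent_mul hε x (integrable_const (μ := μ) (1 : ℝ))

lemma le_integral_tent [IsFiniteMeasure μ] (hA : IsAhlforsRegular μ q aA AA) {ε : ℝ} (hε : 0 < ε)
    (hεd : ε < diam (univ : Set T)) (x : T) : aA * ε ^ (q + 1) ≤ ∫ y, tent ε x y ∂μ := by
  have h1 : ∫ y in ball x ε, tent ε x y ∂μ ≤ ∫ y, tent ε x y ∂μ :=
    setIntegral_le_integral (integrable_tent hε.le x) (ae_of_all _ fun y => tent_nonneg _ _ _)
  have h2 : ∫ _ in ball x ε, ε ∂μ ≤ ∫ y in ball x ε, tent ε x y ∂μ :=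
    setIntegral_mono_on (integrable_const _).integrableOn (integrable_tent hε.le x).integrableOn
      measurableSet_ball fun y hy => le_tent (by rw [dist_comm]; exact (mem_ball.1 hy).le)
  refine le_trans ?_ (h2.trans h1)
  have h3 : aA * ε ^ q ≤ μ.real (ball x ε) := by
    have := ENNReal.toReal_mono (measure_ne_top μ _) (hA.2.2 x ε hε hεd).1
    rwa [ENNReal.toReal_ofReal (by have := hA.1; positivity)] at this
  rw [setIntegral_const, smul_eq_mul, Real.rpow_add_one hε.ne', ← mul_assoc]
  gcongr

/-- The Lipschitz constant of averages, before scaling. -/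
def mollConst (q aA AA : ℝ) : ℝ := 1 / aA + 2 * (AA * 3 ^ q) / aA ^ 2

lemma abs_mollify_sub_le [IsFiniteMeasure μ] (hA : IsAhlforsRegular μ q aA AA) {f : T → ℝ}
    (hf : Integrable f μ) {ε : ℝ} (hε : 0 < ε) (hεd : 3 * ε < diam (univ : Set T)) {x x' : T}
    (hx : dist x x' < ε) (c : ℝ) :
    |mollify μ ε f x - mollify μ ε f x'| ≤
      dist x x' * (mollConst q aA AA * (ε ^ (q + 1))⁻¹ * ∫ y in ball x (3 * ε), |f y - c| ∂μ) := by
  have ha := hA.1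
  have hAA : 0 < AA := hA.1.trans_le hA.2.1
  have hF : Integrable (fun y => f y - c) μ := hf.sub (integrable_const c)
  set J := ∫ y in ball x (3 * ε), |f y - c| ∂μ with hJ
  have hJ0 : 0 ≤ J := integral_nonneg fun y => abs_nonneg _
  set d := dist x x' with hd
  have hd0 : 0 ≤ d := dist_nonneg
  set n := aA * ε ^ (q + 1) with hn
  have hn0 : 0 < n := by positivity
  set N : T → ℝ := fun x => ∫ y, tent ε x y ∂μ with hN
  have hNn : ∀ x, n ≤ N x := le_integral_tent hA hε (by linarith)
  have hN0 : ∀ x, 0 < N x := fun x => hn0.trans_le (hNn x)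
  set W : T → ℝ := fun x => ∫ y, tent ε x y * (f y - c) ∂μ with hI
  have hIeq : ∀ x, mollify μ ε f x = W x / N x + c := by
    intro x
    have : W x = (∫ y, tent ε x y * f y ∂μ) - c * N x := by
      simp only [hI, hN, mul_sub]
      rw [integral_sub (integrable_tent_mul hε.le x hf) ((integrable_tent hε.le x).mul_const c),
        integral_mul_const, mul_comm c]
    rw [this, mollify]
    have := (hN0 x).ne'
    simp only [hN] at this ⊢
    field_simp
    ring
  have hz : ∀ y, y ∉ ball x (3 * ε) → tent ε x y = 0 ∧ tent ε x' y = 0 := by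
    intro y hy
    rw [mem_ball, not_lt, dist_comm] at hy
    have := dist_triangle x x' y
    exact ⟨tent_eq_zero (by linarith), tent_eq_zero (by linarith)⟩
  have h1 : |W x - W x'| ≤ d * J := by
    have e : W x - W x' = ∫ y, (tent ε x y - tent ε x' y) * (f y - c) ∂μ := by
      simp only [hI, sub_mul]
      rw [integral_sub (integrable_tent_mul hε.le x hF) (integrable_tent_mul hε.le x' hF)]
    rw [e]
    refine abs_integral_le_of_abs_le (B := ball x (3 * ε)) hF (fun y hy => ?_) fun y => ?_
    · rw [(hz y hy).1, (hz y hy).2]; simp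
    · rw [abs_mul]
      exact mul_le_mul_of_nonneg_right (abs_tent_sub_le _ _ _ _) (abs_nonneg _)
  have h2 : |W x'| ≤ 2 * ε * J := by
    refine abs_integral_le_of_abs_le (B := ball x (3 * ε)) hF (fun y hy => ?_) fun y => ?_
    · rw [(hz y hy).2]; simp
    · rw [abs_mul, abs_of_nonneg (tent_nonneg _ _ _)]
      exact mul_le_mul_of_nonneg_right (tent_le hε.le _ _) (abs_nonneg _)
  have h3 : |N x' - N x| ≤ d * (AA * (3 * ε) ^ q) := by
    have e : N x' - N x = ∫ y, (tent ε x' y - tent ε x y) ∂μ := by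
      simp only [hN]
      rw [integral_sub (integrable_tent hε.le x') (integrable_tent hε.le x)]
    rw [e]
    have h := abs_integral_le_of_abs_le (μ := μ) (G := fun y => tent ε x' y - tent ε x y)
      (F := fun _ => (1 : ℝ)) (b := d) (B := ball x (3 * ε))
      (integrable_const 1) (fun y hy => by rw [(hz y hy).1, (hz y hy).2]; simp)
      (fun y => by
        rw [abs_one, mul_one, abs_sub_comm]
        exact abs_tent_sub_le _ _ _ _)
    refine h.trans ?_
    gcongr
    simp only [abs_one, setIntegral_const, smul_eq_mul, mul_one]
    have := ENNReal.toReal_mono ENNReal.ofReal_ne_top (hA.2.2 x (3 * ε) (by positivity) hεd).2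
    rwa [ENNReal.toReal_ofReal (by positivity)] at this
  have e : mollify μ ε f x - mollify μ ε f x' =
      (W x - W x') / N x + W x' * (N x' - N x) / (N x * N x') := by
    rw [hIeq, hIeq]
    have := (hN0 x).ne'
    have := (hN0 x').ne'
    field_simp
    ring
  rw [e]
  calc _ ≤ |(W x - W x') / N x| + |W x' * (N x' - N x) / (N x * N x')| := abs_add_le _ _
    _ = |W x - W x'| / N x + |W x'| * |N x' - N x| / (N x * N x') := by
        rw [abs_div, abs_div, abs_mul, abs_of_pos (hN0 x), abs_of_pos (mul_pos (hN0 x) (hN0 x'))]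
    _ ≤ d * J / n + 2 * ε * J * (d * (AA * (3 * ε) ^ q)) / (n * n) := by
        gcongr
        exacts [hNn x, (hN0 x).le, hNn x, hNn x']
    _ = d * (mollConst q aA AA * (ε ^ (q + 1))⁻¹ * J) := by
        rw [hn, mollConst, Real.mul_rpow (by norm_num) hε.le, Real.rpow_add_one hε.ne']
        have : 0 < ε ^ q := by positivity
        field_simp

lemma mollify_eq_const [IsFiniteMeasure μ] (hA : IsAhlforsRegular μ q aA AA) {f : T → ℝ} {ε : ℝ}
    (hε : 0 < ε) (hεd : ε < diam (univ : Set T)) {x : T} {c : ℝ}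
    (h : ∀ y, dist x y < 2 * ε → f y = c) : mollify μ ε f x = c := by
  have hpos : 0 < ∫ y, tent ε x y ∂μ :=
    lt_of_lt_of_le (by have := hA.1; positivity) (le_integral_tent hA hε hεd x)
  have e : ∀ y, tent ε x y * f y = tent ε x y * c := by
    intro y
    rcases lt_or_ge (dist x y) (2 * ε) with hy | hy
    · rw [h y hy]
    · simp [tent_eq_zero hy]
  rw [mollify, integral_congr_ae (ae_of_all _ e), integral_mul_const]
  field_simp

end Mollify

section CircleSine

/-- The function `[t] ↦ sin (2πt)` on the circle. -/
def circSin (y : UnitAddCircle) : ℝ := (AddCircle.toCircle y : ℂ).im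

lemma circSin_coe (t : ℝ) : circSin (t : UnitAddCircle) = Real.sin (2 * Real.pi * t) := by
  rw [circSin, AddCircle.toCircle_apply_mk, Circle.coe_exp, div_one, Complex.exp_ofReal_mul_I_im]

lemma continuous_circSin : Continuous circSin :=
  Complex.continuous_im.comp (continuous_subtype_val.comp AddCircle.continuous_toCircle)

lemma circSin_pos {t : ℝ} (h0 : 0 < t) (h1 : t < 1 / 2) : 0 < circSin (t : UnitAddCircle) := by
  rw [circSin_coe]
  exact Real.sin_pos_of_pos_of_lt_pi (by positivity) (by nlinarith [Real.pi_pos])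

lemma circSin_neg {t : ℝ} (h0 : t < 0) (h1 : -(1 / 2) < t) : circSin (t : UnitAddCircle) < 0 := by
  rw [circSin_coe]
  exact Real.sin_neg_of_neg_of_neg_pi_lt (by nlinarith [Real.pi_pos]) (by nlinarith [Real.pi_pos])

lemma eq_zero_of_circSin_eq_zero {y : UnitAddCircle} (hy : ‖y‖ < 1 / 2) (h : circSin y = 0) :
    y = 0 := by
  obtain ⟨t, rfl, ht⟩ := exists_abs_eq_norm y
  rw [← ht, abs_lt] at hy
  rcases lt_trichotomy t 0 with h0 | rfl | h0
  · exact absurd h (circSin_neg h0 hy.1).ne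
  · simp
  · exact absurd h (circSin_pos h0 hy.2).ne'

end CircleSine

section Competitor

open scoped Classical in
/-- The circle-valued map which interpolates across the level set `φ = 0` through `P` and vanishes
elsewhere. -/
def interp {T : Type*} (φ : T → UnitAddCircle) (P : T → ℝ) (x : T) : UnitAddCircle :=
  if ‖φ x‖ < 1 / 4 then (P x : UnitAddCircle) else 0

/-- `P` is equal to `1`, resp. `0`, slightly above, resp. below, the level set `φ = 0`. -/
def IsTransition {T : Type*} (φ : T → UnitAddCircle) (P : T → ℝ) : Prop :=
  ∀ x (t : ℝ), φ x = t → (1 / 8 < t → t < 1 / 4 → P x = 1) ∧ (-(1 / 4) < t → t < -(1 / 8) → P x = 0)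

variable {T : Type*}

lemma interp_eq_zero {φ : T → UnitAddCircle} {P : T → ℝ} (hP : IsTransition φ P) {x : T}
    (hx : 1 / 8 < ‖φ x‖) : interp φ P x = 0 := by
  by_cases h : ‖φ x‖ < 1 / 4
  swap
  · exact if_neg h
  rw [interp, if_pos h]
  obtain ⟨t, ht, hta⟩ := exists_abs_eq_norm (φ x)
  rw [← hta] at h hx
  obtain ⟨h1, h0⟩ := hP x t ht.symm
  rcases le_or_gt 0 t with h' | h'
  · rw [abs_of_nonneg h'] at h hx
    rw [h1 hx h]
    simp
  · rw [abs_of_neg h'] at h hx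
    rw [h0 (by linarith) (by linarith)]
    simp

lemma hasDegree_interp [TopologicalSpace T] {x₀ : T} {α₀ : Path x₀ x₀} {φ : T → UnitAddCircle}
    (hφ : HasDegree x₀ α₀ φ 1) {P : T → ℝ} (hPc : Continuous P) (hP : IsTransition φ P) :
    HasDegree x₀ α₀ (interp φ P) 1 := by
  classical
  obtain ⟨hφc, -⟩ := id hφ
  let lo : T → ℝ := fun x => AddCircle.equivIco 1 (-(1 / 2) : ℝ) (φ x)
  let hi : T → ℝ := fun x => AddCircle.equivIco 1 (0 : ℝ) (φ x)
  have hloe : ∀ x, ((lo x : ℝ) : UnitAddCircle) = φ x := fun x => AddCircle.coe_equivIco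
  have hhie : ∀ x, ((hi x : ℝ) : UnitAddCircle) = φ x := fun x => AddCircle.coe_equivIco
  have hone : ((1 : ℝ) : UnitAddCircle) = 0 := by simp
  let h : T → ℝ := fun x => if ‖φ x‖ < 1 / 4 then P x - lo x else 1 - hi x
  have hoverlap : ∀ x, 1 / 8 < ‖φ x‖ → h x = 1 - hi x := by
    intro x hx
    by_cases hx' : ‖φ x‖ < 1 / 4
    swap
    · exact if_neg hx'
    have e : h x = P x - lo x := if_pos hx'
    obtain ⟨t, ht, hta⟩ := exists_abs_eq_norm (φ x)
    rw [← hta] at hx' hx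
    obtain ⟨h1, h0⟩ := hP x t ht.symm
    have hlo : lo x = t := by
      simp only [lo, ← ht]
      exact AddCircle.equivIco_coe_of_mem
        ⟨by linarith [(abs_lt.1 hx').1], by linarith [(abs_lt.1 hx').2]⟩
    rw [e, hlo]
    rcases le_or_gt 0 t with h' | h'
    · rw [abs_of_nonneg h'] at hx hx'
      have hhi : hi x = t := by
        simp only [hi, ← ht]
        exact AddCircle.equivIco_coe_of_mem ⟨h', by linarith⟩
      rw [h1 hx hx', hhi]
    · rw [abs_of_neg h'] at hx hx'
      have hhi : hi x = t + 1 := by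
        have : φ x = ((t + 1 : ℝ) : UnitAddCircle) := by
          rw [AddCircle.coe_add, hone, add_zero, ht]
        simp only [hi, this]
        exact AddCircle.equivIco_coe_of_mem ⟨by linarith, by linarith⟩
      rw [h0 (by linarith) (by linarith), hhi]
      ring
  have hnorm : Continuous fun x => ‖φ x‖ := hφc.norm
  have hcont : Continuous h := by
    refine continuous_iff_continuousAt.2 fun x => ?_
    rcases lt_or_ge ‖φ x‖ (1 / 4) with hx | hx
    · have hne : φ x ≠ ((-(1 / 2) : ℝ) : UnitAddCircle) := by
        intro he
        rw [he, UnitAddCircle.norm_eq] at hx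
        have : round (-(1 / 2) : ℝ) = 0 := by
          rw [round_eq]
          norm_num
        rw [this] at hx
        norm_num [abs_of_nonneg] at hx
      have h1 : ContinuousAt lo x :=
        continuous_subtype_val.continuousAt.comp
          ((AddCircle.continuousAt_equivIco 1 (-(1 / 2) : ℝ) hne).comp hφc.continuousAt)
      refine (hPc.continuousAt.sub h1).congr ?_
      filter_upwards [hnorm.continuousAt.eventually (gt_mem_nhds hx)] with y hy
      exact (if_pos hy).symm
    · have hne : φ x ≠ ((0 : ℝ) : UnitAddCircle) := by
        intro he
        rw [he, AddCircle.coe_zero, norm_zero] at hx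
        norm_num at hx
      have h1 : ContinuousAt hi x :=
        continuous_subtype_val.continuousAt.comp
          ((AddCircle.continuousAt_equivIco 1 (0 : ℝ) hne).comp hφc.continuousAt)
      refine ((continuousAt_const (y := (1 : ℝ))).sub h1).congr ?_
      have hx8 : 1 / 8 < ‖φ x‖ := by linarith
      filter_upwards [hnorm.continuousAt.eventually (lt_mem_nhds hx8)] with y hy
      exact (hoverlap y hy).symm
  refine hφ.add_coe hcont fun x => ?_
  by_cases hx : ‖φ x‖ < 1 / 4
  · have e : h x = P x - lo x := if_pos hx
    rw [interp, if_pos hx, e, AddCircle.coe_sub, hloe]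
    abel
  · have e : h x = 1 - hi x := if_neg hx
    rw [interp, if_neg hx, e, AddCircle.coe_sub, hhie, hone]
    abel

end Competitor

section CompetitorEstimate

variable {T : Type*} [MetricSpace T] [MeasurableSpace T] [BorelSpace T] [CompactSpace T]
  {μ : Measure T} {q aA AA CP lP : ℝ}

/-- The constant in the gradient bound of the competitor. -/
def compConst (q aA AA CP lP : ℝ) : ℝ := mollConst q aA AA * isoConst q aA AA CP lP * 3

lemma mollConst_nonneg (ha : 0 < aA) (hA : aA ≤ AA) : 0 ≤ mollConst q aA AA := by
  have : 0 ≤ AA := ha.le.trans hA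
  unfold mollConst
  positivity

lemma edist_coe_le (a b : ℝ) :
    edist (a : UnitAddCircle) (b : UnitAddCircle) ≤ ENNReal.ofReal |a - b| := by
  rw [edist_dist, dist_eq_norm, ← AddCircle.coe_sub]
  exact ENNReal.ofReal_le_ofReal (norm_coe_le_abs _)

/-- Replacing a continuous map of degree one near its level set by averages of an indicator
produces a Lipschitz map of degree one with gradient controlled by the measure of the level set. -/
lemma exists_competitor [Nontrivial T] (hA : IsAhlforsRegular μ q aA AA)
    (hP : SupportsPoincare μ CP lP) (hq : 1 ≤ q) {x₀ : T} {α₀ : Path x₀ x₀}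
    {φ : T → UnitAddCircle} (hφ : HasDegree x₀ α₀ φ 1) :
    ∃ ε₀ > 0, ∀ ε > 0, ε < ε₀ → ∃ ψ, DegOneLip x₀ α₀ ψ ∧ (μH[q - 1] (φ ⁻¹' {0}) ≠ ⊤ → ∀ x,
      pLip ψ x ≤ ENNReal.ofReal (compConst q aA AA CP lP * (ε ^ q)⁻¹) *
        μH[q - 1] (closedBall x (max lP 1 * (3 * ε)) ∩ φ ⁻¹' {0})) := by
  classical
  have : IsFiniteMeasure μ := hP.isFiniteMeasure
  have hmC : 0 ≤ mollConst q aA AA := mollConst_nonneg hA.1 hA.2.1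
  have hiC : 0 ≤ isoConst q aA AA CP lP := isoConst_nonneg hA.1 hA.2.1
  obtain ⟨hφc, -⟩ := id hφ
  have hD : 0 < diam (univ : Set T) := diam_univ_pos
  set L := max lP 1 with hL
  have hL1 : 1 ≤ L := le_max_right _ _
  obtain ⟨δ, hδ, hφδ⟩ := Metric.uniformContinuous_iff.1
    (CompactSpace.uniformContinuous_of_continuous hφc) (1 / 16) (by norm_num)
  refine ⟨min δ (diam (univ : Set T)) / (3 * L), by positivity, fun ε hε hε₀ => ?_⟩
  rw [lt_div_iff₀ (by positivity), lt_min_iff] at hε₀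
  have hLε : L * (3 * ε) < δ := by linarith [hε₀.1]
  have hLd : L * (3 * ε) < diam (univ : Set T) := by linarith [hε₀.2]
  have h3L : 3 * ε ≤ L * (3 * ε) := le_mul_of_one_le_left (by positivity) hL1
  have hosc : ∀ x y, dist x y ≤ L * (3 * ε) → ‖φ y - φ x‖ < 1 / 16 := fun x y hxy => by
    rw [← dist_eq_norm]
    exact hφδ (by rw [dist_comm]; linarith)
  have hnorm : ∀ x y, dist x y ≤ L * (3 * ε) → |‖φ y‖ - ‖φ x‖| < 1 / 16 := fun x y hxy =>
    (abs_norm_sub_norm_le _ _).trans_lt (hosc x y hxy)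
  set g : T → ℝ := fun y => circSin (φ y) with hg
  have hgc : Continuous g := continuous_circSin.comp hφc
  set f : T → ℝ := fun y => if 0 < g y then (1 : ℝ) else 0 with hf
  have hfm : Measurable f := Measurable.ite (isOpen_lt continuous_const hgc).measurableSet
    measurable_const measurable_const
  have hf1 : ∀ y, |f y| ≤ 1 := fun y => by
    simp only [hf]
    split_ifs <;> simp
  have hfi : Integrable f μ := Integrable.of_bound hfm.aestronglyMeasurable 1 (ae_of_all _ hf1)
  set P := mollify μ ε f with hPdef
  set κ := mollConst q aA AA * (ε ^ (q + 1))⁻¹ with hκ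
  have hκ0 : 0 ≤ κ := by positivity
  have hPle : ∀ (c : ℝ) (x x' : T), dist x x' < ε →
      |P x - P x'| ≤ dist x x' * (κ * ∫ y in ball x (3 * ε), |f y - c| ∂μ) := fun c x x' hx =>
    abs_mollify_sub_le hA hfi hε (by linarith) hx c
  set K : ℝ≥0 := Real.toNNReal (κ * μ.real univ) with hK
  have hPK : ∀ x x' : T, dist x x' < ε → |P x - P x'| ≤ K * dist x x' := by
    intro x x' hx
    refine (hPle 0 x x' hx).trans ?_
    rw [hK, Real.coe_toNNReal _ (by positivity), mul_comm]
    gcongr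
    calc ∫ y in ball x (3 * ε), |f y - 0| ∂μ ≤ ∫ _ in ball x (3 * ε), (1 : ℝ) ∂μ := by
          simp only [sub_zero]
          exact integral_mono hfi.abs.integrableOn (integrable_const _) hf1
      _ ≤ μ.real univ := by
          rw [setIntegral_const, smul_eq_mul, mul_one]
          exact measureReal_mono (subset_univ _)
  have hPc : Continuous P := by
    refine continuous_iff_continuousAt.2 fun x => Metric.continuousAt_iff.2 fun e he => ?_
    refine ⟨min ε (e / (K + 1)), by positivity, fun {y} hy => ?_⟩
    rw [lt_min_iff] at hy
    rw [Real.dist_eq]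
    refine (hPK y x hy.1).trans_lt ?_
    have := (lt_div_iff₀ (by positivity)).1 hy.2
    nlinarith [dist_nonneg (x := y) (y := x)]
  have htr : IsTransition φ P := by
    intro x t ht
    have hshift : ∀ y, dist x y < 2 * ε → ∃ v : ℝ, |v| < 1 / 16 ∧ φ y = ((t + v : ℝ) :) := by
      intro y hy
      obtain ⟨v, hv, hva⟩ := exists_abs_eq_norm (φ y - φ x)
      refine ⟨v, by rw [hva]; exact hosc x y (by linarith), ?_⟩
      rw [AddCircle.coe_add, hv, ← ht]
      abel
    refine ⟨fun h1 h2 => ?_, fun h1 h2 => ?_⟩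
    · refine mollify_eq_const hA hε (by linarith) fun y hy => ?_
      obtain ⟨v, hv, he⟩ := hshift y hy
      rw [abs_lt] at hv
      refine if_pos ?_
      simp only [hg, he]
      exact circSin_pos (by linarith) (by linarith)
    · refine mollify_eq_const hA hε (by linarith) fun y hy => ?_
      obtain ⟨v, hv, he⟩ := hshift y hy
      rw [abs_lt] at hv
      refine if_neg (not_lt.2 (le_of_lt ?_))
      simp only [hg, he]
      exact circSin_neg (by linarith) (by linarith)
  have hfar : ∀ x y, 3 / 16 ≤ ‖φ x‖ → dist x y < ε →
      interp φ P x = 0 ∧ interp φ P y = 0 := by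
    intro x y hx hxy
    have := abs_lt.1 (hnorm x y (by linarith))
    exact ⟨interp_eq_zero htr (by linarith), interp_eq_zero htr (by linarith)⟩
  have hnear : ∀ x y, ‖φ x‖ < 3 / 16 → dist x y < ε →
      interp φ P x = P x ∧ interp φ P y = P y := by
    intro x y hx hxy
    have := abs_lt.1 (hnorm x y (by linarith))
    exact ⟨if_pos (by linarith), if_pos (by linarith)⟩
  refine ⟨interp φ P, ⟨lipschitz_of_local K hε fun x y hxy => ?_, hasDegree_interp hφ hPc htr⟩,
    fun hfin x => ?_⟩
  · rcases lt_or_ge ‖φ x‖ (3 / 16) with hx | hx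
    · rw [(hnear x y hx hxy).1, (hnear x y hx hxy).2, dist_eq_norm, ← AddCircle.coe_sub]
      exact (norm_coe_le_abs _).trans (hPK x y hxy)
    · rw [(hfar x y hx hxy).1, (hfar x y hx hxy).2, dist_self]
      positivity
  rcases lt_or_ge ‖φ x‖ (3 / 16) with hx | hx
  swap
  · refine (pLip_le_of_local (K := 0) hε fun y hy => ?_).trans zero_le
    rw [dist_comm] at hy
    rw [(hfar x y hx hy).1, (hfar x y hx hy).2, edist_self]
    exact zero_le
  have hQ : closedBall x (L * (3 * ε)) ∩ {y | g y = 0} ⊆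
      closedBall x (L * (3 * ε)) ∩ φ ⁻¹' {0} := by
    rintro y ⟨hy, hy0⟩
    refine ⟨hy, eq_zero_of_circSin_eq_zero ?_ hy0⟩
    rw [mem_closedBall, dist_comm] at hy
    linarith [(abs_lt.1 (hnorm x y hy)).2]
  set h := μH[q - 1] (closedBall x (L * (3 * ε)) ∩ φ ⁻¹' {0}) with hh
  have hQfin : μH[q - 1] (closedBall x (L * (3 * ε)) ∩ {y | g y = 0}) ≠ ⊤ :=
    ne_top_of_le_ne_top hfin (measure_mono (hQ.trans inter_subset_right))
  have hκe : ENNReal.ofReal (compConst q aA AA CP lP * (ε ^ q)⁻¹) =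
      ENNReal.ofReal κ * ENNReal.ofReal (isoConst q aA AA CP lP * (3 * ε)) := by
    rw [← ENNReal.ofReal_mul hκ0, hκ, compConst, Real.rpow_add_one hε.ne']
    congr 1
    have : 0 < ε ^ q := by positivity
    field_simp
  rw [hκe]
  refine ENNReal.le_of_forall_pos_le_add fun e he _ => ?_
  obtain ⟨η, hη, hηe⟩ := ENNReal.exists_nnreal_pos_mul_lt (a := ENNReal.ofReal κ) (b := e)
    ENNReal.ofReal_ne_top (by positivity)
  obtain ⟨c, hc⟩ := exists_isoperimetric hA hP hq hgc x (r := 3 * ε) (by positivity) hLd hQfin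
    (η := η) (by positivity)
  have hFi : Integrable (fun y => |f y - c|) (μ.restrict (ball x (3 * ε))) :=
    (hfi.sub (integrable_const c)).abs.integrableOn
  have hpl : pLip (interp φ P) x ≤
      ENNReal.ofReal κ * ∫⁻ y in ball x (3 * ε), ENNReal.ofReal |f y - c| ∂μ := by
    refine pLip_le_of_local hε fun y hy => ?_
    rw [dist_comm] at hy
    rw [(hnear x y hx hy).1, (hnear x y hx hy).2,
      ← ofReal_integral_eq_lintegral_ofReal hFi (ae_of_all _ fun y => abs_nonneg _),
      ← ENNReal.ofReal_mul hκ0, edist_dist x y, ← ENNReal.ofReal_mul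
        (mul_nonneg hκ0 (integral_nonneg fun y => abs_nonneg _))]
    refine (edist_coe_le _ _).trans (ENNReal.ofReal_le_ofReal ?_)
    rw [mul_comm]
    exact hPle c x y hy
  calc pLip (interp φ P) x ≤ ENNReal.ofReal κ *
        (ENNReal.ofReal (isoConst q aA AA CP lP * (3 * ε)) * h + η) := by
        refine hpl.trans ?_
        gcongr
        refine hc.trans ?_
        gcongr
        exact measure_mono hQ
    _ = ENNReal.ofReal κ * ENNReal.ofReal (isoConst q aA AA CP lP * (3 * ε)) * h +
        η * ENNReal.ofReal κ := by ring
    _ ≤ _ := by gcongr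

lemma exists_degOneLip [Nontrivial T] (hA : IsAhlforsRegular μ q aA AA)
    (hP : SupportsPoincare μ CP lP) (hq : 1 ≤ q)
    (Φ : T ≃ₜ UnitAddCircle × (Metric.closedBall (0 : ℂ) 1 : Set ℂ)) {x₀ : T} {α₀ : Path x₀ x₀}
    (hα : IsGenerator x₀ α₀) : ∃ f, DegOneLip x₀ α₀ f := by
  obtain ⟨φ, hφ⟩ := exists_hasDegree_one Φ hα
  obtain ⟨ε₀, hε₀, h⟩ := exists_competitor hA hP hq hφ
  obtain ⟨ψ, hψ, -⟩ := h (ε₀ / 2) (by positivity) (by linarith)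
  exact ⟨ψ, hψ⟩

end CompetitorEstimate

section BallAverages

variable {T : Type*} [MetricSpace T] [MeasurableSpace T] [BorelSpace T] [CompactSpace T]
  {μ : Measure T} {q aA AA CP lP : ℝ}

/-- The average of `g` over the closed ball of radius `R` centred at `y`. -/
def ballAvg (μ : Measure T) (R : ℝ) (g : T → ℝ≥0∞) (y : T) : ℝ≥0∞ :=
  (∫⁻ x in closedBall y R, g x ∂μ) / μ (closedBall y R)

lemma measurable_closedBall_kernel (R : ℝ) {g : T → ℝ≥0∞} (hg : Measurable g) :
    Measurable (Function.uncurry fun y x : T => (closedBall y R).indicator g x) := by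
  have : SecondCountableTopology T := UniformSpace.secondCountable_of_separable T
  have hs : MeasurableSet {z : T × T | dist z.2 z.1 ≤ R} :=
    (isClosed_le (by fun_prop) continuous_const).measurableSet
  exact (hg.comp measurable_snd).indicator hs

lemma measurable_lintegral_closedBall [SFinite μ] (R : ℝ) {g : T → ℝ≥0∞} (hg : Measurable g) :
    Measurable fun y => ∫⁻ x in closedBall y R, g x ∂μ := by
  simp_rw [← lintegral_indicator (measurableSet_closedBall (ε := R))]
  exact (measurable_closedBall_kernel R hg).lintegral_prod_right'

lemma measurable_ballAvg [SFinite μ] (R : ℝ) {g : T → ℝ≥0∞} (hg : Measurable g) :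
    Measurable (ballAvg μ R g) := by
  refine (measurable_lintegral_closedBall R hg).div ?_
  simpa using measurable_lintegral_closedBall (μ := μ) R (g := fun _ => 1) measurable_const

lemma lintegral_lintegral_closedBall (ν : Measure T) [SFinite μ] [SFinite ν] (R : ℝ)
    {g : T → ℝ≥0∞} (hg : Measurable g) :
    ∫⁻ y, ∫⁻ x in closedBall y R, g x ∂μ ∂ν = ∫⁻ x, g x * ν (closedBall x R) ∂μ := by
  simp_rw [← lintegral_indicator (measurableSet_closedBall (ε := R))]
  rw [lintegral_lintegral_swap (measurable_closedBall_kernel R hg).aemeasurable]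
  refine lintegral_congr fun x => ?_
  rw [← lintegral_indicator_const measurableSet_closedBall]
  refine lintegral_congr fun y => ?_
  simp only [indicator, mem_closedBall, dist_comm]

lemma rpow_lintegral_le {α : Type*} [MeasurableSpace α] (ν : Measure α) {s s' : ℝ}
    (hs : s.HolderConjugate s') {e : α → ℝ≥0∞} (he : Measurable e) :
    (∫⁻ x, e x ∂ν) ^ s ≤ (∫⁻ x, e x ^ s ∂ν) * ν univ ^ (s / s') := by
  have h := ENNReal.lintegral_mul_le_Lp_mul_Lq ν hs he.aemeasurable
    (aemeasurable_const (b := (1 : ℝ≥0∞)))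
  simp only [Pi.mul_apply, mul_one, ENNReal.one_rpow, lintegral_const, one_mul] at h
  refine (ENNReal.rpow_le_rpow h hs.nonneg).trans (le_of_eq ?_)
  rw [ENNReal.mul_rpow_of_nonneg _ _ hs.nonneg, ← ENNReal.rpow_mul, ← ENNReal.rpow_mul,
    one_div_mul_cancel hs.ne_zero, ENNReal.rpow_one, one_div_mul_eq_div]

lemma ballAvg_rpow_le [IsFiniteMeasure μ] (hA : IsAhlforsRegular μ q aA AA) {s s' : ℝ}
    (hs : s.HolderConjugate s') {R : ℝ} (hR : 0 < R) (hRd : R < diam (univ : Set T))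
    {e : T → ℝ≥0∞} (he : Measurable e) (y : T) :
    ballAvg μ R e y ^ s ≤ (∫⁻ x in closedBall y R, e x ^ s ∂μ) * (ENNReal.ofReal (aA * R ^ q))⁻¹ := by
  have h0 := hA.measure_closedBall_ne_zero y hR hRd
  have ht : μ (closedBall y R) ≠ ⊤ := measure_ne_top μ _
  have h := rpow_lintegral_le (μ.restrict (closedBall y R)) hs he
  rw [Measure.restrict_apply_univ] at h
  rw [ballAvg, ENNReal.div_rpow_of_nonneg _ _ hs.nonneg]
  calc _ ≤ (∫⁻ x in closedBall y R, e x ^ s ∂μ) * μ (closedBall y R) ^ (s / s') /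
        μ (closedBall y R) ^ s := by gcongr
    _ = (∫⁻ x in closedBall y R, e x ^ s ∂μ) * (μ (closedBall y R))⁻¹ := by
        rw [mul_div_assoc, ← ENNReal.rpow_sub _ _ h0 ht]
        have : s / s' - s = -1 := by
          rw [hs.div_conj_eq_sub_one]
          ring
        rw [this, ENNReal.rpow_neg_one]
    _ ≤ _ := by
        gcongr
        exact hA.le_measure_closedBall y hR hRd

lemma lintegral_ballAvg_rpow_le [IsFiniteMeasure μ] (hA : IsAhlforsRegular μ q aA AA) {s s' : ℝ}
    (hs : s.HolderConjugate s') {R : ℝ} (hR : 0 < R) (hRd : 2 * R < diam (univ : Set T))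
    {e : T → ℝ≥0∞} (he : Measurable e) :
    ∫⁻ y, ballAvg μ R e y ^ s ∂μ ≤ ENNReal.ofReal (AA * 2 ^ q / aA) * ∫⁻ x, e x ^ s ∂μ := by
  have hpos : 0 < aA * R ^ q := mul_pos hA.1 (Real.rpow_pos_of_pos hR q)
  have hinv : (ENNReal.ofReal (aA * R ^ q))⁻¹ ≠ ⊤ := by simpa using hpos
  calc ∫⁻ y, ballAvg μ R e y ^ s ∂μ
      ≤ ∫⁻ y, (∫⁻ x in closedBall y R, e x ^ s ∂μ) * (ENNReal.ofReal (aA * R ^ q))⁻¹ ∂μ :=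
        lintegral_mono fun y => ballAvg_rpow_le hA hs hR (by linarith) he y
    _ = (∫⁻ x, e x ^ s * μ (closedBall x R) ∂μ) * (ENNReal.ofReal (aA * R ^ q))⁻¹ := by
        rw [lintegral_mul_const' _ _ hinv, lintegral_lintegral_closedBall μ R (he.pow_const s)]
    _ ≤ (∫⁻ x, e x ^ s * ENNReal.ofReal (AA * (2 * R) ^ q) ∂μ) *
          (ENNReal.ofReal (aA * R ^ q))⁻¹ := by
        gcongr with x
        exact hA.measure_closedBall_le x hR hRd
    _ = _ := by
        rw [lintegral_mul_const _ (he.pow_const s), mul_assoc,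
          ← ENNReal.ofReal_inv_of_pos hpos, mul_comm, ← ENNReal.ofReal_mul (by
            have := hA.1.le.trans hA.2.1
            positivity)]
        congr 2
        rw [Real.mul_rpow (by norm_num) hR.le]
        have := hA.1
        have : 0 < R ^ q := Real.rpow_pos_of_pos hR q
        field_simp

lemma ballAvg_le_add [IsFiniteMeasure μ] (hA : IsAhlforsRegular μ q aA AA) {R : ℝ} (hR : 0 < R)
    (hRd : R < diam (univ : Set T)) {g h : T → ℝ} (hg : Measurable g) (hh : Measurable h)
    {η : ℝ≥0} (hη : ∀ x y, dist x y ≤ R → edist (h x) (h y) ≤ η) (y : T) :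
    ballAvg μ R (fun x => ‖g x‖ₑ) y ≤
      ‖g y‖ₑ + ((‖g y - h y‖ₑ + η) + ballAvg μ R (fun x => ‖g x - h x‖ₑ) y) := by
  have h0 := hA.measure_closedBall_ne_zero y hR hRd
  have ht : μ (closedBall y R) ≠ ⊤ := measure_ne_top μ _
  have hm : Measurable fun x => ‖g x - h x‖ₑ := (hg.sub hh).enorm
  have hpt : ∀ x ∈ closedBall y R, ‖g x‖ₑ ≤ (‖g y‖ₑ + (‖g y - h y‖ₑ + η)) + ‖g x - h x‖ₑ := by
    intro x hx
    have e1 : g x = (g x - h x) + ((h x - h y) + (-(g y - h y) + g y)) := by ring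
    calc ‖g x‖ₑ = ‖(g x - h x) + ((h x - h y) + (-(g y - h y) + g y))‖ₑ := by rw [← e1]
      _ ≤ ‖g x - h x‖ₑ + (‖h x - h y‖ₑ + (‖-(g y - h y)‖ₑ + ‖g y‖ₑ)) := by
          refine (enorm_add_le _ _).trans ?_
          gcongr
          refine (enorm_add_le _ _).trans ?_
          gcongr
          exact enorm_add_le _ _
      _ ≤ ‖g x - h x‖ₑ + (η + (‖g y - h y‖ₑ + ‖g y‖ₑ)) := by
          rw [enorm_neg, ← edist_eq_enorm_sub (h x)]
          gcongr
          exact hη x y hx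
      _ = _ := by ring
  calc ballAvg μ R (fun x => ‖g x‖ₑ) y
      ≤ (∫⁻ x in closedBall y R, ((‖g y‖ₑ + (‖g y - h y‖ₑ + η)) + ‖g x - h x‖ₑ) ∂μ) /
          μ (closedBall y R) := by
        unfold ballAvg
        gcongr ?_ / _
        exact setLIntegral_mono' measurableSet_closedBall hpt
    _ = _ := by
        rw [lintegral_add_right _ hm, lintegral_const, Measure.restrict_apply_univ,
          ENNReal.add_div, ENNReal.mul_div_cancel_right h0 ht, ballAvg]
        ring

lemma exists_ballAvg_le [Nontrivial T] [IsFiniteMeasure μ] (hA : IsAhlforsRegular μ q aA AA)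
    {s s' : ℝ} (hs : s.HolderConjugate s') {g : T → ℝ} (hg : Measurable g)
    (hgs : MemLp g (ENNReal.ofReal s) μ) {δ : ℝ≥0∞} (hδ : δ ≠ 0) {R₀ : ℝ} (hR₀ : 0 < R₀) :
    ∃ R, 0 < R ∧ R < R₀ ∧ ∃ e : T → ℝ≥0∞, Measurable e ∧
      (∀ y, ballAvg μ R (fun x => ‖g x‖ₑ) y ≤ ‖g y‖ₑ + e y) ∧ ∫⁻ y, e y ^ s ∂μ ≤ δ := by
  have hs0 := hs.pos
  have hD : 0 < diam (univ : Set T) := diam_univ_pos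
  set K := ENNReal.ofReal (AA * 2 ^ q / aA) ^ (1 / s) with hK
  have hKt : K ≠ ⊤ := ENNReal.rpow_ne_top_of_nonneg (by positivity) ENNReal.ofReal_ne_top
  have hMt : μ univ ^ (1 / s) ≠ ⊤ :=
    ENNReal.rpow_ne_top_of_nonneg (by positivity) (measure_ne_top μ _)
  have hδ' : δ ^ (1 / s) ≠ 0 := by
    simp only [ne_eq, ENNReal.rpow_eq_zero_iff, not_or, not_and_or]
    exact ⟨Or.inl hδ, Or.inr (not_lt.2 (by positivity))⟩
  have hδ2 : δ ^ (1 / s) / 2 ≠ 0 := by simpa using hδ'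
  obtain ⟨ε, hε, hεδ⟩ := ENNReal.exists_nnreal_pos_mul_lt (a := 1 + K) (by finiteness) hδ2
  obtain ⟨η, hη, hηδ⟩ := ENNReal.exists_nnreal_pos_mul_lt hMt hδ2
  obtain ⟨h, hh, -⟩ := hgs.exists_boundedContinuous_eLpNorm_sub_le ENNReal.ofReal_ne_top
    (ε := ε) (by simpa using hε.ne')
  obtain ⟨r, hr, hrh⟩ := Metric.uniformContinuous_iff.1
    (CompactSpace.uniformContinuous_of_continuous h.continuous) η hη
  set R := min (min R₀ r) (diam (univ : Set T) / 2) / 2 with hR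
  have hRpos : 0 < R := by positivity
  have hRR : R < R₀ := by
    have : min (min R₀ r) (diam (univ : Set T) / 2) ≤ R₀ := (min_le_left _ _).trans (min_le_left _ _)
    have : 0 < min (min R₀ r) (diam (univ : Set T) / 2) := by positivity
    linarith
  have hRr : R < r := by
    have : min (min R₀ r) (diam (univ : Set T) / 2) ≤ r := (min_le_left _ _).trans (min_le_right _ _)
    have : 0 < min (min R₀ r) (diam (univ : Set T) / 2) := by positivity
    linarith
  have hRd : 2 * R < diam (univ : Set T) := by
    have : min (min R₀ r) (diam (univ : Set T) / 2) ≤ diam (univ : Set T) / 2 := min_le_right _ _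
    linarith
  have hhm : Measurable h := h.continuous.measurable
  set a : T → ℝ≥0∞ := fun x => ‖g x - h x‖ₑ with ha
  have ham : Measurable a := (hg.sub hhm).enorm
  have hbm := measurable_ballAvg (μ := μ) R ham
  have haN : (∫⁻ x, a x ^ s ∂μ) ^ (1 / s) ≤ ε := by
    rw [eLpNorm_eq_lintegral_rpow_enorm_toReal (by simpa using hs0) ENNReal.ofReal_ne_top,
      ENNReal.toReal_ofReal hs0.le] at hh
    exact hh
  have hηe : ∀ x y, dist x y ≤ R → edist (h x) (h y) ≤ η := fun x y hxy => by
    rw [edist_dist, ← ENNReal.ofReal_coe_nnreal]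
    exact ENNReal.ofReal_le_ofReal (hrh (hxy.trans_lt hRr)).le
  refine ⟨R, hRpos, hRR, fun y => (a y + η) + ballAvg μ R a y, (ham.add_const _).add hbm,
    ballAvg_le_add hA hRpos (by linarith) hg hhm hηe, ?_⟩
  have hs1 : 1 ≤ s := hs.lt.le
  have hfin : (∫⁻ y, ((a y + η) + ballAvg μ R a y) ^ s ∂μ) ^ (1 / s) ≤ δ ^ (1 / s) := by
    calc _ ≤ (∫⁻ y, (a y + η) ^ s ∂μ) ^ (1 / s) + (∫⁻ y, ballAvg μ R a y ^ s ∂μ) ^ (1 / s) :=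
          ENNReal.lintegral_Lp_add_le (ham.add_const _).aemeasurable hbm.aemeasurable hs1
      _ ≤ ((∫⁻ y, a y ^ s ∂μ) ^ (1 / s) + (∫⁻ _, (η : ℝ≥0∞) ^ s ∂μ) ^ (1 / s)) +
          (ENNReal.ofReal (AA * 2 ^ q / aA) * ∫⁻ y, a y ^ s ∂μ) ^ (1 / s) := by
          gcongr
          · exact ENNReal.lintegral_Lp_add_le ham.aemeasurable aemeasurable_const hs1
          · exact lintegral_ballAvg_rpow_le hA hs hRpos hRd ham
      _ = (∫⁻ y, a y ^ s ∂μ) ^ (1 / s) * (1 + K) + η * μ univ ^ (1 / s) := by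
          rw [lintegral_const, ENNReal.mul_rpow_of_nonneg _ _ (by positivity : 0 ≤ 1 / s),
            ENNReal.mul_rpow_of_nonneg _ _ (by positivity : 0 ≤ 1 / s), ← ENNReal.rpow_mul,
            mul_one_div_cancel hs0.ne', ENNReal.rpow_one]
          ring
      _ ≤ δ ^ (1 / s) / 2 + δ ^ (1 / s) / 2 := by
          gcongr
          exact (mul_le_mul_left haN _).trans hεδ.le
      _ = δ ^ (1 / s) := ENNReal.add_halves _
  exact (ENNReal.rpow_le_rpow_iff (by positivity)).1 hfin

lemma exists_majorant [Nontrivial T] [IsFiniteMeasure μ] (hA : IsAhlforsRegular μ q aA AA)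
    {s s' : ℝ} (hs : s.HolderConjugate s') {g : T → ℝ} (hg : Measurable g)
    (hgs : MemLp g (ENNReal.ofReal s) μ) (hg0 : ∫⁻ x, ‖g x‖ₑ ^ s ∂μ ≠ 0) :
    ∃ G : T → ℝ≥0∞, Measurable G ∧
      (∀ R₀ > 0, ∃ R, 0 < R ∧ R < R₀ ∧ ∀ y, ballAvg μ R (fun x => ‖g x‖ₑ) y ≤ G y) ∧
      (∫⁻ x, G x ^ s ∂μ) ^ (1 / s) ≤ 2 * (∫⁻ x, ‖g x‖ₑ ^ s ∂μ) ^ (1 / s) := by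
  have hs0 := hs.pos
  obtain ⟨δ, hδ, hδs⟩ := ENNReal.exists_pos_sum_of_countable' hg0 ℕ
  choose R hR hRR e hem hle hes using fun k : ℕ => exists_ballAvg_le hA hs hg hgs (hδ k).ne'
    (R₀ := 1 / ((k : ℝ) + 1)) (by positivity)
  have hEm : Measurable fun y => ⨆ k, e k y := Measurable.iSup hem
  have hE : ∫⁻ y, (⨆ k, e k y) ^ s ∂μ ≤ ∫⁻ x, ‖g x‖ₑ ^ s ∂μ := by
    calc ∫⁻ y, (⨆ k, e k y) ^ s ∂μ ≤ ∫⁻ y, ∑' k, e k y ^ s ∂μ := by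
          refine lintegral_mono fun y => ?_
          rw [← ENNReal.le_rpow_inv_iff hs0]
          refine iSup_le fun k => ?_
          rw [ENNReal.le_rpow_inv_iff hs0]
          exact ENNReal.le_tsum (f := fun k => e k y ^ s) k
      _ = ∑' k, ∫⁻ y, e k y ^ s ∂μ :=
          lintegral_tsum fun k => ((hem k).pow_const s).aemeasurable
      _ ≤ ∑' k, δ k := ENNReal.tsum_le_tsum hes
      _ ≤ _ := hδs.le
  refine ⟨fun y => ‖g y‖ₑ + ⨆ k, e k y, hg.enorm.add hEm, fun R₀ hR₀ => ?_, ?_⟩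
  · obtain ⟨k, hk⟩ := exists_nat_one_div_lt hR₀
    exact ⟨R k, hR k, (hRR k).trans hk, fun y => (hle k y).trans
      (add_le_add le_rfl (le_iSup (fun k => e k y) k))⟩
  · refine (ENNReal.lintegral_Lp_add_le hg.enorm.aemeasurable hEm.aemeasurable hs.lt.le).trans ?_
    rw [two_mul]
    gcongr

end BallAverages

section Duality

variable {T : Type*} [MetricSpace T] [MeasurableSpace T] [BorelSpace T] [CompactSpace T]
  {μ : Measure T} {q aA AA CP lP : ℝ} {x₀ : T} {α₀ : Path x₀ x₀}

lemma DegOneLip.pLip_toReal [IsFiniteMeasure μ] {f : T → UnitAddCircle} (hf : DegOneLip x₀ α₀ f)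
    {p : ℝ} (hp : 0 < p) :
    (∀ x, pLip f x ≠ ⊤) ∧ Measurable (fun x => (pLip f x).toReal) ∧
      MemLp (fun x => (pLip f x).toReal) (ENNReal.ofReal p) μ ∧
      Integrable (fun x => (pLip f x).toReal ^ p) μ ∧
      ∫⁻ x, pLip f x ^ p ∂μ = ENNReal.ofReal (∫ x, (pLip f x).toReal ^ p ∂μ) := by
  obtain ⟨⟨L, hL⟩, -⟩ := hf
  have hle := pLip_le_of_lipschitz hL
  have htop : ∀ x, pLip f x ≠ ⊤ := fun x => ne_top_of_le_ne_top ENNReal.coe_ne_top (hle x)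
  have hm : Measurable fun x => (pLip f x).toReal := (measurable_pLip hL.continuous).ennreal_toReal
  have hL' : ∀ x, (pLip f x).toReal ≤ L := fun x => ENNReal.toReal_mono ENNReal.coe_ne_top (hle x)
  have hInt : Integrable (fun x => (pLip f x).toReal ^ p) μ := by
    refine Integrable.of_bound (hm.pow_const p).aestronglyMeasurable (L ^ p) (ae_of_all _ fun x => ?_)
    rw [Real.norm_of_nonneg (by positivity)]
    exact Real.rpow_le_rpow ENNReal.toReal_nonneg (hL' x) hp.le
  refine ⟨htop, hm, MemLp.of_bound hm.aestronglyMeasurable L (ae_of_all _ fun x => ?_), hInt, ?_⟩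
  · rw [Real.norm_of_nonneg ENNReal.toReal_nonneg]
    exact hL' x
  · rw [ofReal_integral_eq_lintegral_ofReal hInt (ae_of_all _ fun x => by positivity)]
    refine lintegral_congr fun x => ?_
    rw [← ENNReal.ofReal_rpow_of_nonneg ENNReal.toReal_nonneg hp.le, ENNReal.ofReal_toReal (htop x)]

lemma exists_extremal [IsFiniteMeasure μ]
    (Φ : T ≃ₜ UnitAddCircle × (Metric.closedBall (0 : ℂ) 1 : Set ℂ)) (hα : IsGenerator x₀ α₀)
    (hne : ∃ f, DegOneLip x₀ α₀ f) {p p' : ℝ} (hp : p.HolderConjugate p') :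
    capLip μ p x₀ α₀ ≠ ⊤ ∧ ∃ g : T → ℝ, Measurable g ∧ MemLp g (ENNReal.ofReal p') μ ∧
      ∫⁻ x, ‖g x‖ₑ ^ p' ∂μ = capLip μ p x₀ α₀ ∧
      ∀ f, DegOneLip x₀ α₀ f → capLip μ p x₀ α₀ ≤ ∫⁻ x, ‖g x‖ₑ * pLip f x ∂μ := by
  have hp0 := hp.pos
  have hp'0 := hp.symm.pos
  obtain ⟨u, hum, hu0, hui, hlt, hle, hmin⟩ := exists_minimizer (μ := μ) hp.lt
    (F := {v | ∃ f, DegOneLip x₀ α₀ f ∧ v = fun x => (pLip f x).toReal})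
    (by obtain ⟨f, hf⟩ := hne; exact ⟨_, f, hf, rfl⟩)
    (by rintro _ ⟨f, hf, rfl⟩ x; exact ENNReal.toReal_nonneg)
    (by rintro _ ⟨f, hf, rfl⟩; exact (hf.pLip_toReal hp0).2.2.1)
    (by
      rintro _ ⟨f, hf, rfl⟩ _ ⟨g, hg, rfl⟩ t ht
      obtain ⟨k, hk, hkle⟩ := exists_degOneLip_convex Φ hα hf hg ht.1 ht.2
      refine ⟨_, ⟨k, hk, rfl⟩, fun x => ?_⟩
      have hfx := (hf.pLip_toReal (μ := μ) hp0).1 x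
      have hgx := (hg.pLip_toReal (μ := μ) hp0).1 x
      have h := ENNReal.toReal_mono (by finiteness) (hkle x)
      rwa [ENNReal.toReal_add (by finiteness) (by finiteness), ENNReal.toReal_mul,
        ENNReal.toReal_mul, ENNReal.toReal_ofReal (by linarith [ht.2]),
        ENNReal.toReal_ofReal ht.1] at h)
  have hM0 : 0 ≤ ∫ x, u x ^ p ∂μ := integral_nonneg fun x => Real.rpow_nonneg (hu0 x) p
  have hcap : capLip μ p x₀ α₀ = ENNReal.ofReal (∫ x, u x ^ p ∂μ) := by
    refine le_antisymm ?_ (le_iInf₂ fun f hf => ?_)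
    · refine ENNReal.le_of_forall_pos_le_add fun ε hε _ => ?_
      obtain ⟨_, ⟨f, hf, rfl⟩, h⟩ := hlt ε hε
      refine (iInf₂_le f hf).trans ?_
      rw [(hf.pLip_toReal hp0).2.2.2.2, ← ENNReal.ofReal_coe_nnreal,
        ← ENNReal.ofReal_add hM0 ε.coe_nonneg]
      exact ENNReal.ofReal_le_ofReal h.le
    · rw [(hf.pLip_toReal hp0).2.2.2.2]
      exact ENNReal.ofReal_le_ofReal (hle _ ⟨f, hf, rfl⟩)
  have hgm : Measurable fun x => u x ^ (p - 1) := hum.pow_const _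
  have hge : ∀ x, ‖u x ^ (p - 1)‖ₑ = ENNReal.ofReal (u x ^ (p - 1)) := fun x =>
    Real.enorm_of_nonneg (Real.rpow_nonneg (hu0 x) _)
  have hpw : ∀ x, ‖u x ^ (p - 1)‖ₑ ^ p' = ENNReal.ofReal (u x ^ p) := fun x => by
    rw [hge, ENNReal.ofReal_rpow_of_nonneg (Real.rpow_nonneg (hu0 x) _) hp'0.le,
      ← Real.rpow_mul (hu0 x), hp.sub_one_mul_conj]
  have hInt : ∫⁻ x, ‖u x ^ (p - 1)‖ₑ ^ p' ∂μ = ENNReal.ofReal (∫ x, u x ^ p ∂μ) := by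
    rw [ofReal_integral_eq_lintegral_ofReal hui (ae_of_all _ fun x => Real.rpow_nonneg (hu0 x) p)]
    exact lintegral_congr hpw
  refine ⟨by rw [hcap]; exact ENNReal.ofReal_ne_top, fun x => u x ^ (p - 1), hgm,
    ⟨hgm.aestronglyMeasurable, ?_⟩, hInt.trans hcap.symm, fun f hf => ?_⟩
  · rw [eLpNorm_lt_top_iff_lintegral_rpow_enorm_lt_top (by simpa using hp'0) ENNReal.ofReal_ne_top,
      ENNReal.toReal_ofReal hp'0.le, hInt]
    exact ENNReal.ofReal_lt_top
  · obtain ⟨htop, hfm, -, hfi, -⟩ := hf.pLip_toReal (μ := μ) hp0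
    obtain ⟨hi, hile⟩ := le_integral_of_minimizer hp hum hu0 hui hfm
      (fun x => ENNReal.toReal_nonneg) hfi (hmin _ ⟨f, hf, rfl⟩)
    rw [hcap]
    refine (ENNReal.ofReal_le_ofReal hile).trans (le_of_eq ?_)
    rw [ofReal_integral_eq_lintegral_ofReal hi (ae_of_all _ fun x =>
      mul_nonneg (Real.rpow_nonneg (hu0 x) _) ENNReal.toReal_nonneg)]
    refine lintegral_congr fun x => ?_
    rw [hge, ENNReal.ofReal_mul (Real.rpow_nonneg (hu0 x) _), ENNReal.ofReal_toReal (htop x)]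

/-- The constant in the upper bound for the surface modulus. -/
def dualConst (q aA AA CP lP : ℝ) : ℝ :=
  compConst q aA AA CP lP * AA * (6 * max lP 1) ^ q

lemma le_lintegral_majorant [Nontrivial T] (hA : IsAhlforsRegular μ q aA AA)
    (hP : SupportsPoincare μ CP lP) (hq : 1 ≤ q) {m : ℝ≥0∞} {g G : T → ℝ≥0∞} (hg : Measurable g)
    (hm : ∀ f, DegOneLip x₀ α₀ f → m ≤ ∫⁻ x, g x * pLip f x ∂μ)
    (hG : ∀ R₀ > 0, ∃ R, 0 < R ∧ R < R₀ ∧ ∀ y, ballAvg μ R g y ≤ G y)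
    {S : Set T} (hS : S ∈ SurfacesH (T := T) q x₀ α₀) :
    m ≤ ENNReal.ofReal (dualConst q aA AA CP lP) * ∫⁻ x in S, G x ∂μH[q - 1] := by
  have : IsFiniteMeasure μ := hP.isFiniteMeasure
  obtain ⟨φ, hφ, rfl, hfin⟩ := hS
  have : IsFiniteMeasure ((μH[q - 1] : Measure T).restrict (φ ⁻¹' {0})) := ⟨by simpa using hfin⟩
  have hD : 0 < diam (univ : Set T) := diam_univ_pos
  obtain ⟨ε₀, hε₀, hψ⟩ := exists_competitor hA hP hq hφ
  set L := max lP 1 with hL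
  have hL1 : 1 ≤ L := le_max_right _ _
  obtain ⟨R, hR, hRlt, hRG⟩ := hG (min (3 * L * ε₀) (diam (univ : Set T) / 2)) (by positivity)
  rw [lt_min_iff] at hRlt
  set ε := R / (3 * L) with hε
  have hεR : L * (3 * ε) = R := by
    rw [hε]
    field_simp
  obtain ⟨ψ, hψd, hψle⟩ := hψ ε (by positivity) (by
    rw [hε, div_lt_iff₀ (by positivity)]
    linarith [hRlt.1])
  rw [hεR] at hψle
  set ν := (μH[q - 1] : Measure T).restrict (φ ⁻¹' {0}) with hν
  set c := compConst q aA AA CP lP * (ε ^ q)⁻¹ with hc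
  have hc0 : 0 ≤ c := by
    have := mollConst_nonneg (q := q) hA.1 hA.2.1
    have := isoConst_nonneg (q := q) (CP := CP) (lP := lP) hA.1 hA.2.1
    unfold c compConst
    positivity
  have hcD : c * (AA * (2 * R) ^ q) = dualConst q aA AA CP lP := by
    have h6 : 2 * R = 6 * L * ε := by rw [← hεR]; ring
    have : 0 < ε ^ q := by positivity
    rw [h6, Real.mul_rpow (by positivity) (by positivity), hc, dualConst, ← hL]
    field_simp
  calc m ≤ ∫⁻ x, g x * pLip ψ x ∂μ := hm ψ hψd
    _ ≤ ∫⁻ x, ENNReal.ofReal c * (g x * ν (closedBall x R)) ∂μ := by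
        refine lintegral_mono fun x => ?_
        rw [mul_left_comm]
        gcongr
        rw [hν, Measure.restrict_apply measurableSet_closedBall]
        exact hψle hfin.ne x
    _ = ENNReal.ofReal c * ∫⁻ y, ∫⁻ x in closedBall y R, g x ∂μ ∂ν := by
        rw [lintegral_const_mul' _ _ ENNReal.ofReal_ne_top, lintegral_lintegral_closedBall ν R hg]
    _ ≤ ENNReal.ofReal c * ∫⁻ y, ENNReal.ofReal (AA * (2 * R) ^ q) * G y ∂ν := by
        gcongr with y
        calc ∫⁻ x in closedBall y R, g x ∂μ = μ (closedBall y R) * ballAvg μ R g y :=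
              (ENNReal.mul_div_cancel (hA.measure_closedBall_ne_zero y hR (by linarith [hRlt.2]))
                (measure_ne_top μ _)).symm
          _ ≤ _ := by
              gcongr
              · exact hA.measure_closedBall_le y hR (by linarith [hRlt.2])
              · exact hRG y
    _ = _ := by
        rw [lintegral_const_mul' _ _ ENNReal.ofReal_ne_top, ← mul_assoc, ← ENNReal.ofReal_mul hc0,
          hcD]

lemma capLip_mul_surfModH_le [Nontrivial T] (hA : IsAhlforsRegular μ q aA AA)
    (hP : SupportsPoincare μ CP lP) (hq : 1 ≤ q)
    (Φ : T ≃ₜ UnitAddCircle × (Metric.closedBall (0 : ℂ) 1 : Set ℂ)) (hα : IsGenerator x₀ α₀)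
    {p p' : ℝ} (hp : p.HolderConjugate p') (h0 : capLip μ p x₀ α₀ ≠ 0) :
    capLip μ p x₀ α₀ ^ (1 / p) * surfModH μ q p' x₀ α₀ ^ (1 / p') ≤
      2 * ENNReal.ofReal (dualConst q aA AA CP lP) := by
  have : IsFiniteMeasure μ := hP.isFiniteMeasure
  have hp'0 := hp.symm.pos
  obtain ⟨htop, g, hgm, hgL, hgi, hgf⟩ := exists_extremal (μ := μ) Φ hα
    (exists_degOneLip hA hP hq Φ hα) hp
  set m := capLip μ p x₀ α₀ with hm
  set D := ENNReal.ofReal (dualConst q aA AA CP lP) with hD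
  obtain ⟨G, hGm, hG, hGi⟩ := exists_majorant hA hp.symm hgm hgL (by rwa [hgi])
  rw [hgi] at hGi
  have hadm : surfModH μ q p' x₀ α₀ ≤ ∫⁻ x, (D / m * G x) ^ p' ∂μ := by
    refine iInf₂_le (fun x => D / m * G x) ⟨hGm.const_mul _, fun S hS => ?_⟩
    have h := le_lintegral_majorant hA hP hq hgm.enorm hgf hG hS
    rw [lintegral_const_mul _ hGm, ← ENNReal.mul_div_right_comm, ENNReal.le_div_iff_mul_le (Or.inl h0)
      (Or.inl htop), one_mul]
    exact h
  have hsum : 1 / p + 1 / p' = 1 := by simpa using hp.inv_add_inv_eq_one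
  calc m ^ (1 / p) * surfModH μ q p' x₀ α₀ ^ (1 / p')
      ≤ m ^ (1 / p) * (D / m * (2 * m ^ (1 / p'))) := by
        gcongr
        refine (ENNReal.rpow_le_rpow hadm (by positivity)).trans ?_
        simp_rw [ENNReal.mul_rpow_of_nonneg _ _ hp'0.le]
        rw [lintegral_const_mul _ (hGm.pow_const p'),
          ENNReal.mul_rpow_of_nonneg _ _ (by positivity : 0 ≤ 1 / p'), ← ENNReal.rpow_mul,
          mul_one_div_cancel hp'0.ne', ENNReal.rpow_one]
        gcongr
    _ = 2 * (D / m * (m ^ (1 / p) * m ^ (1 / p'))) := by ring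
    _ = 2 * D := by
        rw [← ENNReal.rpow_add _ _ h0 htop, hsum, ENNReal.rpow_one, ENNReal.div_mul_cancel h0 htop]

lemma one_le_mul_capLip_mul_surfModH [Nontrivial T] (hA : IsAhlforsRegular μ q aA AA)
    (hP : SupportsPoincare μ CP lP) (hq : 1 ≤ q)
    (Φ : T ≃ₜ UnitAddCircle × (Metric.closedBall (0 : ℂ) 1 : Set ℂ)) (hα : IsGenerator x₀ α₀)
    {p p' : ℝ} (hp : p.HolderConjugate p') (hmod : surfModH μ q p' x₀ α₀ ≠ ⊤) :
    1 ≤ ENNReal.ofReal (10 ^ q / aA) *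
      (capLip μ p x₀ α₀ ^ (1 / p) * surfModH μ q p' x₀ α₀ ^ (1 / p')) := by
  have : IsFiniteMeasure μ := hP.isFiniteMeasure
  have hp0 := hp.pos
  have hp'0 := hp.symm.pos
  have hcap : capLip μ p x₀ α₀ ≠ ⊤ :=
    (exists_extremal (μ := μ) Φ hα (exists_degOneLip hA hP hq Φ hα) hp).1
  have key : ∀ ε : ℝ≥0, 0 < ε → 1 ≤ ENNReal.ofReal (10 ^ q / aA) *
      ((capLip μ p x₀ α₀ + ε) ^ (1 / p) * (surfModH μ q p' x₀ α₀ + ε) ^ (1 / p')) := by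
    intro ε hε
    have hε' : (ε : ℝ≥0∞) ≠ 0 := by simpa using hε.ne'
    have h1 := ENNReal.lt_add_right hcap hε'
    have h2 := ENNReal.lt_add_right hmod hε'
    conv at h1 => lhs; unfold capLip
    conv at h2 => lhs; unfold surfModH
    simp only [iInf_lt_iff] at h1 h2
    obtain ⟨f, hf, hf1⟩ := h1
    obtain ⟨ρ, ⟨hρ, hadm⟩, hρ1⟩ := h2
    refine (one_le_capLip_mul_surfModH hA hq hp hf hρ hadm hρ1.ne_top).trans ?_
    gcongr
  have hlim : Tendsto (fun ε : ℝ≥0 => ENNReal.ofReal (10 ^ q / aA) *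
      ((capLip μ p x₀ α₀ + ε) ^ (1 / p) * (surfModH μ q p' x₀ α₀ + ε) ^ (1 / p')))
      (𝓝[>] 0) (𝓝 (ENNReal.ofReal (10 ^ q / aA) *
        (capLip μ p x₀ α₀ ^ (1 / p) * surfModH μ q p' x₀ α₀ ^ (1 / p')))) := by
    have hadd : ∀ a : ℝ≥0∞, ∀ r : ℝ, Tendsto (fun ε : ℝ≥0 => (a + ε) ^ r) (𝓝[>] 0) (𝓝 (a ^ r)) := by
      intro a r
      refine (ENNReal.continuous_rpow_const.tendsto a).comp ?_
      have h : Tendsto (fun ε : ℝ≥0 => a + (ε : ℝ≥0∞)) (𝓝 0) (𝓝 (a + ((0 : ℝ≥0) : ℝ≥0∞))) :=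
        (continuous_const.add ENNReal.continuous_coe).tendsto 0
      rw [ENNReal.coe_zero, add_zero] at h
      exact h.mono_left nhdsWithin_le_nhds
    refine ENNReal.Tendsto.const_mul (ENNReal.Tendsto.mul (hadd _ _) (Or.inr ?_) (hadd _ _)
      (Or.inr ?_)) (Or.inr ENNReal.ofReal_ne_top)
    · exact ENNReal.rpow_ne_top_of_nonneg (by positivity) hmod
    · exact ENNReal.rpow_ne_top_of_nonneg (by positivity) hcap
  refine ge_of_tendsto hlim ?_
  filter_upwards [self_mem_nhdsWithin] with ε hε using key ε hε

lemma nontrivial_of_torus (Φ : T ≃ₜ UnitAddCircle × (Metric.closedBall (0 : ℂ) 1 : Set ℂ)) :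
    Nontrivial T := by
  have h : ((1 / 2 : ℝ) : UnitAddCircle) ≠ 0 := by
    intro h
    obtain ⟨n, hn⟩ := (AddCircle.coe_eq_zero_iff _).1 h
    have h2 : ((2 * n : ℤ) : ℝ) = (1 : ℤ) := by
      push_cast
      simp only [zsmul_eq_mul, mul_one] at hn
      linarith
    have := Int.cast_injective h2
    omega
  have z : (Metric.closedBall (0 : ℂ) 1 : Set ℂ) := ⟨0, by simp⟩
  exact ⟨Φ.symm (((1 / 2 : ℝ) : UnitAddCircle), z), Φ.symm (0, z), fun e =>
    h (congrArg Prod.fst (Φ.symm.injective e))⟩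

end Duality

end Duality

open Duality in
/-- **Theorem 1.1.** Duality of the degree 1 capacity and the surface modulus in compact
Ahlfors `q`-regular spaces supporting a weak `1`-Poincaré inequality which are
homeomorphic to the solid torus `S¹ × 𝔻`. -/
theorem statement0 (q aA AA CP lP : ℝ) :
    ∃ C : ℝ≥0∞, 0 < C ∧ C < ⊤ ∧
      ∀ (T : Type) [MetricSpace T] [MeasurableSpace T] [BorelSpace T] [CompactSpace T]
        (μ : Measure T),
        IsAhlforsRegular μ q aA AA →
        SupportsPoincare μ CP lP →
        Nonempty (T ≃ₜ UnitAddCircle × (Metric.closedBall (0 : ℂ) 1 : Set ℂ)) →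
        ∀ (x₀ : T) (α₀ : Path x₀ x₀), IsGenerator x₀ α₀ →
          ∀ p : ℝ, 1 < p →
            (capLip μ p x₀ α₀ ≠ 0 →
              C⁻¹ ≤ capLip μ p x₀ α₀ ^ (1 / p) *
                  surfModH μ q (p / (p - 1)) x₀ α₀ ^ (1 / (p / (p - 1))) ∧
                capLip μ p x₀ α₀ ^ (1 / p) *
                  surfModH μ q (p / (p - 1)) x₀ α₀ ^ (1 / (p / (p - 1))) ≤ C) ∧
            (capLip μ p x₀ α₀ = 0 ↔ surfModH μ q (p / (p - 1)) x₀ α₀ = ⊤) := by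
  refine ⟨2 * ENNReal.ofReal (dualConst q aA AA CP lP) + ENNReal.ofReal (10 ^ q / aA) + 1,
    by positivity, by finiteness, ?_⟩
  intro T _ _ _ _ μ hA hP ⟨Φ⟩ x₀ α₀ hα p hp
  have := nontrivial_of_torus Φ
  have := pathConnectedSpace_of_torus Φ
  have : IsFiniteMeasure μ := hP.isFiniteMeasure
  have hq : 1 ≤ q := hA.one_le
  have hpp : p.HolderConjugate (p / (p - 1)) := Real.HolderConjugate.conjExponent hp
  have hpp0 := hpp.symm.pos
  set X := capLip μ p x₀ α₀ ^ (1 / p) *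
    surfModH μ q (p / (p - 1)) x₀ α₀ ^ (1 / (p / (p - 1))) with hX
  set C := 2 * ENNReal.ofReal (dualConst q aA AA CP lP) + ENNReal.ofReal (10 ^ q / aA) + 1 with hC
  have hC0 : C ≠ 0 := (zero_lt_one.trans_le le_add_self).ne'
  have hCt : C ≠ ⊤ := by finiteness
  have hup : capLip μ p x₀ α₀ ≠ 0 → X ≤ C := fun h0 =>
    (capLip_mul_surfModH_le hA hP hq Φ hα hpp h0).trans
      (le_add_right (le_add_right le_rfl))
  have hlow : surfModH μ q (p / (p - 1)) x₀ α₀ ≠ ⊤ → 1 ≤ C * X := fun h =>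
    (one_le_mul_capLip_mul_surfModH hA hP hq Φ hα hpp h).trans
      (mul_le_mul_left (le_add_right le_add_self) X)
  have hcap0 : capLip μ p x₀ α₀ ≠ 0 → capLip μ p x₀ α₀ ^ (1 / p) ≠ 0 := fun h0 h => by
    rw [ENNReal.rpow_eq_zero_iff_of_pos (by have := hpp.pos; positivity)] at h
    exact h0 h
  have hfin : capLip μ p x₀ α₀ ≠ 0 → surfModH μ q (p / (p - 1)) x₀ α₀ ≠ ⊤ := fun h0 h => by
    have h1 := hup h0
    rw [hX, h, ENNReal.top_rpow_of_pos (by positivity), ENNReal.mul_top (hcap0 h0)] at h1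
    exact hCt (top_le_iff.1 h1)
  refine ⟨fun h0 => ⟨?_, hup h0⟩, fun h0 => ?_, fun h => ?_⟩
  · rw [← mul_one C⁻¹, ENNReal.inv_mul_le_iff hC0 hCt]
    exact hlow (hfin h0)
  · by_contra hne
    have h1 := hlow hne
    rw [hX, h0, ENNReal.zero_rpow_of_pos (by have := hpp.pos; positivity), zero_mul, mul_zero] at h1
    exact not_le_of_gt zero_lt_one h1
  · by_contra h0
    exact hfin h0 h
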